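/- There exist real numbers r, s with 0 < s < r < 1 and a compact packing P of the Euclidean plane by disks of radii 1, r, s using all three radii, such that P is saturated, yet there exists a (non-compact) packing by disks with radii in {1, r, s} whose density is strictly greater than the density of every compact packing by disks with radii in {1, r, s}; hence the maximum density is not always reached by a triangulated packing even when a saturated triangulated packing exists. -/

import Mathlib

open Metric Set

noncomputable section

/-- The Euclidean plane. -/
abbrev Plane : Type := EuclideanSpace ℝ (Fin 2)

/-- A closed disk in the plane, given by its center and (positive) radius. -/
structure Disk where
  center : Plane
  radius : ℝ
  radius_pos : 0 < radius

/-- The set of points of a disk (a closed ball). -/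
def Disk.set (d : Disk) : Set Plane := closedBall d.center d.radius

/-- A packing: a family of closed disks with pairwise disjoint interiors. -/
def IsPacking (P : Set Disk) : Prop :=
  ∀ d ∈ P, ∀ d' ∈ P, d ≠ d' → Disjoint (interior d.set) (interior d'.set)

/-- Two disks are (externally) tangent: they intersect in exactly one point. -/
def Disk.Tangent (d d' : Disk) : Prop :=
  dist d.center d'.center = d.radius + d'.radius

/-- The union of the disks of a packing. -/
def packingUnion (P : Set Disk) : Set Plane := ⋃ d ∈ P, d.set

/-- A packing is compact (triangulated) if every connected component of the
complement of the union of the disks is bounded and its closure meets exactly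
three of the disks, these three disks being pairwise tangent. -/
def IsCompactPacking (P : Set Disk) : Prop :=
  IsPacking P ∧
  ∀ x ∈ (packingUnion P)ᶜ,
    Bornology.IsBounded (connectedComponentIn (packingUnion P)ᶜ x) ∧
    ∃ d₁ d₂ d₃ : Disk, d₁ ∈ P ∧ d₂ ∈ P ∧ d₃ ∈ P ∧
      d₁ ≠ d₂ ∧ d₁ ≠ d₃ ∧ d₂ ≠ d₃ ∧
      d₁.Tangent d₂ ∧ d₁.Tangent d₃ ∧ d₂.Tangent d₃ ∧
      {d ∈ P | (closure (connectedComponentIn (packingUnion P)ᶜ x) ∩ d.set).Nonempty}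
        = {d₁, d₂, d₃}

/-- A packing uses the radius `r` if one of its disks has radius `r`. -/
def UsesRadius (P : Set Disk) (r : ℝ) : Prop := ∃ d ∈ P, d.radius = r

/-- All radii of the disks of `P` belong to `S`. -/
def RadiiIn (P : Set Disk) (S : Set ℝ) : Prop := ∀ d ∈ P, d.radius ∈ S

/-- The square `[-r, r]²`. -/
def square (r : ℝ) : Set Plane := {x | |x 0| ≤ r ∧ |x 1| ≤ r}

/-- The density of a packing: the limsup, as `r → ∞`, of the proportion of the
square `[-r, r]²` covered by the disks. -/
def density (P : Set Disk) : ℝ :=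
  Filter.limsup
    (fun r : ℝ => (MeasureTheory.volume (packingUnion P ∩ square r)).toReal / (4 * r ^ 2))
    Filter.atTop

end

/-- A packing with radii in `S` is saturated if no closed disk of radius in `S` can be
added with interior disjoint from all disks of the packing. -/
def Saturated (P : Set Disk) (S : Set ℝ) : Prop :=
  ¬ ∃ d : Disk, d.radius ∈ S ∧ ∀ d' ∈ P, Disjoint (interior d.set) (Disk.set d')

open Metric Set

/-! ### Planar geometry of a triangle of mutually tangent disks -/

/-- Twice the signed area of the triangle `A B X`. -/
def cr3 (A B X : Plane) : ℝ := (B 0 - A 0) * (X 1 - A 1) - (B 1 - A 1) * (X 0 - A 0)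

theorem dist_sq_eq (x y : Plane) : dist x y ^ 2 = (x 0 - y 0) ^ 2 + (x 1 - y 1) ^ 2 := by
  rw [EuclideanSpace.dist_eq, Real.sq_sqrt (Finset.sum_nonneg fun i _ => sq_nonneg _)]
  simp [Fin.sum_univ_two, Real.dist_eq, sq_abs]

theorem dist_le_iff (x y : Plane) {a : ℝ} (ha : 0 ≤ a) :
    dist x y ≤ a ↔ (x 0 - y 0) ^ 2 + (x 1 - y 1) ^ 2 ≤ a ^ 2 := by
  rw [← dist_sq_eq, sq_le_sq₀ dist_nonneg ha]

theorem le_dist_iff (x y : Plane) {a : ℝ} (ha : 0 ≤ a) :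
    a ≤ dist x y ↔ a ^ 2 ≤ (x 0 - y 0) ^ 2 + (x 1 - y 1) ^ 2 := by
  rw [← dist_sq_eq, sq_le_sq₀ ha dist_nonneg]

theorem mem_disk_iff (d : Disk) (x : Plane) :
    x ∈ d.set ↔ (x 0 - d.center 0) ^ 2 + (x 1 - d.center 1) ^ 2 ≤ d.radius ^ 2 := by
  rw [Disk.set, mem_closedBall, dist_le_iff _ _ d.radius_pos.le]

theorem notMem_disk_iff (d : Disk) (x : Plane) :
    x ∉ d.set ↔ d.radius ^ 2 < (x 0 - d.center 0) ^ 2 + (x 1 - d.center 1) ^ 2 := by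
  rw [mem_disk_iff, not_le]

/-- A positively oriented triangle of mutually tangent disks. -/
structure Tri (d₁ d₂ d₃ : Disk) : Prop where
  t12 : d₁.Tangent d₂
  t23 : d₂.Tangent d₃
  t31 : d₃.Tangent d₁
  pos : 0 < cr3 d₁.center d₂.center d₃.center

theorem Tri.rot {d₁ d₂ d₃ : Disk} (h : Tri d₁ d₂ d₃) : Tri d₂ d₃ d₁ :=
  ⟨h.t23, h.t31, h.t12, by have := h.pos; unfold cr3 at *; linarith⟩

/-- The closed triangle of the centers. -/
def tri (d₁ d₂ d₃ : Disk) : Set Plane :=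
  {x | 0 ≤ cr3 d₁.center d₂.center x ∧ 0 ≤ cr3 d₂.center d₃.center x ∧
    0 ≤ cr3 d₃.center d₁.center x}

theorem tri_rot (d₁ d₂ d₃ : Disk) : tri d₂ d₃ d₁ = tri d₁ d₂ d₃ := by
  ext x; simp only [tri, mem_ofPred_eq]; tauto

/-- The curvilinear triangle. -/
def hole (d₁ d₂ d₃ : Disk) : Set Plane :=
  {x | x ∈ tri d₁ d₂ d₃ ∧ x ∉ d₁.set ∧ x ∉ d₂.set ∧ x ∉ d₃.set}

theorem hole_rot (d₁ d₂ d₃ : Disk) : hole d₂ d₃ d₁ = hole d₁ d₂ d₃ := by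
  ext x; simp only [hole, mem_ofPred_eq, tri_rot]; tauto

/-- The incenter. -/
noncomputable def inc (d₁ d₂ d₃ : Disk) : Plane :=
  !₂[((d₂.radius + d₃.radius) * d₁.center 0 + (d₁.radius + d₃.radius) * d₂.center 0
      + (d₁.radius + d₂.radius) * d₃.center 0) / (2 * (d₁.radius + d₂.radius + d₃.radius)),
    ((d₂.radius + d₃.radius) * d₁.center 1 + (d₁.radius + d₃.radius) * d₂.center 1
      + (d₁.radius + d₂.radius) * d₃.center 1) / (2 * (d₁.radius + d₂.radius + d₃.radius))]

theorem inc_rot (d₁ d₂ d₃ : Disk) : inc d₂ d₃ d₁ = inc d₁ d₂ d₃ := by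
  ext i; fin_cases i <;> simp [inc] <;> ring

/-- The inradius. -/
noncomputable def inr (d₁ d₂ d₃ : Disk) : ℝ :=
  cr3 d₁.center d₂.center d₃.center / (2 * (d₁.radius + d₂.radius + d₃.radius))

theorem inr_rot (d₁ d₂ d₃ : Disk) : inr d₂ d₃ d₁ = inr d₁ d₂ d₃ := by
  simp only [inr, cr3]; ring

theorem Tri.inr_pos {d₁ d₂ d₃ : Disk} (h : Tri d₁ d₂ d₃) : 0 < inr d₁ d₂ d₃ := by
  have := d₁.radius_pos; have := d₂.radius_pos; have := d₃.radius_pos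
  exact div_pos h.pos (by positivity)

theorem tangent_sq {d d' : Disk} (h : d.Tangent d') :
    (d.center 0 - d'.center 0) ^ 2 + (d.center 1 - d'.center 1) ^ 2
      = (d.radius + d'.radius) ^ 2 := by
  rw [← dist_sq_eq]; rw [Disk.Tangent] at h; rw [h]

/-- Real-number form of the frame computation. -/
theorem frame_aux (a b c p0 p1 q0 q1 ρ : ℝ) (ha : 0 < a) (hb : 0 < b) (hc : 0 < c)
    (hp : p0 ^ 2 + p1 ^ 2 = (a + b) ^ 2) (hq : q0 ^ 2 + q1 ^ 2 = (a + c) ^ 2)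
    (hpq : (p0 - q0) ^ 2 + (p1 - q1) ^ 2 = (b + c) ^ 2)
    (hρ : p0 * q1 - p1 * q0 = 2 * (a + b + c) * ρ)
    (w0 w1 : ℝ) (hw0 : 2 * (a + b + c) * w0 = (a + c) * p0 + (a + b) * q0)
    (hw1 : 2 * (a + b + c) * w1 = (a + c) * p1 + (a + b) * q1) :
    ρ ^ 2 * (a + b + c) = a * b * c ∧ w0 ^ 2 + w1 ^ 2 = a ^ 2 + ρ ^ 2 ∧
    p0 * w0 + p1 * w1 = a * (a + b) ∧ w0 * p1 - w1 * p0 = -(a + b) * ρ ∧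
    q0 * w0 + q1 * w1 = a * (a + c) ∧ w0 * q1 - w1 * q0 = (a + c) * ρ := by
  have hS : 0 < a + b + c := by positivity
  have hdot : p0 * q0 + p1 * q1 = a ^ 2 + a * b + a * c - b * c := by nlinarith
  have h1 : ρ ^ 2 * (a + b + c) = a * b * c := by
    have : (p0 * q1 - p1 * q0) ^ 2 + (p0 * q0 + p1 * q1) ^ 2
        = (p0 ^ 2 + p1 ^ 2) * (q0 ^ 2 + q1 ^ 2) := by ring
    rw [hρ, hdot, hp, hq] at this
    have h4 : 4 * (a + b + c) * (ρ ^ 2 * (a + b + c)) = 4 * (a + b + c) * (a * b * c) := by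
      linear_combination this
    exact mul_left_cancel₀ (by positivity) h4
  have hpw : p0 * w0 + p1 * w1 = a * (a + b) := by
    apply mul_left_cancel₀ (show 2 * (a + b + c) ≠ 0 by positivity)
    linear_combination p0 * hw0 + p1 * hw1 + (a + c) * hp + (a + b) * hdot
  have hqw : q0 * w0 + q1 * w1 = a * (a + c) := by
    apply mul_left_cancel₀ (show 2 * (a + b + c) ≠ 0 by positivity)
    linear_combination q0 * hw0 + q1 * hw1 + (a + b) * hq + (a + c) * hdot
  have hcp : w0 * p1 - w1 * p0 = -(a + b) * ρ := by
    apply mul_left_cancel₀ (show 2 * (a + b + c) ≠ 0 by positivity)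
    linear_combination p1 * hw0 - p0 * hw1 - (a + b) * hρ
  have hcq : w0 * q1 - w1 * q0 = (a + c) * ρ := by
    apply mul_left_cancel₀ (show 2 * (a + b + c) ≠ 0 by positivity)
    linear_combination q1 * hw0 - q0 * hw1 + (a + c) * hρ
  refine ⟨h1, ?_, hpw, hcp, hqw, hcq⟩
  have hab : (a + b) ^ 2 ≠ 0 := by positivity
  apply mul_left_cancel₀ hab
  have : (w0 ^ 2 + w1 ^ 2) * (p0 ^ 2 + p1 ^ 2)
    = (p0 * w0 + p1 * w1) ^ 2 + (w0 * p1 - w1 * p0) ^ 2 := by ring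
  rw [hp, hpw, hcp] at this
  linear_combination this

section
variable {d₁ d₂ d₃ : Disk}

theorem Tri.frame (h : Tri d₁ d₂ d₃) :
    let a := d₁.radius; let b := d₂.radius; let c := d₃.radius; let ρ := inr d₁ d₂ d₃
    let p0 := d₂.center 0 - d₁.center 0; let p1 := d₂.center 1 - d₁.center 1
    let q0 := d₃.center 0 - d₁.center 0; let q1 := d₃.center 1 - d₁.center 1
    let w0 := inc d₁ d₂ d₃ 0 - d₁.center 0; let w1 := inc d₁ d₂ d₃ 1 - d₁.center 1
    ρ ^ 2 * (a + b + c) = a * b * c ∧ w0 ^ 2 + w1 ^ 2 = a ^ 2 + ρ ^ 2 ∧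
    p0 * w0 + p1 * w1 = a * (a + b) ∧ w0 * p1 - w1 * p0 = -(a + b) * ρ ∧
    q0 * w0 + q1 * w1 = a * (a + c) ∧ w0 * q1 - w1 * q0 = (a + c) * ρ := by
  intro a b c ρ p0 p1 q0 q1 w0 w1
  have ha : 0 < a := d₁.radius_pos
  have hb : 0 < b := d₂.radius_pos
  have hc : 0 < c := d₃.radius_pos
  have h12 := tangent_sq h.t12
  have h23 := tangent_sq h.t23
  have h31 := tangent_sq h.t31
  apply frame_aux a b c p0 p1 q0 q1 ρ ha hb hc
  · linear_combination h12
  · linear_combination h31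
  · linear_combination h23
  · simp only [ρ, inr, cr3]; simp only [p0, p1, q0, q1, a, b, c] at *; field_simp; 
  · simp only [w0, inc]; simp [p0, q0, a, b, c] at *; field_simp; ring
  · simp only [w1, inc]; simp [p1, q1, a, b, c] at *; field_simp; ring

/-- The cone at the first vertex in the frame of the bisector. -/
theorem Tri.cone (h : Tri d₁ d₂ d₃) (x : Plane) :
    let a := d₁.radius; let b := d₂.radius; let c := d₃.radius; let ρ := inr d₁ d₂ d₃
    let w0 := inc d₁ d₂ d₃ 0 - d₁.center 0; let w1 := inc d₁ d₂ d₃ 1 - d₁.center 1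
    let v0 := x 0 - d₁.center 0; let v1 := x 1 - d₁.center 1
    let X := v0 * w0 + v1 * w1; let Y := w0 * v1 - w1 * v0
    cr3 d₁.center d₂.center x * (a ^ 2 + ρ ^ 2) = (a + b) * (a * Y + ρ * X) ∧
    cr3 d₃.center d₁.center x * (a ^ 2 + ρ ^ 2) = (a + c) * (ρ * X - a * Y) := by
  intro a b c ρ w0 w1 v0 v1 X Y
  obtain ⟨-, hw, hp, hp', hq, hq'⟩ := h.frame
  simp only [cr3, X, Y, v0, v1, w0, w1, a, b, c, ρ] at *
  constructor
  · rw [← hw]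
    linear_combination ((x 1 - d₁.center 1) * (inc d₁ d₂ d₃ 0 - d₁.center 0) - (x 0 - d₁.center 0) * (inc d₁ d₂ d₃ 1 - d₁.center 1)) * hp - ((x 0 - d₁.center 0) * (inc d₁ d₂ d₃ 0 - d₁.center 0) + (x 1 - d₁.center 1) * (inc d₁ d₂ d₃ 1 - d₁.center 1)) * hp'
  · rw [← hw]
    linear_combination -((x 1 - d₁.center 1) * (inc d₁ d₂ d₃ 0 - d₁.center 0) - (x 0 - d₁.center 0) * (inc d₁ d₂ d₃ 1 - d₁.center 1)) * hq + ((x 0 - d₁.center 0) * (inc d₁ d₂ d₃ 0 - d₁.center 0) + (x 1 - d₁.center 1) * (inc d₁ d₂ d₃ 1 - d₁.center 1)) * hq'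

theorem Tri.cone_iff (h : Tri d₁ d₂ d₃) (x : Plane) :
    let a := d₁.radius; let ρ := inr d₁ d₂ d₃
    let w0 := inc d₁ d₂ d₃ 0 - d₁.center 0; let w1 := inc d₁ d₂ d₃ 1 - d₁.center 1
    let v0 := x 0 - d₁.center 0; let v1 := x 1 - d₁.center 1
    let X := v0 * w0 + v1 * w1; let Y := w0 * v1 - w1 * v0
    (0 ≤ cr3 d₁.center d₂.center x ∧ 0 ≤ cr3 d₃.center d₁.center x) ↔ |a * Y| ≤ ρ * X := by
  intro a ρ w0 w1 v0 v1 X Y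
  obtain ⟨h1, h2⟩ := h.cone x
  have ha : 0 < d₁.radius := d₁.radius_pos
  have hb : 0 < d₂.radius := d₂.radius_pos
  have hc : 0 < d₃.radius := d₃.radius_pos
  have hW : 0 < a ^ 2 + ρ ^ 2 := by positivity
  rw [← mul_nonneg_iff_of_pos_right hW, h1, mul_nonneg_iff_of_pos_left (by positivity),
    ← mul_nonneg_iff_of_pos_right (b := cr3 d₃.center d₁.center x) hW, h2,
    mul_nonneg_iff_of_pos_left (by positivity), abs_le]
  simp only [a, ρ, X, Y, v0, v1, w0, w1]
  constructor
  · rintro ⟨h3, h4⟩; constructor <;> linarith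
  · rintro ⟨h3, h4⟩; constructor <;> linarith

theorem Tri.inc_notMem (h : Tri d₁ d₂ d₃) : inc d₁ d₂ d₃ ∉ d₁.set := by
  obtain ⟨-, hw, -⟩ := h.frame
  rw [notMem_disk_iff, hw]
  have := h.inr_pos
  have : 0 < inr d₁ d₂ d₃ ^ 2 := by positivity
  linarith

theorem Tri.inc_cr_nonneg (h : Tri d₁ d₂ d₃) : 0 ≤ cr3 d₁.center d₂.center (inc d₁ d₂ d₃) := by
  refine ((h.cone_iff (inc d₁ d₂ d₃)).2 ?_).1
  have := h.inr_pos
  dsimp only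
  have e : ∀ u v : ℝ, u * v - v * u = 0 := fun u v => by ring
  rw [e, mul_zero, abs_zero]
  exact mul_nonneg this.le (add_nonneg (mul_self_nonneg _) (mul_self_nonneg _))

theorem Tri.inc_mem_hole (h : Tri d₁ d₂ d₃) : inc d₁ d₂ d₃ ∈ hole d₁ d₂ d₃ := by
  refine ⟨⟨h.inc_cr_nonneg, ?_, ?_⟩, h.inc_notMem, ?_, ?_⟩
  · rw [← inc_rot]; exact h.rot.inc_cr_nonneg
  · rw [← inc_rot, ← inc_rot]; exact h.rot.rot.inc_cr_nonneg
  · rw [← inc_rot]; exact h.rot.inc_notMem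
  · rw [← inc_rot, ← inc_rot]; exact h.rot.rot.inc_notMem

/-- Real-number core of star-shapedness. -/
theorem star_core (a ρ w0 w1 v0 v1 l A B : ℝ) (hl0 : 0 ≤ l) (hl1 : l ≤ 1) (hρ : 0 < ρ) (ha : 0 < a)
    (hc : |a * (w0 * v1 - w1 * v0)| ≤ ρ * (v0 * w0 + v1 * w1))
    (hw : w0 ^ 2 + w1 ^ 2 = a ^ 2 + ρ ^ 2)
    (hA : A = (a ^ 2 + ρ ^ 2) - (v0 * w0 + v1 * w1))
    (hB : B = (v0 - w0) ^ 2 + (v1 - w1) ^ 2)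
    (hx1 : a ^ 2 < a ^ 2 + ρ ^ 2 - 2 * A + B) :
    a ^ 2 < a ^ 2 + ρ ^ 2 - 2 * l * A + l ^ 2 * B := by
  have hB0 : 0 ≤ B := by rw [hB]; positivity
  have hρ2 : 0 < ρ ^ 2 := by positivity
  by_cases c1 : A ≤ 0
  · nlinarith [mul_nonneg hl0 (neg_nonneg.2 c1), mul_nonneg (sq_nonneg l) hB0]
  push Not at c1
  by_cases c2 : A ^ 2 < ρ ^ 2 * B
  · have hBp : 0 < B := by
      by_contra hcon
      have : B = 0 := le_antisymm (not_lt.1 hcon) hB0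
      rw [this] at c2; nlinarith
    have : 0 < B * (ρ ^ 2 - 2 * l * A + l ^ 2 * B) := by nlinarith [sq_nonneg (l * B - A)]
    have := (pos_iff_pos_of_mul_pos this).1 hBp
    linarith
  push Not at c2
  have hBA : B ≤ A := by
    obtain ⟨X, hX⟩ : ∃ X, X = v0 * w0 + v1 * w1 := ⟨_, rfl⟩
    obtain ⟨Y, hY⟩ : ∃ Y, Y = w0 * v1 - w1 * v0 := ⟨_, rfl⟩
    rw [← hX, ← hY] at hc
    rw [← hX] at hA
    have hW : 0 < a ^ 2 + ρ ^ 2 := by positivity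
    have hBW : B * (a ^ 2 + ρ ^ 2) = A ^ 2 + Y ^ 2 := by
      rw [hB, hA, hX, hY, ← hw]; ring
    have hY2 : (ρ * Y) ^ 2 ≤ (a * A) ^ 2 := by
      have : A ^ 2 * (a ^ 2 + ρ ^ 2) ≥ ρ ^ 2 * (A ^ 2 + Y ^ 2) := by
        rw [← hBW]
        have := mul_le_mul_of_nonneg_right c2 hW.le
        linarith
      linarith
    have h1 : |ρ * Y| ≤ a * A := abs_le_of_sq_le_sq hY2 (by positivity)
    have h2 : |a * Y| * |ρ * Y| ≤ (ρ * X) * (a * A) :=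
      mul_le_mul hc h1 (abs_nonneg _) (le_trans (abs_nonneg _) hc)
    have h3 : |a * Y| * |ρ * Y| = a * ρ * Y ^ 2 := by
      rw [← abs_mul, abs_of_nonneg] <;> [ring; skip]
      have : a * Y * (ρ * Y) = a * ρ * Y ^ 2 := by ring
      rw [this]; positivity
    have h4 : Y ^ 2 ≤ X * A := by
      have : (a * ρ) * Y ^ 2 ≤ (a * ρ) * (X * A) := by linarith
      exact le_of_mul_le_mul_left this (by positivity)
    have : B * (a ^ 2 + ρ ^ 2) ≤ A * (a ^ 2 + ρ ^ 2) := by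
      rw [hBW]
      have e : X = (a ^ 2 + ρ ^ 2) - A := by linarith
      rw [e] at h4
      linarith
    exact le_of_mul_le_mul_right this hW
  nlinarith [mul_nonneg (sub_nonneg.2 hl1) hl0, mul_nonneg (sub_nonneg.2 hl1) (sub_nonneg.2 hBA),
    mul_nonneg (mul_nonneg (sub_nonneg.2 hl1) (sub_nonneg.2 hl1)) hB0]

/-- The key one-disk star-shapedness. -/
theorem Tri.star_aux (h : Tri d₁ d₂ d₃) {x : Plane} (hx : x ∈ tri d₁ d₂ d₃) (hx1 : x ∉ d₁.set)
    {l : ℝ} (hl0 : 0 ≤ l) (hl1 : l ≤ 1) :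
    (1 - l) • inc d₁ d₂ d₃ + l • x ∉ d₁.set := by
  have hc := (h.cone_iff x).1 ⟨hx.1, hx.2.2⟩
  obtain ⟨-, hw, -⟩ := h.frame
  have hρ := h.inr_pos
  have ha : 0 < d₁.radius := d₁.radius_pos
  rw [notMem_disk_iff] at *
  simp only [PiLp.add_apply, PiLp.smul_apply, smul_eq_mul] at *
  generalize inr d₁ d₂ d₃ = ρ at *
  generalize d₁.radius = a at *
  obtain ⟨w0, hw0⟩ : ∃ w0, w0 = inc d₁ d₂ d₃ 0 - d₁.center 0 := ⟨_, rfl⟩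
  obtain ⟨w1, hw1⟩ : ∃ w1, w1 = inc d₁ d₂ d₃ 1 - d₁.center 1 := ⟨_, rfl⟩
  obtain ⟨v0, hv0⟩ : ∃ v0, v0 = x 0 - d₁.center 0 := ⟨_, rfl⟩
  obtain ⟨v1, hv1⟩ : ∃ v1, v1 = x 1 - d₁.center 1 := ⟨_, rfl⟩
  rw [← hw0, ← hw1, ← hv0, ← hv1] at hc
  rw [← hw0, ← hw1] at hw
  rw [← hv0, ← hv1] at hx1
  have e0 : (1 - l) * inc d₁ d₂ d₃ 0 + l * x 0 - d₁.center 0 = w0 + l * (v0 - w0) := by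
    rw [hw0, hv0]; ring
  have e1 : (1 - l) * inc d₁ d₂ d₃ 1 + l * x 1 - d₁.center 1 = w1 + l * (v1 - w1) := by
    rw [hw1, hv1]; ring
  rw [e0, e1]
  -- `A = -u·X`, `B = |X|²`
  obtain ⟨A, hA⟩ : ∃ A, A = (a ^ 2 + ρ ^ 2) - (v0 * w0 + v1 * w1) := ⟨_, rfl⟩
  obtain ⟨B, hB⟩ : ∃ B, B = (v0 - w0) ^ 2 + (v1 - w1) ^ 2 := ⟨_, rfl⟩
  have hexp : (w0 + l * (v0 - w0)) ^ 2 + (w1 + l * (v1 - w1)) ^ 2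
      = a ^ 2 + ρ ^ 2 - 2 * l * A + l ^ 2 * B := by
    rw [hA, hB]; linear_combination (1 - 2 * l) * hw
  have hexp1 : v0 ^ 2 + v1 ^ 2 = a ^ 2 + ρ ^ 2 - 2 * A + B := by
    rw [hA, hB]; linear_combination -hw
  rw [hexp]
  rw [hexp1] at hx1
  exact star_core a ρ w0 w1 v0 v1 l A B hl0 hl1 hρ ha hc hw hA hB hx1

theorem tri_convex (d₁ d₂ d₃ : Disk) : Convex ℝ (tri d₁ d₂ d₃) := by
  intro x hx y hy s t hs ht hst
  simp only [tri, mem_ofPred_eq, cr3, PiLp.add_apply, PiLp.smul_apply, smul_eq_mul] at *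
  obtain ⟨x1, x2, x3⟩ := hx
  obtain ⟨y1, y2, y3⟩ := hy
  have : t = 1 - s := by linarith
  subst this
  refine ⟨?_, ?_, ?_⟩
  · have := add_nonneg (mul_nonneg hs x1) (mul_nonneg ht y1); linarith
  · have := add_nonneg (mul_nonneg hs x2) (mul_nonneg ht y2); linarith
  · have := add_nonneg (mul_nonneg hs x3) (mul_nonneg ht y3); linarith

theorem Tri.hole_starConvex (h : Tri d₁ d₂ d₃) :
    StarConvex ℝ (inc d₁ d₂ d₃) (hole d₁ d₂ d₃) := by
  intro x hx s l hs hl hsl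
  have hs' : s = 1 - l := by linarith
  subst hs'
  have hl1 : l ≤ 1 := by linarith
  obtain ⟨hT, h1, h2, h3⟩ := hx
  refine ⟨tri_convex _ _ _ h.inc_mem_hole.1 hT hs hl hsl, h.star_aux hT h1 hl hl1, ?_, ?_⟩
  · rw [← inc_rot]
    exact h.rot.star_aux (by rwa [tri_rot]) h2 hl hl1
  · rw [← inc_rot, ← inc_rot]
    exact h.rot.rot.star_aux (by rwa [tri_rot, tri_rot]) h3 hl hl1

theorem Tri.hole_preconnected (h : Tri d₁ d₂ d₃) : IsPreconnected (hole d₁ d₂ d₃) :=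
  (h.hole_starConvex.isPathConnected h.inc_mem_hole).isConnected.isPreconnected
end

open Metric Set

section
variable {d₁ d₂ d₃ : Disk}

/-- Barycentric form of the distance to the first center. -/
theorem Tri.bary (h : Tri d₁ d₂ d₃) (x : Plane) :
    let a := d₁.radius; let b := d₂.radius; let c := d₃.radius
    let p := cr3 d₃.center d₁.center x; let q := cr3 d₁.center d₂.center x
    let Δ := cr3 d₁.center d₂.center d₃.center
    Δ ^ 2 * ((x 0 - d₁.center 0) ^ 2 + (x 1 - d₁.center 1) ^ 2)
      = ((p + q) * a) ^ 2 + 2 * a * (p + q) * (p * b + q * c) + (p * b - q * c) ^ 2 := by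
  intro a b c p q Δ
  have h12 := tangent_sq h.t12
  have h23 := tangent_sq h.t23
  have h31 := tangent_sq h.t31
  have e0 : Δ * (x 0 - d₁.center 0) = p * (d₂.center 0 - d₁.center 0)
      + q * (d₃.center 0 - d₁.center 0) := by simp only [Δ, p, q, cr3]; ring
  have e1 : Δ * (x 1 - d₁.center 1) = p * (d₂.center 1 - d₁.center 1)
      + q * (d₃.center 1 - d₁.center 1) := by simp only [Δ, p, q, cr3]; ring
  have : Δ ^ 2 * ((x 0 - d₁.center 0) ^ 2 + (x 1 - d₁.center 1) ^ 2)
      = (Δ * (x 0 - d₁.center 0)) ^ 2 + (Δ * (x 1 - d₁.center 1)) ^ 2 := by ring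
  rw [this, e0, e1]
  simp only [a, b, c]
  linear_combination (p ^ 2 + p * q) * h12 + (q ^ 2 + p * q) * h31 - p * q * h23

theorem cr3_sum (A B C X : Plane) : cr3 A B X + cr3 B C X + cr3 C A X = cr3 A B C := by
  simp only [cr3]; ring

/-- L3: a point of the first disk in the cone at the first center lies in the triangle. -/
theorem Tri.cone_disk (h : Tri d₁ d₂ d₃) {x : Plane} (hx : x ∈ d₁.set)
    (hq : 0 ≤ cr3 d₁.center d₂.center x) (hp : 0 ≤ cr3 d₃.center d₁.center x) :
    0 < cr3 d₂.center d₃.center x := by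
  have hb := h.bary x
  have hs := cr3_sum d₁.center d₂.center d₃.center x
  have hΔ := h.pos
  rw [mem_disk_iff] at hx
  have ha := d₁.radius_pos
  have hb' := d₂.radius_pos
  have hc' := d₃.radius_pos
  dsimp only at hb
  generalize cr3 d₁.center d₂.center x = q at *
  generalize cr3 d₃.center d₁.center x = p at *
  generalize cr3 d₂.center d₃.center x = r at *
  generalize cr3 d₁.center d₂.center d₃.center = Δ at *
  generalize (x 0 - d₁.center 0) ^ 2 + (x 1 - d₁.center 1) ^ 2 = N at *
  by_contra hr
  push Not at hr
  have h1 : Δ ≤ p + q := by linarith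
  have h2 : Δ ^ 2 * N ≤ Δ ^ 2 * d₁.radius ^ 2 := by gcongr
  have h3 : Δ ^ 2 * d₁.radius ^ 2 ≤ ((p + q) * d₁.radius) ^ 2 := by
    rw [← mul_pow]; gcongr
  have h4 : 0 < p + q := by linarith
  have h5 : 0 < p * d₂.radius + q * d₃.radius := by
    rcases hp.lt_or_eq with h | h
    · have := mul_pos h hb'; have := mul_nonneg hq hc'.le; linarith
    · have : 0 < q := by linarith
      have := mul_pos this hc'; have := mul_nonneg hp hb'.le; linarith
  have h6 : 0 < 2 * d₁.radius * (p + q) * (p * d₂.radius + q * d₃.radius) := by positivity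
  nlinarith [sq_nonneg (p * d₂.radius - q * d₃.radius)]

/-- The triangle is within distance 2 of its first vertex when radii are at most one. -/
theorem Tri.tri_subset_ball (h : Tri d₁ d₂ d₃) (h1 : d₁.radius ≤ 1) (h2 : d₂.radius ≤ 1)
    (h3 : d₃.radius ≤ 1) : tri d₁ d₂ d₃ ⊆ closedBall d₁.center 2 := by
  intro x hx
  obtain ⟨hq, hr, hp⟩ := hx
  rw [mem_closedBall, dist_le_iff _ _ (by norm_num)]
  have hb := h.bary x
  have hs := cr3_sum d₁.center d₂.center d₃.center x
  have hΔ := h.pos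
  have ha := d₁.radius_pos
  have hb' := d₂.radius_pos
  have hc' := d₃.radius_pos
  dsimp only at hb
  generalize cr3 d₁.center d₂.center x = q at *
  generalize cr3 d₃.center d₁.center x = p at *
  generalize cr3 d₂.center d₃.center x = r at *
  generalize cr3 d₁.center d₂.center d₃.center = Δ at *
  generalize (x 0 - d₁.center 0) ^ 2 + (x 1 - d₁.center 1) ^ 2 = N at *
  have e1 : ((p + q) * d₁.radius) ^ 2 + 2 * d₁.radius * (p + q) * (p * d₂.radius + q * d₃.radius)
      + (p * d₂.radius - q * d₃.radius) ^ 2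
      ≤ (p * (d₁.radius + d₂.radius) + q * (d₁.radius + d₃.radius)) ^ 2 := by
    have : 0 ≤ (p * d₂.radius) * (q * d₃.radius) := by positivity
    linarith
  have e2 : p * (d₁.radius + d₂.radius) + q * (d₁.radius + d₃.radius) ≤ Δ * 2 := by
    have := mul_le_mul_of_nonneg_left (show d₁.radius + d₂.radius ≤ 2 by linarith) hp
    have := mul_le_mul_of_nonneg_left (show d₁.radius + d₃.radius ≤ 2 by linarith) hq
    linarith
  have e3 : Δ ^ 2 * N ≤ Δ ^ 2 * 2 ^ 2 := by
    rw [hb]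
    refine e1.trans ?_
    rw [← mul_pow]
    gcongr
  exact le_of_mul_le_mul_left e3 (by positivity)

/-- The point `z + ε (z - o)`. -/
noncomputable def out (o z : Plane) (ε : ℝ) : Plane := z + ε • (z - o)

theorem out_continuous (o z : Plane) : Continuous (out o z) := by unfold out; fun_prop

theorem cr3_continuous (A B : Plane) : Continuous (cr3 A B) := by unfold cr3; fun_prop

theorem cr3_out (A B z : Plane) (ε : ℝ) : cr3 A B (out A z ε) = (1 + ε) * cr3 A B z := by
  simp [cr3, out]; ring

theorem disk_isClosed (d : Disk) : IsClosed d.set := isClosed_closedBall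

theorem out_notMem (d : Disk) {z : Plane} (hz : dist z d.center = d.radius) {ε : ℝ} (hε : 0 < ε) :
    out d.center z ε ∉ d.set := by
  rw [notMem_disk_iff]
  have h := dist_sq_eq z d.center
  rw [hz] at h
  have e : (out d.center z ε 0 - d.center 0) ^ 2 + (out d.center z ε 1 - d.center 1) ^ 2
      = (1 + ε) ^ 2 * d.radius ^ 2 := by
    rw [h]; simp [out]; ring
  rw [e]
  have := d.radius_pos
  have : 0 < d.radius ^ 2 := by positivity
  have h1 : 0 < ε * d.radius ^ 2 := by positivity
  have h2 : 0 < ε ^ 2 * d.radius ^ 2 := by positivity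
  linarith

/-- Two disks at distance at least the sum of radii meet only on the line of centers. -/
theorem inter_line {d d' : Disk} (h : d.radius + d'.radius ≤ dist d.center d'.center)
    {z : Plane} (hz : z ∈ d.set) (hz' : z ∈ d'.set) :
    cr3 d.center d'.center z = 0 ∧ dist z d.center = d.radius := by
  have ha := d.radius_pos
  have hb := d'.radius_pos
  have t := dist_triangle_left d.center d'.center z
  rw [Disk.set, mem_closedBall] at hz hz'
  have h1 : dist z d.center = d.radius := by linarith
  have h2 : dist z d'.center = d'.radius := by linarith
  have h3 : dist d.center d'.center = d.radius + d'.radius := by linarith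
  refine ⟨?_, h1⟩
  have e1 := dist_sq_eq z d.center
  have e2 := dist_sq_eq z d'.center
  have e3 := dist_sq_eq d.center d'.center
  rw [h1] at e1; rw [h2] at e2; rw [h3] at e3
  have : cr3 d.center d'.center z ^ 2 = 0 := by
    have key : cr3 d.center d'.center z ^ 2 =
      ((z 0 - d.center 0) ^ 2 + (z 1 - d.center 1) ^ 2) * ((d.center 0 - d'.center 0) ^ 2 + (d.center 1 - d'.center 1) ^ 2) - (((z 0 - d.center 0) ^ 2 + (z 1 - d.center 1) ^ 2 + (d.center 0 - d'.center 0) ^ 2 + (d.center 1 - d'.center 1) ^ 2 - ((z 0 - d'.center 0) ^ 2 + (z 1 - d'.center 1) ^ 2)) / 2) ^ 2 := by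
      simp only [cr3]; ring
    rw [key]
    have : (z 0 - d.center 0) ^ 2 + (z 1 - d.center 1) ^ 2 + (d.center 0 - d'.center 0) ^ 2 + (d.center 1 - d'.center 1) ^ 2 - ((z 0 - d'.center 0) ^ 2 + (z 1 - d'.center 1) ^ 2) = d.radius ^ 2 + (d.radius + d'.radius) ^ 2 - d'.radius ^ 2 := by linarith
    rw [this, ← e1, ← e3]; ring
  exact pow_eq_zero_iff (two_ne_zero) |>.1 this

/-- L4. -/
theorem Tri.out_mem_hole (h : Tri d₁ d₂ d₃) {z : Plane} (hz : dist z d₁.center = d₁.radius)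
    (hq : 0 < cr3 d₁.center d₂.center z) (hp : 0 < cr3 d₃.center d₁.center z) :
    ∀ᶠ ε in nhdsWithin (0 : ℝ) (Ioi 0), out d₁.center z ε ∈ hole d₁ d₂ d₃ := by
  have hzm : z ∈ d₁.set := by rw [Disk.set, mem_closedBall, hz]
  have hr := h.cone_disk hzm hq.le hp.le
  have h2 : z ∉ d₂.set := fun hc => hq.ne' (inter_line h.t12.ge hzm hc).1
  have h3 : z ∉ d₃.set := by
    intro hc
    have := (inter_line h.t31.ge hc hzm).1
    exact hp.ne' this
  have o0 : out d₁.center z 0 = z := by simp [out]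
  have ho := (out_continuous d₁.center z).continuousAt (x := 0)
  have c1 : ∀ᶠ ε in nhds (0 : ℝ), out d₁.center z ε ∈ {x | 0 < cr3 d₁.center d₂.center x} :=
    ho.eventually_mem ((isOpen_lt continuous_const (cr3_continuous _ _)).mem_nhds (by simpa [o0]))
  have c2 : ∀ᶠ ε in nhds (0 : ℝ), out d₁.center z ε ∈ {x | 0 < cr3 d₂.center d₃.center x} :=
    ho.eventually_mem ((isOpen_lt continuous_const (cr3_continuous _ _)).mem_nhds (by simpa [o0]))
  have c3 : ∀ᶠ ε in nhds (0 : ℝ), out d₁.center z ε ∈ {x | 0 < cr3 d₃.center d₁.center x} :=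
    ho.eventually_mem ((isOpen_lt continuous_const (cr3_continuous _ _)).mem_nhds (by simpa [o0]))
  have c4 : ∀ᶠ ε in nhds (0 : ℝ), out d₁.center z ε ∈ (d₂.set)ᶜ :=
    ho.eventually_mem ((disk_isClosed d₂).isOpen_compl.mem_nhds (by simpa [o0]))
  have c5 : ∀ᶠ ε in nhds (0 : ℝ), out d₁.center z ε ∈ (d₃.set)ᶜ :=
    ho.eventually_mem ((disk_isClosed d₃).isOpen_compl.mem_nhds (by simpa [o0]))
  filter_upwards [c1.filter_mono nhdsWithin_le_nhds, c2.filter_mono nhdsWithin_le_nhds,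
    c3.filter_mono nhdsWithin_le_nhds, c4.filter_mono nhdsWithin_le_nhds,
    c5.filter_mono nhdsWithin_le_nhds, self_mem_nhdsWithin] with ε e1 e2 e3 e4 e5 e6
  exact ⟨⟨le_of_lt e1, le_of_lt e2, le_of_lt e3⟩, out_notMem d₁ hz e6, e4, e5⟩

theorem tri_isClosed (d₁ d₂ d₃ : Disk) : IsClosed (tri d₁ d₂ d₃) :=
  (isClosed_le continuous_const (cr3_continuous _ _)).inter
    ((isClosed_le continuous_const (cr3_continuous _ _)).inter
      (isClosed_le continuous_const (cr3_continuous _ _)))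

/-- Three mutually tangent disks are not collinear; one of the orientations is positive. -/
theorem tri_or (h12 : d₁.Tangent d₂) (h13 : d₁.Tangent d₃) (h23 : d₂.Tangent d₃) :
    Tri d₁ d₂ d₃ ∨ Tri d₁ d₃ d₂ := by
  have sy : ∀ {d d' : Disk}, d.Tangent d' → d'.Tangent d := by
    intro d d' h; rw [Disk.Tangent] at *; rw [dist_comm, h]; ring
  rcases lt_trichotomy (cr3 d₁.center d₂.center d₃.center) 0 with h | h | h
  · right
    exact ⟨h13, sy h23, sy h12, by unfold cr3 at *; linarith⟩
  · exfalso
    have e12 := tangent_sq h12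
    have e13 := tangent_sq h13
    have e23 := tangent_sq h23
    have ha := d₁.radius_pos
    have hb := d₂.radius_pos
    have hc := d₃.radius_pos
    have key : 4 * cr3 d₁.center d₂.center d₃.center ^ 2 =
      4 * (d₁.radius + d₂.radius) ^ 2 * (d₁.radius + d₃.radius) ^ 2 - ((d₁.radius + d₂.radius) ^ 2 + (d₁.radius + d₃.radius) ^ 2 - (d₂.radius + d₃.radius) ^ 2) ^ 2 := by
      rw [← e12, ← e13, ← e23]; simp only [cr3]; ring
    rw [h] at key
    have : 4 * (d₁.radius + d₂.radius) ^ 2 * (d₁.radius + d₃.radius) ^ 2 - ((d₁.radius + d₂.radius) ^ 2 + (d₁.radius + d₃.radius) ^ 2 - (d₂.radius + d₃.radius) ^ 2) ^ 2 = 16 * (d₁.radius * d₂.radius * d₃.radius * (d₁.radius + d₂.radius + d₃.radius)) := by ring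
    rw [this] at key
    have : 0 < d₁.radius * d₂.radius * d₃.radius * (d₁.radius + d₂.radius + d₃.radius) := by positivity
    linarith
  · left
    exact ⟨h12, h23, sy h13, h⟩
end

open Metric Set MeasureTheory

/-- Standing assumptions: a packing with radii between `δ > 0` and `1`. -/
structure GP (P : Set Disk) (δ : ℝ) : Prop where
  pack : IsPacking P
  pos : 0 < δ
  lo : ∀ d ∈ P, δ ≤ d.radius
  hi : ∀ d ∈ P, d.radius ≤ 1

theorem IsPacking.dist_ge {P : Set Disk} (h : IsPacking P) {d d' : Disk} (hd : d ∈ P) (hd' : d' ∈ P)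
    (hne : d ≠ d') : d.radius + d'.radius ≤ dist d.center d'.center := by
  have := h d hd d' hd' hne
  rw [Disk.set, Disk.set, interior_closedBall _ d.radius_pos.ne',
    interior_closedBall _ d'.radius_pos.ne', disjoint_ball_ball_iff d.radius_pos d'.radius_pos] at this
  exact this

theorem isPacking_of_dist {P : Set Disk} (h : ∀ d ∈ P, ∀ d' ∈ P, d ≠ d' →
    d.radius + d'.radius ≤ dist d.center d'.center) : IsPacking P := by
  intro d hd d' hd' hne
  rw [Disk.set, Disk.set, interior_closedBall _ d.radius_pos.ne',
    interior_closedBall _ d'.radius_pos.ne', disjoint_ball_ball_iff d.radius_pos d'.radius_pos]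
  exact h d hd d' hd' hne

section
variable {P : Set Disk} {δ : ℝ}

theorem GP.finite_near (h : GP P δ) (x : Plane) (R : ℝ) :
    {d : P | (d.1.set ∩ ball x R).Nonempty}.Finite := by
  let As : {d : P | (d.1.set ∩ ball x R).Nonempty} → Set Plane := fun d => ball d.1.1.center δ
  have hd : Pairwise (Function.onFun Disjoint As) := by
    intro d d' hne
    refine (disjoint_ball_ball_iff h.pos h.pos).2 ?_
    have := h.pack.dist_ge d.1.2 d'.1.2 (fun e => hne (Subtype.ext (Subtype.ext e)))
    have := h.lo _ d.1.2
    have := h.lo _ d'.1.2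
    linarith
  have hsub : (⋃ d, As d) ⊆ ball x (R + 1 + δ) := by
    intro y hy
    obtain ⟨d, hy⟩ := mem_iUnion.1 hy
    obtain ⟨z, hz1, hz2⟩ := d.2
    rw [Disk.set, mem_closedBall] at hz1
    rw [mem_ball] at hz2
    have hy' : dist y d.1.1.center < δ := hy
    have := h.hi _ d.1.2
    rw [mem_ball]
    have t1 := dist_triangle y d.1.1.center x
    have t2 := dist_triangle_left d.1.1.center x z
    linarith
  have hfin : volume (⋃ d, As d) ≠ ⊤ :=
    ((measure_mono hsub).trans_lt measure_ball_lt_top).ne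
  have hpos : 0 < volume (ball (0 : Plane) δ) := measure_ball_pos _ _ h.pos
  have := Measure.finite_const_le_meas_of_disjoint_iUnion volume hpos (As := As)
    (fun d => isOpen_ball.measurableSet) hd hfin
  have hall : {i | volume (ball (0 : Plane) δ) ≤ volume (As i)} = univ := by
    ext i; simp [As, Measure.addHaar_ball_center]
  rw [hall] at this
  exact Set.toFinite_iff_univ this
where
  Set.toFinite_iff_univ {s : Set P} (h : (univ : Set s).Finite) : s.Finite := by
    rw [Set.finite_univ_iff] at h
    exact Set.toFinite s

theorem GP.locallyFinite (h : GP P δ) : LocallyFinite (fun d : P => d.1.set) := fun x =>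
  ⟨ball x 1, ball_mem_nhds x one_pos, h.finite_near x 1⟩

theorem GP.isClosed_sub (h : GP P δ) (Q : Set Disk) (hQ : Q ⊆ P) : IsClosed (packingUnion Q) := by
  have : packingUnion Q = ⋃ d : Q, (fun d : P => d.1.set) ⟨d.1, hQ d.2⟩ := by
    simp [packingUnion, iUnion_subtype]
  rw [this]
  refine LocallyFinite.isClosed_iUnion (f := fun d : Q => (fun d : P => d.1.set) ⟨d.1, hQ d.2⟩)
    (h.locallyFinite.comp_injective (g := fun d : Q => (⟨d.1, hQ d.2⟩ : P)) ?_) ?_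
  · intro a b hab
    simpa [Subtype.ext_iff] using hab
  · exact fun d => disk_isClosed _

theorem GP.countable (h : GP P δ) : P.Countable := by
  have : P = ⋃ n : ℕ, Subtype.val '' {d : P | (d.1.set ∩ ball (0 : Plane) n).Nonempty} := by
    ext d
    simp only [mem_iUnion, mem_image, mem_ofPred_eq]
    constructor
    · intro hd
      obtain ⟨n, hn⟩ := exists_nat_gt (dist d.center 0)
      exact ⟨n, ⟨d, hd⟩, ⟨d.center, mem_closedBall_self d.radius_pos.le, hn⟩, rfl⟩
    · rintro ⟨n, d', -, rfl⟩; exact d'.2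
  rw [this]
  exact countable_iUnion fun n => ((h.finite_near 0 n).image _).countable

/-- A triangle of the packing whose curvilinear hole is a component of the complement. -/
structure GTri (P : Set Disk) (d₁ d₂ d₃ : Disk) : Prop where
  m1 : d₁ ∈ P
  m2 : d₂ ∈ P
  m3 : d₃ ∈ P
  tri : Tri d₁ d₂ d₃
  comp : ∃ x ∈ (packingUnion P)ᶜ, connectedComponentIn (packingUnion P)ᶜ x = hole d₁ d₂ d₃
  meets : {d ∈ P | (closure (hole d₁ d₂ d₃) ∩ d.set).Nonempty} = {d₁, d₂, d₃}

theorem GTri.rot {d₁ d₂ d₃ : Disk} (h : GTri P d₁ d₂ d₃) : GTri P d₂ d₃ d₁ := by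
  refine ⟨h.m2, h.m3, h.m1, h.tri.rot, ?_, ?_⟩
  · rw [hole_rot]; exact h.comp
  · rw [hole_rot, h.meets]; ext d; simp; tauto

theorem GTri.hole_subset {d₁ d₂ d₃ : Disk} (h : GTri P d₁ d₂ d₃) :
    hole d₁ d₂ d₃ ⊆ (packingUnion P)ᶜ := by
  obtain ⟨x, hx, e⟩ := h.comp
  rw [← e]; exact connectedComponentIn_subset _ _

theorem GTri.tri_subset {d₁ d₂ d₃ : Disk} (h : GTri P d₁ d₂ d₃) {x : Plane}
    (hx : x ∈ _root_.tri d₁ d₂ d₃) (hU : x ∈ packingUnion P) :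
    x ∈ d₁.set ∨ x ∈ d₂.set ∨ x ∈ d₃.set := by
  by_contra hc
  push Not at hc
  exact h.hole_subset ⟨hx, hc⟩ hU

/-- Ray escape. -/
theorem ray_escape {d₁ d₂ d₃ : Disk} (ht : Tri d₁ d₂ d₃) {C : Set Plane}
    (hb : Bornology.IsBounded C)
    (hC : ∀ S : Set Plane, IsPreconnected S → (S ∩ C).Nonempty →
      (∀ y ∈ S, y ∉ d₁.set ∧ y ∉ d₂.set ∧ y ∉ d₃.set) → S ⊆ C)
    (hCd : ∀ y ∈ C, y ∉ d₁.set ∧ y ∉ d₂.set ∧ y ∉ d₃.set) {x : Plane} (hx : x ∈ C) :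
    0 ≤ cr3 d₁.center d₂.center x := by
  by_contra hneg
  push Not at hneg
  let n : Plane := !₂[d₂.center 1 - d₁.center 1, -(d₂.center 0 - d₁.center 0)]
  let f : ℝ → Plane := fun t => x + t • n
  have hf : Continuous f := by simp only [f]; fun_prop
  have hn : 0 < (d₂.center 1 - d₁.center 1) ^ 2 + (d₂.center 0 - d₁.center 0) ^ 2 := by
    have e := tangent_sq ht.t12
    have := d₁.radius_pos
    have := d₂.radius_pos
    have : 0 < (d₁.radius + d₂.radius) ^ 2 := by positivity
    linarith
  have key : ∀ d : Disk, 0 ≤ cr3 d₁.center d₂.center d.center → x ∉ d.set →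
      ∀ t, 0 ≤ t → f t ∉ d.set := by
    intro d hd hxd t ht
    rw [notMem_disk_iff] at *
    have : (f t 0 - d.center 0) ^ 2 + (f t 1 - d.center 1) ^ 2 =
      (x 0 - d.center 0) ^ 2 + (x 1 - d.center 1) ^ 2 + 2 * t * (cr3 d₁.center d₂.center d.center
        - cr3 d₁.center d₂.center x)
      + t ^ 2 * ((d₂.center 1 - d₁.center 1) ^ 2 + (d₂.center 0 - d₁.center 0) ^ 2) := by
      simp [f, n, cr3]; ring
    rw [this]
    have h1 : 0 ≤ 2 * t * (cr3 d₁.center d₂.center d.center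
        - cr3 d₁.center d₂.center x) := mul_nonneg (by linarith) (by linarith)
    have h2 := mul_nonneg (sq_nonneg t) hn.le
    linarith
  obtain ⟨x1, x2, x3⟩ := hCd x hx
  have hS : f '' Ici 0 ⊆ C := by
    refine hC _ (isPreconnected_Ici.image _ hf.continuousOn) ⟨x, ⟨0, by simp, by simp [f]⟩, hx⟩ ?_
    rintro _ ⟨t, ht0, rfl⟩
    refine ⟨key d₁ ?_ x1 t ht0, key d₂ ?_ x2 t ht0, key d₃ ht.pos.le x3 t ht0⟩
    · simp [cr3]
    · simp only [cr3]; apply le_of_eq; ring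
  obtain ⟨R, hR⟩ := hb.subset_closedBall x
  have hRt : ∀ t, 0 ≤ t → t ^ 2 * ((d₂.center 1 - d₁.center 1) ^ 2 + (d₂.center 0 - d₁.center 0) ^ 2) ≤ R ^ 2 := by
    intro t ht0
    have := hR (hS ⟨t, ht0, rfl⟩)
    rw [mem_closedBall] at this
    have hR0 : 0 ≤ R := dist_nonneg.trans this
    rw [dist_le_iff _ _ hR0] at this
    simp [f, n] at this
    linarith
  generalize (d₂.center 1 - d₁.center 1) ^ 2 + (d₂.center 0 - d₁.center 0) ^ 2 = N at *
  have h1 := hRt (1 + R ^ 2 / N) (by positivity)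
  have h2 : (1 + R ^ 2 / N) ^ 2 * N = N + 2 * R ^ 2 + (R ^ 2 / N) ^ 2 * N := by field_simp; ring
  rw [h2] at h1
  have h3 : 0 ≤ (R ^ 2 / N) ^ 2 * N := by positivity
  have h4 := sq_nonneg R
  linarith

theorem exists_GTri (h : GP P δ) (hc : IsCompactPacking P) {x : Plane}
    (hx : x ∈ (packingUnion P)ᶜ) :
    ∃ d₁ d₂ d₃, GTri P d₁ d₂ d₃ ∧
      connectedComponentIn (packingUnion P)ᶜ x = hole d₁ d₂ d₃ := by
  obtain ⟨hb, d₁, d₂, d₃, m1, m2, m3, -, -, -, t12, t13, t23, hm⟩ := hc.2 x hx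
  have hmain : ∀ d₁ d₂ d₃ : Disk, d₁ ∈ P → d₂ ∈ P → d₃ ∈ P → Tri d₁ d₂ d₃ →
      {d ∈ P | (closure (connectedComponentIn (packingUnion P)ᶜ x) ∩ d.set).Nonempty}
        = {d₁, d₂, d₃} → ∃ d₁ d₂ d₃, GTri P d₁ d₂ d₃ ∧
      connectedComponentIn (packingUnion P)ᶜ x = hole d₁ d₂ d₃ := by
    clear hm
    intro d₁ d₂ d₃ m1 m2 m3 ht hm
    set U := packingUnion P with hU
    set C := connectedComponentIn Uᶜ x with hCdef
    have hUo : IsOpen Uᶜ := (h.isClosed_sub P le_rfl).isOpen_compl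
    have hCo : IsOpen C := hUo.connectedComponentIn
    have hCU : C ⊆ Uᶜ := connectedComponentIn_subset _ _
    have hxC : x ∈ C := mem_connectedComponentIn hx
    have hcl1 : closure C ∩ Uᶜ ⊆ C := by
      rintro y ⟨hy1, hy2⟩
      have hp : IsPreconnected (insert y C) :=
        isPreconnected_connectedComponentIn.subset_closure (subset_insert _ _)
          (insert_subset hy1 subset_closure)
      exact hp.subset_connectedComponentIn (mem_insert_of_mem _ hxC)
        (insert_subset hy2 hCU) (mem_insert _ _)
    have hcl2 : ∀ y ∈ closure C, (y ∉ d₁.set ∧ y ∉ d₂.set ∧ y ∉ d₃.set) → y ∈ C := by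
      intro y hy hyd
      refine hcl1 ⟨hy, ?_⟩
      intro hyU
      obtain ⟨d, hd, hyd'⟩ := mem_iUnion₂.1 hyU
      have : d ∈ ({d₁, d₂, d₃} : Set Disk) := by
        rw [← hm]; exact ⟨hd, y, hy, hyd'⟩
      rcases this with rfl | rfl | rfl
      · exact hyd.1 hyd'
      · exact hyd.2.1 hyd'
      · exact hyd.2.2 hyd'
    have hCS : ∀ S : Set Plane, IsPreconnected S → (S ∩ C).Nonempty →
        (∀ y ∈ S, y ∉ d₁.set ∧ y ∉ d₂.set ∧ y ∉ d₃.set) → S ⊆ C := by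
      intro S hS hne hd
      exact hS.subset_of_closure_inter_subset hCo hne fun y hy => hcl2 y hy.1 (hd y hy.2)
    have hCd : ∀ y ∈ C, y ∉ d₁.set ∧ y ∉ d₂.set ∧ y ∉ d₃.set := by
      intro y hy
      have := hCU hy
      refine ⟨fun h => this (mem_iUnion₂.2 ⟨_, m1, h⟩), fun h => this (mem_iUnion₂.2 ⟨_, m2, h⟩),
        fun h => this (mem_iUnion₂.2 ⟨_, m3, h⟩)⟩
    have hCH : C ⊆ hole d₁ d₂ d₃ := by
      intro y hy
      refine ⟨⟨ray_escape ht hb hCS hCd hy, ?_, ?_⟩, hCd y hy⟩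
      · refine ray_escape ht.rot hb (fun S h1 h2 h3 => hCS S h1 h2 fun y hy => ?_) (fun y hy => ?_) hy
        · have := h3 y hy; tauto
        · have := hCd y hy; tauto
      · refine ray_escape ht.rot.rot hb (fun S h1 h2 h3 => hCS S h1 h2 fun y hy => ?_) (fun y hy => ?_) hy
        · have := h3 y hy; tauto
        · have := hCd y hy; tauto
    have hHC : hole d₁ d₂ d₃ ⊆ C :=
      hCS _ ht.hole_preconnected ⟨x, hCH hxC, hxC⟩ fun y hy => hy.2
    have he : C = hole d₁ d₂ d₃ := hCH.antisymm hHC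
    exact ⟨d₁, d₂, d₃, ⟨m1, m2, m3, ht, ⟨x, hx, he⟩, by rw [← he]; exact hm⟩, he⟩
  rcases tri_or t12 t13 t23 with ht | ht
  · exact hmain d₁ d₂ d₃ m1 m2 m3 ht hm
  · refine hmain d₁ d₃ d₂ m1 m3 m2 ht ?_
    rw [hm]; ext d; simp; tauto

/-- Holes that meet coincide. -/
theorem GTri.hole_eq {d₁ d₂ d₃ e₁ e₂ e₃ : Disk} (h : GTri P d₁ d₂ d₃) (h' : GTri P e₁ e₂ e₃)
    {x : Plane} (hx : x ∈ hole d₁ d₂ d₃) (hx' : x ∈ hole e₁ e₂ e₃) :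
    hole d₁ d₂ d₃ = hole e₁ e₂ e₃ := by
  obtain ⟨y, hy, e⟩ := h.comp
  obtain ⟨y', hy', e'⟩ := h'.comp
  rw [← e] at hx ⊢; rw [← e'] at hx' ⊢
  rw [connectedComponentIn_eq hx, connectedComponentIn_eq hx']

theorem GTri.ne {d₁ d₂ d₃ : Disk} (h : GTri P d₁ d₂ d₃) : d₁ ≠ d₂ ∧ d₂ ≠ d₃ ∧ d₃ ≠ d₁ := by
  have : ∀ {d d' : Disk}, d.Tangent d' → d ≠ d' := by
    rintro d d' ht rfl
    rw [Disk.Tangent, dist_self] at ht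
    have := d.radius_pos
    linarith
  exact ⟨this h.tri.t12, this h.tri.t23, this h.tri.t31⟩

theorem GTri.unique {d₁ d₂ d₃ e₂ e₃ : Disk} (h : GTri P d₁ d₂ d₃) (h' : GTri P d₁ e₂ e₃)
    (he : hole d₁ d₂ d₃ = hole d₁ e₂ e₃) : d₂ = e₂ ∧ d₃ = e₃ := by
  have hs : ({d₁, d₂, d₃} : Set Disk) = {d₁, e₂, e₃} := by rw [← h.meets, ← h'.meets, he]
  obtain ⟨n1, n2, n3⟩ := h.ne
  have h2 : d₂ ∈ ({d₁, e₂, e₃} : Set Disk) := by rw [← hs]; simp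
  have h3 : d₃ ∈ ({d₁, e₂, e₃} : Set Disk) := by rw [← hs]; simp
  rcases h2 with h2 | h2 | h2
  · exact absurd h2.symm n1
  · rcases h3 with h3 | h3 | h3
    · exact absurd h3 n3
    · exact absurd (h2.trans h3.symm) n2
    · exact ⟨h2, h3⟩
  · rcases h3 with h3 | h3 | h3
    · exact absurd h3 n3
    · exfalso
      have h3' : d₃ = e₂ := h3
      have h2' : d₂ = e₃ := h2
      have p := h.tri.pos
      have p' := h'.tri.pos
      rw [h3', h2'] at p
      unfold cr3 at *; linarith
    · exact absurd (h2.trans h3.symm) n2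

/-- Radial projection to the boundary circle. -/
noncomputable def proj (d : Disk) (x : Plane) : Plane :=
  d.center + (d.radius / dist x d.center) • (x - d.center)

theorem proj_dist (d : Disk) {x : Plane} (hx : x ≠ d.center) :
    dist (proj d x) d.center = d.radius := by
  have h0 : 0 < dist x d.center := dist_pos.2 hx
  rw [proj, dist_eq_norm, add_sub_cancel_left, norm_smul, ← dist_eq_norm, Real.norm_eq_abs,
    abs_of_pos (div_pos d.radius_pos h0)]
  field_simp

theorem proj_cr (d : Disk) (B x : Plane) :
    cr3 d.center B (proj d x) = d.radius / dist x d.center * cr3 d.center B x := by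
  simp [proj, cr3]; ring

theorem proj_cr' (d : Disk) (B x : Plane) :
    cr3 B d.center (proj d x) = d.radius / dist x d.center * cr3 B d.center x := by
  simp [proj, cr3]; ring

theorem GTri.corner {d₁ d₂ d₃ e₂ e₃ : Disk} (h : GTri P d₁ d₂ d₃) (h' : GTri P d₁ e₂ e₃)
    {x : Plane} (a : 0 < cr3 d₁.center d₂.center x) (b : 0 < cr3 d₃.center d₁.center x)
    (a' : 0 < cr3 d₁.center e₂.center x) (b' : 0 < cr3 e₃.center d₁.center x) :
    hole d₁ d₂ d₃ = hole d₁ e₂ e₃ := by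
  have hx : x ≠ d₁.center := by
    rintro rfl; simp [cr3] at a
  have hpos : 0 < d₁.radius / dist x d₁.center := div_pos d₁.radius_pos (dist_pos.2 hx)
  have hz := proj_dist d₁ hx
  have k1 := h.tri.out_mem_hole hz (by rw [proj_cr]; positivity) (by rw [proj_cr']; positivity)
  have k2 := h'.tri.out_mem_hole hz (by rw [proj_cr]; positivity) (by rw [proj_cr']; positivity)
  obtain ⟨ε, e1, e2⟩ := (k1.and k2).exists
  exact h.hole_eq h' e1 e2

/-- Every disk is covered by its corners, off the lines of centers. -/
theorem GP.cover (h : GP P δ) (hc : IsCompactPacking P) {D : Disk} (hD : D ∈ P) {x : Plane}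
    (hx : x ∈ D.set) (hxc : x ≠ D.center)
    (hl : ∀ d ∈ P, d ≠ D → cr3 D.center d.center x ≠ 0) :
    ∃ d₂ d₃, GTri P D d₂ d₃ ∧ x ∈ tri D d₂ d₃ := by
  have hpos : 0 < D.radius / dist x D.center := div_pos D.radius_pos (dist_pos.2 hxc)
  set z := proj D x with hz
  have hzd : dist z D.center = D.radius := proj_dist D hxc
  have hzm : z ∈ D.set := by rw [Disk.set, mem_closedBall, hzd]
  have hzU : z ∉ packingUnion (P \ {D}) := by
    intro hzU
    obtain ⟨d, ⟨hd, hdD⟩, hzd'⟩ := mem_iUnion₂.1 hzU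
    have := (inter_line (h.pack.dist_ge hD hd (Ne.symm hdD)) hzm hzd').1
    rw [hz, proj_cr] at this
    exact hl d hd hdD ((mul_eq_zero.1 this).resolve_left hpos.ne')
  have o0 : out D.center z 0 = z := by simp [out]
  have ho := (out_continuous D.center z).continuousAt (x := 0)
  have c4 : ∀ᶠ ε in nhds (0 : ℝ), out D.center z ε ∈ (packingUnion (P \ {D}))ᶜ :=
    ho.eventually_mem ((h.isClosed_sub _ sdiff_subset).isOpen_compl.mem_nhds (by simpa [o0]))
  obtain ⟨η, hη, hball⟩ := Metric.eventually_nhds_iff_ball.1 c4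
  let S := out D.center z '' Ioo 0 η
  have hSU : S ⊆ (packingUnion P)ᶜ := by
    rintro _ ⟨ε, ⟨hε0, hε1⟩, rfl⟩ hU
    obtain ⟨d, hd, hm⟩ := mem_iUnion₂.1 hU
    by_cases hdD : d = D
    · subst hdD; exact out_notMem d hzd hε0 hm
    · refine hball ε ?_ (mem_iUnion₂.2 ⟨d, ⟨hd, hdD⟩, hm⟩)
      rw [mem_ball, Real.dist_eq, sub_zero, abs_of_pos hε0]; exact hε1
  have hSp : IsPreconnected S := isPreconnected_Ioo.image _ (out_continuous _ _).continuousOn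
  have hy0 : out D.center z (η / 2) ∈ S := ⟨η / 2, ⟨by linarith, by linarith⟩, rfl⟩
  have hSC := hSp.subset_connectedComponentIn hy0 hSU
  obtain ⟨d₁, d₂, d₃, hG, he⟩ := exists_GTri h hc (hSU hy0)
  rw [he] at hSC
  have hzS : z ∈ closure S := by
    rw [← o0]
    refine image_closure_subset_closure_image (out_continuous _ _) ⟨0, ?_, rfl⟩
    rw [closure_Ioo hη.ne]; exact ⟨le_rfl, hη.le⟩
  have hzC : z ∈ closure (hole d₁ d₂ d₃) := closure_mono hSC hzS
  have hzT : z ∈ tri d₁ d₂ d₃ := closure_minimal (fun y hy => hy.1) (tri_isClosed _ _ _) hzC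
  have hDm : D ∈ ({d₁, d₂, d₃} : Set Disk) := by
    rw [← hG.meets]; exact ⟨hD, z, hzC, hzm⟩
  obtain ⟨d₂, d₃, hG, hzT⟩ : ∃ d₂ d₃, GTri P D d₂ d₃ ∧ z ∈ tri D d₂ d₃ := by
    rcases hDm with rfl | rfl | rfl
    · exact ⟨_, _, hG, hzT⟩
    · exact ⟨_, _, hG.rot, by rwa [tri_rot]⟩
    · exact ⟨_, _, hG.rot.rot, by rwa [tri_rot, tri_rot]⟩
  refine ⟨d₂, d₃, hG, ?_⟩
  have q := hzT.1
  have p := hzT.2.2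
  rw [hz, proj_cr, mul_nonneg_iff_of_pos_left hpos] at q
  rw [hz, proj_cr', mul_nonneg_iff_of_pos_left hpos] at p
  exact ⟨q, (hG.tri.cone_disk hx q p).le, p⟩
end

open Metric Set MeasureTheory

theorem line_null {A B : Plane} (h : A ≠ B) : volume {x : Plane | cr3 A B x = 0} = 0 := by
  let φ : Plane →ₗ[ℝ] ℝ :=
    { toFun := fun v => (B 0 - A 0) * v 1 - (B 1 - A 1) * v 0
      map_add' := by intro u v; simp; ring
      map_smul' := by intro c v; simp; ring }
  have hne : LinearMap.ker φ ≠ ⊤ := by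
    intro ht
    apply h
    have h1 : φ (!₂[0, 1]) = 0 := by
      have : (!₂[0, 1] : Plane) ∈ LinearMap.ker φ := by rw [ht]; trivial
      exact this
    have h2 : φ (!₂[1, 0]) = 0 := by
      have : (!₂[1, 0] : Plane) ∈ LinearMap.ker φ := by rw [ht]; trivial
      exact this
    simp [φ] at h1 h2
    ext i; fin_cases i
    · simp; linarith
    · simp; linarith
  have := Measure.addHaar_submodule volume (LinearMap.ker φ) hne
  have e : {x : Plane | cr3 A B x = 0} = (fun x => x + (-A)) ⁻¹' (LinearMap.ker φ : Set Plane) := by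
    ext x
    simp [cr3, φ, sub_eq_add_neg]
  rw [e, measure_preimage_add_right, this]

theorem sector_angle {m θ : ℝ} (hm : 0 < m) (h1 : -Real.pi < θ) (h2 : θ < Real.pi) :
    |Real.sin θ| ≤ m * Real.cos θ ↔ |θ| ≤ Real.arctan m := by
  have hlt := Real.arctan_lt_pi_div_two m
  wlog h0 : 0 ≤ θ generalizing θ
  · have := this (θ := -θ) (by linarith) (by linarith) (by linarith)
    simpa using this
  rw [abs_of_nonneg h0, abs_of_nonneg (Real.sin_nonneg_of_nonneg_of_le_pi h0 h2.le)]
  constructor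
  · intro h
    have hs := Real.sin_nonneg_of_nonneg_of_le_pi h0 h2.le
    have hc : 0 < Real.cos θ := by
      by_contra hc
      push Not at hc
      have : m * Real.cos θ ≤ 0 := mul_nonpos_of_nonneg_of_nonpos hm.le hc
      have hs0 : Real.sin θ = 0 := by linarith
      have hc0 : Real.cos θ = 0 := by
        rw [hs0] at h
        have : 0 ≤ Real.cos θ := by
          by_contra hcc; push Not at hcc
          have := mul_neg_of_pos_of_neg hm hcc; linarith
        linarith
      have := Real.sin_sq_add_cos_sq θ
      rw [hs0, hc0] at this; norm_num at this
    have hθ : θ < Real.pi / 2 := by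
      by_contra hh; push Not at hh
      have := Real.cos_nonpos_of_pi_div_two_le_of_le hh (by linarith)
      linarith
    rw [← Real.arctan_tan (by linarith) hθ]
    apply Real.arctan_strictMono.monotone
    rw [Real.tan_eq_sin_div_cos, div_le_iff₀ hc]; exact h
  · intro h
    have hθ : θ < Real.pi / 2 := by linarith
    have hc : 0 < Real.cos θ := Real.cos_pos_of_mem_Ioo ⟨by linarith [Real.pi_pos], hθ⟩
    rw [← div_le_iff₀ hc, ← Real.tan_eq_sin_div_cos]
    by_contra hh; push Not at hh
    have := Real.arctan_strictMono hh
    rw [Real.arctan_tan (by linarith [Real.pi_pos]) hθ] at this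
    linarith

theorem sector_volume {a m : ℝ} (ha : 0 < a) (hm : 0 < m) :
    volume {z : ℂ | ‖z‖ ≤ a ∧ |z.im| ≤ m * z.re} = ENNReal.ofReal (a ^ 2 * Real.arctan m) := by
  set S := {z : ℂ | ‖z‖ ≤ a ∧ |z.im| ≤ m * z.re} with hS
  have hSm : MeasurableSet S := by
    apply IsClosed.measurableSet
    exact (isClosed_le continuous_norm continuous_const).inter
      (isClosed_le (f := fun z : ℂ => |z.im|) (g := fun z : ℂ => m * z.re) (by fun_prop) (by fun_prop))
  have hα : 0 < Real.arctan m := Real.arctan_pos.2 hm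
  have hα2 := Real.arctan_lt_pi_div_two m
  rw [← lintegral_indicator_one hSm, ← Complex.lintegral_comp_polarCoord_symm]
  have e : ∀ p ∈ polarCoord.target, ENNReal.ofReal p.1 • S.indicator (1 : ℂ → ENNReal) (Complex.polarCoord.symm p)
      = (Ioc 0 a ×ˢ Icc (-Real.arctan m) (Real.arctan m)).indicator (fun p => ENNReal.ofReal p.1) p := by
    rintro ⟨r, θ⟩ ⟨hr, hθ⟩
    simp only at hr hθ
    have hr' : 0 < r := hr
    have : Complex.polarCoord.symm (r, θ) ∈ S ↔ (r, θ) ∈ Ioc 0 a ×ˢ Icc (-Real.arctan m) (Real.arctan m) := by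
      rw [hS, mem_ofPred_eq, Complex.norm_polarCoord_symm, Complex.polarCoord_symm_apply, mem_prod, mem_Ioc, mem_Icc, ← abs_le, ← sector_angle hm hθ.1 hθ.2]
      simp only [abs_of_pos hr']
      have i1 : ((r : ℂ) * (Real.cos θ + Real.sin θ * Complex.I)).im = r * Real.sin θ := by
        simp [-Complex.ofReal_cos, -Complex.ofReal_sin]
      have i2 : ((r : ℂ) * (Real.cos θ + Real.sin θ * Complex.I)).re = r * Real.cos θ := by
        simp [-Complex.ofReal_cos, -Complex.ofReal_sin]
      rw [i1, i2, abs_mul, abs_of_pos hr', mul_left_comm, mul_le_mul_iff_right₀ hr']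
      simp [hr']
    by_cases hp : (r, θ) ∈ Ioc 0 a ×ˢ Icc (-Real.arctan m) (Real.arctan m)
    · rw [indicator_of_mem hp, indicator_of_mem (this.2 hp)]; simp
    · rw [indicator_of_notMem hp, indicator_of_notMem (fun h => hp (this.1 h))]; simp
  rw [setLIntegral_congr_fun polarCoord.open_target.measurableSet e,
    setLIntegral_indicator (measurableSet_Ioc.prod measurableSet_Icc)]
  have hsub : Ioc 0 a ×ˢ Icc (-Real.arctan m) (Real.arctan m) ∩ polarCoord.target = Ioc 0 a ×ˢ Icc (-Real.arctan m) (Real.arctan m) := by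
    apply inter_eq_left.2
    rintro ⟨r, θ⟩ ⟨hr, hθ⟩
    exact ⟨hr.1, by linarith [hθ.1, Real.pi_pos], by linarith [hθ.2, Real.pi_pos]⟩
  rw [hsub, Measure.volume_eq_prod, ← Measure.prod_restrict,
    lintegral_prod _ (by fun_prop)]
  simp only [lintegral_const, Measure.restrict_apply MeasurableSet.univ, univ_inter, Real.volume_Icc]
  rw [lintegral_mul_const _ (by fun_prop)]
  have : ∫⁻ r in Ioc 0 a, ENNReal.ofReal r = ENNReal.ofReal (a ^ 2 / 2) := by
    rw [← ofReal_integral_eq_lintegral_ofReal]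
    · rw [← intervalIntegral.integral_of_le ha.le, integral_id]; simp
    · exact (continuous_id.integrableOn_Icc).mono_set Ioc_subset_Icc_self
    · filter_upwards [ae_restrict_mem measurableSet_Ioc] with r hr using hr.1.le
  rw [this, ← ENNReal.ofReal_mul (by positivity)]
  congr 1; ring

open Metric Set MeasureTheory

section
variable {d₁ d₂ d₃ : Disk}

theorem Tri.corner_volume (h : Tri d₁ d₂ d₃) : volume (tri d₁ d₂ d₃ ∩ d₁.set)
    = ENNReal.ofReal (d₁.radius ^ 2 * Real.arctan (inr d₁ d₂ d₃ / d₁.radius)) := by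
  have ha := d₁.radius_pos
  have hρ := h.inr_pos
  let e : Plane ≃ₗᵢ[ℝ] ℂ := Complex.orthonormalBasisOneI.repr.symm
  have he : ∀ v : Plane, e v = ⟨v 0, v 1⟩ := by
    intro v
    simp only [e]
    rw [← Complex.orthonormalBasisOneI.sum_repr_symm]
    apply Complex.ext <;> simp [Fin.sum_univ_two]
  let w : Plane := inc d₁ d₂ d₃ - d₁.center
  have hw := h.frame.2.1
  have hw' : w 0 ^ 2 + w 1 ^ 2 = d₁.radius ^ 2 + inr d₁ d₂ d₃ ^ 2 := hw
  obtain ⟨n, hn0, hn⟩ : ∃ n : ℝ, 0 < n ∧ n ^ 2 = w 0 ^ 2 + w 1 ^ 2 := by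
    have : 0 < w 0 ^ 2 + w 1 ^ 2 := by rw [hw']; positivity
    exact ⟨Real.sqrt (w 0 ^ 2 + w 1 ^ 2), Real.sqrt_pos.2 this, Real.sq_sqrt this.le⟩
  have hc : (⟨w 0 / n, -w 1 / n⟩ : ℂ) ∈ Submonoid.unitSphere ℂ := by
    change (_ : ℂ) ∈ sphere (0:ℂ) 1
    rw [mem_sphere_zero_iff_norm]
    rw [Complex.norm_def, Real.sqrt_eq_one, Complex.normSq_mk]
    field_simp; linarith
  let c : Circle := ⟨_, hc⟩
  let Ψ : Plane ≃ₗᵢ[ℝ] ℂ := e.trans (rotation c)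
  have hΨ : ∀ v : Plane, Ψ v = ⟨(v 0 * w 0 + v 1 * w 1) / n, (w 0 * v 1 - w 1 * v 0) / n⟩ := by
    intro v
    simp only [Ψ, LinearIsometryEquiv.trans_apply, rotation_apply, he]
    apply Complex.ext
    · simp [c]; ring
    · simp [c]; ring
  have hset : tri d₁ d₂ d₃ ∩ d₁.set = (fun x => x + (-d₁.center)) ⁻¹'
      (Ψ ⁻¹' {z : ℂ | ‖z‖ ≤ d₁.radius ∧ |z.im| ≤ inr d₁ d₂ d₃ / d₁.radius * z.re}) := by
    ext x
    have k := h.cone_iff x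
    dsimp only at k
    simp only [mem_preimage, mem_ofPred_eq, LinearIsometryEquiv.norm_map]
    rw [← sub_eq_add_neg, ← dist_eq_norm, hΨ]
    have hcone : |(w 0 * (x - d₁.center) 1 - w 1 * (x - d₁.center) 0) / n| ≤ inr d₁ d₂ d₃ / d₁.radius *
        (((x - d₁.center) 0 * w 0 + (x - d₁.center) 1 * w 1) / n) ↔
        (0 ≤ cr3 d₁.center d₂.center x ∧ 0 ≤ cr3 d₃.center d₁.center x) := by
      rw [k, abs_div, abs_of_pos hn0, abs_mul, abs_of_pos ha]
      simp only [w, PiLp.sub_apply]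
      rw [div_le_iff₀ hn0, ← mul_le_mul_iff_right₀ ha]
      apply iff_of_eq; congr 1
      field_simp
    rw [hcone]
    constructor
    · rintro ⟨⟨h1, h2, h3⟩, h4⟩
      exact ⟨h4, h1, h3⟩
    · rintro ⟨h4, h1, h3⟩
      exact ⟨⟨h1, (h.cone_disk h4 h1 h3).le, h3⟩, h4⟩
  rw [hset, measure_preimage_add_right]
  have hpre := (Ψ.measurePreserving).measure_preimage_emb
    Ψ.toHomeomorph.measurableEmbedding {z : ℂ | ‖z‖ ≤ d₁.radius ∧ |z.im| ≤ inr d₁ d₂ d₃ / d₁.radius * z.re}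
  rw [hpre]
  exact sector_volume ha (by positivity)

theorem simplex_volume : ENNReal.ofReal (1 / 2) ≤
    volume {v : Plane | 0 ≤ v 0 ∧ 0 ≤ v 1 ∧ v 0 + v 1 ≤ 1} := by
  have hr : volume (regionBetween (fun _ : ℝ => (0 : ℝ)) (fun x => 1 - x) (Icc 0 1))
      = ENNReal.ofReal (1 / 2) := by
    rw [Measure.volume_eq_prod, volume_regionBetween_eq_integral]
    · congr 1
      rw [integral_Icc_eq_integral_Ioc, ← intervalIntegral.integral_of_le zero_le_one]
      have : ∫ x in (0:ℝ)..1, ((fun x : ℝ => 1 - x) - (fun _ : ℝ => (0 : ℝ))) x = ∫ x in (0:ℝ)..1, (1 - x) := by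
        simp
      rw [this, intervalIntegral.integral_sub (by simp) (by simp)]; simp; norm_num
    · exact integrableOn_const (by simp)
    · exact Continuous.integrableOn_Icc (by fun_prop)
    · exact measurableSet_Icc
    · intro x hx; simp at *; linarith
  have hm : MeasurePreserving (fun v : Plane => (v 0, v 1)) volume volume := by
    have h1 := EuclideanSpace.volume_preserving_symm_measurableEquiv_toLp (Fin 2)
    have h2 := volume_preserving_finTwoArrow ℝ
    exact h2.comp h1
  rw [← hr, ← hm.measure_preimage]
  · apply measure_mono
    intro v hv
    obtain ⟨h1, h2⟩ := hv
    simp at h1 h2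
    exact ⟨h1.1, h2.1.le, by linarith⟩
  · exact (measurableSet_regionBetween measurable_const (by fun_prop) measurableSet_Icc).nullMeasurableSet

theorem Tri.volume_ge (h : Tri d₁ d₂ d₃) :
    ENNReal.ofReal ((d₁.radius + d₂.radius + d₃.radius) * inr d₁ d₂ d₃)
      ≤ volume (tri d₁ d₂ d₃) := by
  have hS := simplex_volume
  set S := {v : Plane | 0 ≤ v 0 ∧ 0 ≤ v 1 ∧ v 0 + v 1 ≤ 1}
  let M : Matrix (Fin 2) (Fin 2) ℝ := !![d₂.center 0 - d₁.center 0, d₃.center 0 - d₁.center 0;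
    d₂.center 1 - d₁.center 1, d₃.center 1 - d₁.center 1]
  let b := (EuclideanSpace.basisFun (Fin 2) ℝ).toBasis
  let f : Plane →ₗ[ℝ] Plane := Matrix.toLin b b M
  have hdet : LinearMap.det f = cr3 d₁.center d₂.center d₃.center := by
    simp only [f, LinearMap.det_toLin, M, Matrix.det_fin_two_of, cr3]; ring
  have hf : ∀ v : Plane, f v = !₂[(d₂.center 0 - d₁.center 0) * v 0 + (d₃.center 0 - d₁.center 0) * v 1,
      (d₂.center 1 - d₁.center 1) * v 0 + (d₃.center 1 - d₁.center 1) * v 1] := by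
    intro v
    ext i
    have : f v = ∑ j, v j • f (b j) := by
      conv_lhs => rw [← b.sum_repr v]
      rw [map_sum]; simp [b]
    rw [this]
    simp only [f, Matrix.toLin_self]
    fin_cases i <;> simp [Fin.sum_univ_two, b, M] <;> ring
  have himg := Measure.addHaar_image_linearMap volume f S
  have hsub : f '' S ⊆ (fun x => x + d₁.center) ⁻¹' tri d₁ d₂ d₃ := by
    rintro _ ⟨v, ⟨h0, h1, h2⟩, rfl⟩
    have hp := h.pos
    rw [hf]
    simp only [mem_preimage, tri, mem_ofPred_eq]
    have e1 : cr3 d₁.center d₂.center d₃.center * v 1 = cr3 d₁.center d₂.center (!₂[(d₂.center 0 - d₁.center 0) * v 0 + (d₃.center 0 - d₁.center 0) * v 1,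
      (d₂.center 1 - d₁.center 1) * v 0 + (d₃.center 1 - d₁.center 1) * v 1] + d₁.center) := by
      simp [cr3]; ring
    have e2 : cr3 d₁.center d₂.center d₃.center * (1 - v 0 - v 1) = cr3 d₂.center d₃.center (!₂[(d₂.center 0 - d₁.center 0) * v 0 + (d₃.center 0 - d₁.center 0) * v 1,
      (d₂.center 1 - d₁.center 1) * v 0 + (d₃.center 1 - d₁.center 1) * v 1] + d₁.center) := by
      simp [cr3]; ring
    have e3 : cr3 d₁.center d₂.center d₃.center * v 0 = cr3 d₃.center d₁.center (!₂[(d₂.center 0 - d₁.center 0) * v 0 + (d₃.center 0 - d₁.center 0) * v 1,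
      (d₂.center 1 - d₁.center 1) * v 0 + (d₃.center 1 - d₁.center 1) * v 1] + d₁.center) := by
      simp [cr3]; ring
    rw [← e1, ← e2, ← e3]
    exact ⟨mul_nonneg hp.le h1, mul_nonneg hp.le (by linarith), mul_nonneg hp.le h0⟩
  have h3 := measure_mono (μ := volume) hsub
  rw [measure_preimage_add_right, himg, hdet, abs_of_pos h.pos] at h3
  refine le_trans ?_ h3
  refine le_trans ?_ (mul_le_mul_right hS _)
  rw [← ENNReal.ofReal_mul h.pos.le]
  apply ENNReal.ofReal_le_ofReal
  have := d₁.radius_pos; have := d₂.radius_pos; have := d₃.radius_pos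
  simp only [inr]
  apply le_of_eq; field_simp

end

open Metric Set MeasureTheory

section
variable {P : Set Disk} {δ : ℝ}

/-- A point in general position with respect to the packing. -/
def Generic (P : Set Disk) (x : Plane) : Prop :=
  ∀ d ∈ P, x ≠ d.center ∧ ∀ d' ∈ P, d ≠ d' → cr3 d.center d'.center x ≠ 0

theorem GP.center_ne (h : GP P δ) {d d' : Disk} (hd : d ∈ P) (hd' : d' ∈ P) (hne : d ≠ d') :
    d.center ≠ d'.center := by
  intro e
  have := h.pack.dist_ge hd hd' hne
  rw [e, dist_self] at this
  have := d.radius_pos; have := d'.radius_pos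
  linarith

theorem GP.ae_generic (h : GP P δ) : ∀ᵐ x : Plane, Generic P x := by
  have hc := h.countable
  refine (ae_ball_iff hc).2 fun d hd => ?_
  refine Filter.Eventually.and ?_ ((ae_ball_iff hc).2 fun d' hd' => ?_)
  · rw [ae_iff]; simp
  · by_cases hne : d = d'
    · simp [hne]
    · have := line_null (h.center_ne hd hd' hne)
      rw [measure_eq_zero_iff_ae_notMem] at this
      filter_upwards [this] with x hx _ using hx

theorem Generic.disk_eq {x : Plane} (hg : Generic P x) (h : GP P δ) {d d' : Disk} (hd : d ∈ P)
    (hd' : d' ∈ P) (hx : x ∈ d.set) (hx' : x ∈ d'.set) : d = d' := by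
  by_contra hne
  exact (hg d hd).2 d' hd' hne (inter_line (h.pack.dist_ge hd hd' hne) hx hx').1

/-- Rotate a triangle so that a given disk comes first. -/
theorem GTri.first {d₁ d₂ d₃ : Disk} (h : GTri P d₁ d₂ d₃) {x : Plane} (hx : x ∈ _root_.tri d₁ d₂ d₃)
    (hU : x ∈ packingUnion P) : ∃ D e₂ e₃, GTri P D e₂ e₃ ∧ x ∈ D.set ∧ x ∈ _root_.tri D e₂ e₃ ∧
      hole D e₂ e₃ = hole d₁ d₂ d₃ := by
  rcases h.tri_subset hx hU with h1 | h1 | h1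
  · exact ⟨_, _, _, h, h1, hx, rfl⟩
  · exact ⟨_, _, _, h.rot, h1, by rwa [tri_rot], hole_rot _ _ _⟩
  · exact ⟨_, _, _, h.rot.rot, h1, by rwa [tri_rot, tri_rot], by rw [hole_rot, hole_rot]⟩

theorem GTri.generic_eq {d₁ d₂ d₃ e₁ e₂ e₃ : Disk} (hP : GP P δ) (h : GTri P d₁ d₂ d₃)
    (h' : GTri P e₁ e₂ e₃) {x : Plane} (hg : Generic P x) (hx : x ∈ _root_.tri d₁ d₂ d₃)
    (hx' : x ∈ _root_.tri e₁ e₂ e₃) : hole d₁ d₂ d₃ = hole e₁ e₂ e₃ := by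
  by_cases hU : x ∈ packingUnion P
  · obtain ⟨D, f₂, f₃, g, m, t, e⟩ := h.first hx hU
    obtain ⟨D', f₂', f₃', g', m', t', e'⟩ := h'.first hx' hU
    obtain rfl := hg.disk_eq hP g.m1 g'.m1 m m'
    rw [← e, ← e']
    exact g.corner g'
      (lt_of_le_of_ne t.1 ((hg _ g.m1).2 _ g.m2 g.ne.1).symm)
      (lt_of_le_of_ne t.2.2 ((hg _ g.m3).2 _ g.m1 g.ne.2.2).symm)
      (lt_of_le_of_ne t'.1 ((hg _ g'.m1).2 _ g'.m2 g'.ne.1).symm)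
      (lt_of_le_of_ne t'.2.2 ((hg _ g'.m3).2 _ g'.m1 g'.ne.2.2).symm)
  · have k : ∀ d ∈ P, x ∉ d.set := fun d hd hm => hU (mem_iUnion₂.2 ⟨d, hd, hm⟩)
    exact h.hole_eq h' ⟨hx, k _ h.m1, k _ h.m2, k _ h.m3⟩ ⟨hx', k _ h'.m1, k _ h'.m2, k _ h'.m3⟩

/-- The angles around a disk add up. -/
theorem GP.angle_sum (h : GP P δ) (hc : IsCompactPacking P) {D : Disk} (hD : D ∈ P) :
    ∃ J : Finset (Disk × Disk), (∀ t, t ∈ J ↔ GTri P D t.1 t.2) ∧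
      ∑ t ∈ J, Real.arctan (inr D t.1 t.2 / D.radius) = Real.pi := by
  classical
  have hfin : {t : Disk × Disk | GTri P D t.1 t.2}.Finite := by
    have hN := (h.finite_near D.center 3).image Subtype.val
    refine (hN.prod hN).subset ?_
    rintro ⟨d₂, d₃⟩ (hG : GTri P D d₂ d₃)
    have hr := h.hi _ hD
    have key : ∀ d ∈ P, dist D.center d.center = D.radius + d.radius →
        d ∈ Subtype.val '' {d : P | (d.1.set ∩ ball D.center 3).Nonempty} := by
      intro d hd e
      refine ⟨⟨d, hd⟩, ⟨d.center, mem_closedBall_self d.radius_pos.le, ?_⟩, rfl⟩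
      rw [mem_ball, dist_comm, e]
      have := h.hi _ hd
      linarith
    refine ⟨key _ hG.m2 hG.tri.t12, key _ hG.m3 ?_⟩
    have := hG.tri.t31
    rw [Disk.Tangent] at this
    rw [dist_comm, this]; ring
  refine ⟨hfin.toFinset, fun t => by simp, ?_⟩
  have hae : (⋃ t ∈ hfin.toFinset, (tri D t.1 t.2 ∩ D.set)) =ᵐ[volume] D.set := by
    filter_upwards [h.ae_generic] with x hx
    apply propext
    change x ∈ (⋃ t ∈ hfin.toFinset, (tri D t.1 t.2 ∩ D.set)) ↔ x ∈ D.set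
    constructor
    · intro hxm
      obtain ⟨t, -, ht⟩ := mem_iUnion₂.1 hxm
      exact ht.2
    · intro hxm
      obtain ⟨d₂, d₃, hG, hT⟩ := h.cover hc hD hxm (hx D hD).1 fun d hd hne =>
        (hx D hD).2 d hd hne.symm
      exact mem_iUnion₂.2 ⟨(d₂, d₃), by simpa using hG, hT, hxm⟩
  have hvol : volume (⋃ t ∈ hfin.toFinset, (tri D t.1 t.2 ∩ D.set))
      = ∑ t ∈ hfin.toFinset, volume (tri D t.1 t.2 ∩ D.set) := by
    apply measure_biUnion_finset₀
    · intro t ht t' ht' hne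
      rw [Finset.mem_coe, hfin.mem_toFinset] at ht ht'
      change volume _ = 0
      rw [measure_eq_zero_iff_ae_notMem]
      filter_upwards [h.ae_generic] with x hx hxm
      have ht1 : GTri P D t.1 t.2 := ht
      have ht2 : GTri P D t'.1 t'.2 := ht'
      have := GTri.generic_eq h ht1 ht2 hx hxm.1.1 hxm.2.1
      have := ht1.unique ht2 this
      exact hne (Prod.ext this.1 this.2)
    · intro t ht
      exact ((tri_isClosed _ _ _).inter (disk_isClosed _)).measurableSet.nullMeasurableSet
  rw [measure_congr hae, Disk.set, EuclideanSpace.volume_closedBall_fin_two] at hvol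
  have hr := D.radius_pos
  have e2 : ∑ t ∈ hfin.toFinset, volume (tri D t.1 t.2 ∩ closedBall D.center D.radius)
      = ENNReal.ofReal (∑ t ∈ hfin.toFinset, D.radius ^ 2 * Real.arctan (inr D t.1 t.2 / D.radius)) := by
    rw [ENNReal.ofReal_sum_of_nonneg]
    · apply Finset.sum_congr rfl
      intro t ht
      rw [hfin.mem_toFinset] at ht
      exact (show GTri P D t.1 t.2 from ht).tri.corner_volume
    · intro t ht
      rw [hfin.mem_toFinset] at ht
      have := (show GTri P D t.1 t.2 from ht).tri.inr_pos
      have := Real.arctan_nonneg.2 (show 0 ≤ inr D t.1 t.2 / D.radius by positivity)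
      positivity
  rw [e2, ← Finset.mul_sum] at hvol
  have hpos : 0 ≤ ∑ t ∈ hfin.toFinset, Real.arctan (inr D t.1 t.2 / D.radius) := by
    apply Finset.sum_nonneg
    intro t ht
    rw [hfin.mem_toFinset] at ht
    have := (show GTri P D t.1 t.2 from ht).tri.inr_pos
    exact Real.arctan_nonneg.2 (by positivity)
  have hl : ENNReal.ofReal D.radius ^ 2 * ENNReal.ofReal Real.pi = ENNReal.ofReal (D.radius ^ 2 * Real.pi) := by
    rw [ENNReal.ofReal_mul (by positivity), ENNReal.ofReal_pow hr.le]
  have hvol' : ENNReal.ofReal (D.radius ^ 2 * Real.pi) = ENNReal.ofReal (D.radius ^ 2 * ∑ t ∈ hfin.toFinset, Real.arctan (inr D t.1 t.2 / D.radius)) := by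
    rw [← hvol, ← hl]
  have := (ENNReal.ofReal_eq_ofReal_iff (by positivity) (by positivity)).1 hvol'
  exact (mul_left_cancel₀ (by positivity) this).symm

theorem square_volume {R : ℝ} (hR : 0 ≤ R) : volume (square R) = ENNReal.ofReal (4 * R ^ 2) := by
  have hm : MeasurePreserving (fun v : Plane => (v 0, v 1)) volume volume := by
    have h1 := EuclideanSpace.volume_preserving_symm_measurableEquiv_toLp (Fin 2)
    have h2 := volume_preserving_finTwoArrow ℝ
    exact h2.comp h1
  have e : square R = (fun v : Plane => (v 0, v 1)) ⁻¹' (Icc (-R) R ×ˢ Icc (-R) R) := by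
    ext x; simp [square, abs_le]; tauto
  rw [e, hm.measure_preimage (measurableSet_Icc.prod measurableSet_Icc).nullMeasurableSet,
    Measure.volume_eq_prod, Measure.prod_prod, Real.volume_Icc, ← ENNReal.ofReal_mul (by linarith)]
  congr 1; ring

theorem abs_coord_le (x y : Plane) (i : Fin 2) : |x i - y i| ≤ dist x y := by
  apply abs_le_of_sq_le_sq _ dist_nonneg
  rw [dist_sq_eq]
  fin_cases i
  · simp; positivity
  · simp; positivity

/-- The volume bound. -/
theorem GP.volume_le (h : GP P δ) (hc : IsCompactPacking P) {K : ℝ} (hK : 0 ≤ K)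
    (hd : ∀ d₁ d₂ d₃, GTri P d₁ d₂ d₃ →
      d₁.radius ^ 2 * Real.arctan (inr d₁ d₂ d₃ / d₁.radius)
      + d₂.radius ^ 2 * Real.arctan (inr d₁ d₂ d₃ / d₂.radius)
      + d₃.radius ^ 2 * Real.arctan (inr d₁ d₂ d₃ / d₃.radius)
      ≤ K * ((d₁.radius + d₂.radius + d₃.radius) * inr d₁ d₂ d₃)) {R : ℝ} (hR : 0 ≤ R) :
    volume (packingUnion P ∩ square R) ≤ ENNReal.ofReal (K * (4 * (R + 4) ^ 2)) := by
  classical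
  let ι := {H : Set Plane // ∃ d₁ d₂ d₃, GTri P d₁ d₂ d₃ ∧ hole d₁ d₂ d₃ = H ∧
    (tri d₁ d₂ d₃ ∩ square R).Nonempty}
  have hι : ∀ H : ι, ∃ d₁ d₂ d₃, GTri P d₁ d₂ d₃ ∧ hole d₁ d₂ d₃ = H.1 ∧
    (tri d₁ d₂ d₃ ∩ square R).Nonempty := fun H => H.2
  choose f₁ f₂ f₃ hG hH hne using hι
  have hcount : Countable ι := by
    have := h.countable.to_subtype
    refine Function.Injective.countable (f := fun H : ι => ((⟨f₁ H, (hG H).m1⟩ : P), (⟨f₂ H, (hG H).m2⟩ : P), (⟨f₃ H, (hG H).m3⟩ : P))) ?_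
    intro H H' e
    simp only [Prod.mk.injEq, Subtype.mk.injEq] at e
    apply Subtype.ext
    rw [← hH H, ← hH H', e.1, e.2.1, e.2.2]
  let T : ι → Set Plane := fun H => tri (f₁ H) (f₂ H) (f₃ H)
  have hcov : volume (packingUnion P ∩ square R) ≤ volume (⋃ H, T H ∩ packingUnion P) := by
    apply measure_mono_ae
    filter_upwards [h.ae_generic] with x hx hxm
    obtain ⟨D, hD, hxD⟩ := mem_iUnion₂.1 hxm.1
    obtain ⟨d₂, d₃, hG', hT⟩ := h.cover hc hD hxD (hx D hD).1 fun d hd hne =>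
        (hx D hD).2 d hd hne.symm
    -- the chosen triple is a rotation of the present one
    let H : ι := ⟨hole D d₂ d₃, D, d₂, d₃, hG', rfl, x, hT, hxm.2⟩
    refine mem_iUnion.2 ⟨H, ?_, hxm.1⟩
    have e1 : hole (f₁ H) (f₂ H) (f₃ H) = hole D d₂ d₃ := hH H
    have hset : D ∈ ({f₁ H, f₂ H, f₃ H} : Set Disk) := by
      rw [← (hG H).meets, e1, hG'.meets]; simp
    have fin : ∀ e₂ e₃, GTri P D e₂ e₃ → hole D e₂ e₃ = hole D d₂ d₃ → x ∈ tri D e₂ e₃ := by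
      intro e₂ e₃ g e
      obtain ⟨r1, r2⟩ := g.unique hG' e
      rw [r1, r2]; exact hT
    rcases hset with e | e | e
    · change x ∈ tri (f₁ H) (f₂ H) (f₃ H)
      have := fin (f₂ H) (f₃ H) (by rw [e]; exact hG H) (by conv_lhs => rw [e]
                                                            exact e1)
      rwa [← e]
    · change x ∈ tri (f₁ H) (f₂ H) (f₃ H)
      have := fin (f₃ H) (f₁ H) (by rw [e]; exact (hG H).rot) (by
        conv_lhs => rw [e, hole_rot]
        exact e1)
      rw [← tri_rot, ← e]; exact this
    · change x ∈ tri (f₁ H) (f₂ H) (f₃ H)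
      have e' : D = f₃ H := e
      have := fin (f₁ H) (f₂ H) (by rw [e']; exact (hG H).rot.rot) (by
        conv_lhs => rw [e', hole_rot, hole_rot]
        exact e1)
      rw [← tri_rot, ← tri_rot, ← e']; exact this
  have hone : ∀ H, volume (T H ∩ packingUnion P) ≤ ENNReal.ofReal K * volume (T H) := by
    intro H
    have g := hG H
    have hsub : T H ∩ packingUnion P ⊆ (tri (f₁ H) (f₂ H) (f₃ H) ∩ (f₁ H).set) ∪
        ((tri (f₂ H) (f₃ H) (f₁ H) ∩ (f₂ H).set) ∪ (tri (f₃ H) (f₁ H) (f₂ H) ∩ (f₃ H).set)) := by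
      rintro x ⟨hx, hU⟩
      rw [tri_rot, ← tri_rot (f₃ H) (f₁ H) (f₂ H), tri_rot (f₃ H) (f₁ H) (f₂ H), tri_rot (f₂ H) (f₃ H) (f₁ H), tri_rot]
      rcases g.tri_subset hx hU with k | k | k
      · exact Or.inl ⟨hx, k⟩
      · exact Or.inr (Or.inl ⟨hx, k⟩)
      · exact Or.inr (Or.inr ⟨hx, k⟩)
    have hρ := g.tri.inr_pos
    have p1 := (f₁ H).radius_pos
    have p2 := (f₂ H).radius_pos
    have p3 := (f₃ H).radius_pos
    have nn : ∀ r : ℝ, 0 < r → 0 ≤ r ^ 2 * Real.arctan (inr (f₁ H) (f₂ H) (f₃ H) / r) := by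
      intro r hr
      have := Real.arctan_nonneg.2 (show 0 ≤ inr (f₁ H) (f₂ H) (f₃ H) / r by positivity)
      positivity
    calc volume (T H ∩ packingUnion P) ≤ _ := measure_mono hsub
      _ ≤ _ := (measure_union_le _ _).trans (add_le_add le_rfl (measure_union_le _ _))
      _ = ENNReal.ofReal ((f₁ H).radius ^ 2 * Real.arctan (inr (f₁ H) (f₂ H) (f₃ H) / (f₁ H).radius)
          + (f₂ H).radius ^ 2 * Real.arctan (inr (f₁ H) (f₂ H) (f₃ H) / (f₂ H).radius)
          + (f₃ H).radius ^ 2 * Real.arctan (inr (f₁ H) (f₂ H) (f₃ H) / (f₃ H).radius)) := by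
        rw [g.tri.corner_volume, g.tri.rot.corner_volume, g.tri.rot.rot.corner_volume,
          inr_rot (f₂ H) (f₃ H) (f₁ H), inr_rot (f₁ H) (f₂ H) (f₃ H),
          ENNReal.ofReal_add (add_nonneg (nn _ p1) (nn _ p2)) (nn _ p3), ENNReal.ofReal_add (nn _ p1) (nn _ p2), add_assoc]
      _ ≤ ENNReal.ofReal (K * (((f₁ H).radius + (f₂ H).radius + (f₃ H).radius) * inr (f₁ H) (f₂ H) (f₃ H))) :=
        ENNReal.ofReal_le_ofReal (hd _ _ _ g)
      _ ≤ ENNReal.ofReal K * volume (T H) := by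
        rw [ENNReal.ofReal_mul hK]
        gcongr
        exact g.tri.volume_ge
  have hdisj : Pairwise (Function.onFun (AEDisjoint volume) T) := by
    intro H H' hne'
    change volume _ = 0
    rw [measure_eq_zero_iff_ae_notMem]
    filter_upwards [h.ae_generic] with x hx hxm
    have := GTri.generic_eq h (hG H) (hG H') hx hxm.1 hxm.2
    rw [hH, hH] at this
    exact hne' (Subtype.ext this)
  have hsq : (⋃ H, T H) ⊆ square (R + 4) := by
    intro y hy
    obtain ⟨H, hy⟩ := mem_iUnion.1 hy
    obtain ⟨x, hx, hxs⟩ := hne H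
    have g := hG H
    have hb := g.tri.tri_subset_ball (h.hi _ g.m1) (h.hi _ g.m2) (h.hi _ g.m3)
    have h1 := hb hx
    have h2 := hb hy
    rw [mem_closedBall] at h1 h2
    have h3 : dist y x ≤ 4 := by
      have := dist_triangle_right y x (f₁ H).center
      linarith
    have k0 := (abs_coord_le y x 0).trans h3
    have k1 := (abs_coord_le y x 1).trans h3
    obtain ⟨x0, x1⟩ := hxs
    constructor
    · have := abs_sub_abs_le_abs_sub (y 0) (x 0); linarith
    · have := abs_sub_abs_le_abs_sub (y 1) (x 1); linarith
  calc volume (packingUnion P ∩ square R) ≤ volume (⋃ H, T H ∩ packingUnion P) := hcov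
    _ ≤ ∑' H, volume (T H ∩ packingUnion P) := measure_iUnion_le _
    _ ≤ ∑' H, ENNReal.ofReal K * volume (T H) := ENNReal.tsum_le_tsum hone
    _ = ENNReal.ofReal K * ∑' H, volume (T H) := ENNReal.tsum_mul_left
    _ = ENNReal.ofReal K * volume (⋃ H, T H) := by
      rw [measure_iUnion₀ hdisj fun H => (tri_isClosed _ _ _).measurableSet.nullMeasurableSet]
    _ ≤ ENNReal.ofReal K * volume (square (R + 4)) := by gcongr
    _ = _ := by rw [square_volume (by linarith), ← ENNReal.ofReal_mul hK]

theorem GP.density_le (h : GP P δ) (hc : IsCompactPacking P) {K : ℝ} (hK : 0 ≤ K)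
    (hd : ∀ d₁ d₂ d₃, GTri P d₁ d₂ d₃ →
      d₁.radius ^ 2 * Real.arctan (inr d₁ d₂ d₃ / d₁.radius)
      + d₂.radius ^ 2 * Real.arctan (inr d₁ d₂ d₃ / d₂.radius)
      + d₃.radius ^ 2 * Real.arctan (inr d₁ d₂ d₃ / d₃.radius)
      ≤ K * ((d₁.radius + d₂.radius + d₃.radius) * inr d₁ d₂ d₃)) {K' : ℝ} (hKK : K < K') :
    density P ≤ K' := by
  unfold density
  apply Filter.limsup_le_of_le
  · exact Filter.isCoboundedUnder_le_of_le _ (x := 0) fun R =>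
      div_nonneg ENNReal.toReal_nonneg (by positivity)
  · have hlim : Filter.Tendsto (fun R : ℝ => K * (1 + 4 * R⁻¹) ^ 2) Filter.atTop (nhds K) := by
      have : Filter.Tendsto (fun R : ℝ => K * (1 + 4 * R⁻¹) ^ 2) Filter.atTop (nhds (K * (1 + 4 * 0) ^ 2)) :=
        ((tendsto_inv_atTop_zero.const_mul 4).const_add 1 |>.pow 2).const_mul K
      simpa using this
    filter_upwards [hlim.eventually_lt_const hKK, Filter.eventually_gt_atTop 0] with R h1 h2
    have hv := h.volume_le hc hK hd h2.le
    have hv' : (volume (packingUnion P ∩ square R)).toReal ≤ K * (4 * (R + 4) ^ 2) :=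
      ENNReal.toReal_le_of_le_ofReal (by positivity) hv
    rw [div_le_iff₀ (by positivity)]
    have e : K * (4 * (R + 4) ^ 2) = (K * (1 + 4 * R⁻¹) ^ 2) * (4 * R ^ 2) := by field_simp
    rw [e] at hv'
    refine hv'.trans ?_
    gcongr
end

open Metric Set MeasureTheory

/-! ### Numerical estimates -/

theorem exists_s : ∃ s : ℝ, 0.151397 ≤ s ∧ s ≤ 0.151398 ∧
    (1 + s + 2 * s ^ 2) ^ 2 * ((1 + 4 * s) * (3 + 4 * s)) - 4 * (1 + 2 * s) ^ 4 * (1 - s) ^ 2 = 0 := by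
  have h := intermediate_value_Icc (a := (0.151397 : ℝ)) (b := 0.151398) (by norm_num)
    (f := fun s : ℝ => (1 + s + 2 * s ^ 2) ^ 2 * ((1 + 4 * s) * (3 + 4 * s))
      - 4 * (1 + 2 * s) ^ 4 * (1 - s) ^ 2) (by fun_prop)
  obtain ⟨s, hs, h0⟩ := h (show (0 : ℝ) ∈ _ by constructor <;> norm_num)
  exact ⟨s, hs.1, hs.2, h0⟩

theorem arctan_ub {y : ℝ} (hy : 0 ≤ y) : Real.arctan y ≤ y - y ^ 3 / 3 + y ^ 5 / 5 := by
  have hm : MonotoneOn (fun y : ℝ => y - y ^ 3 / 3 + y ^ 5 / 5 - Real.arctan y) (Ici 0) := by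
    apply monotoneOn_of_deriv_nonneg (convex_Ici 0) (by fun_prop)
      (by have := Real.differentiable_arctan; exact Differentiable.differentiableOn (by fun_prop))
    intro x hx
    have hd : HasDerivAt (fun y : ℝ => y - y ^ 3 / 3 + y ^ 5 / 5 - Real.arctan y)
        (1 - (3 * x ^ 2) / 3 + (5 * x ^ 4) / 5 - 1 / (1 + x ^ 2)) x := by
      have h3 := (hasDerivAt_pow 3 x).div_const 3
      have h5 := (hasDerivAt_pow 5 x).div_const 5
      have := (((hasDerivAt_id x).sub h3).add h5).sub (Real.hasDerivAt_arctan x)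
      exact this.congr_deriv (by norm_num)
    rw [hd.deriv]
    have : (1 - (3 * x ^ 2) / 3 + (5 * x ^ 4) / 5 - 1 / (1 + x ^ 2)) = x ^ 6 / (1 + x ^ 2) := by
      field_simp; ring
    rw [this]; positivity
  have := hm (show (0:ℝ) ∈ Ici 0 by simp) hy hy
  simp at this
  linarith

theorem arctan_lb {y : ℝ} (hy : 0 ≤ y) : y - y ^ 3 / 3 + y ^ 5 / 5 - y ^ 7 / 7 ≤ Real.arctan y := by
  have hm : MonotoneOn (fun y : ℝ => Real.arctan y - (y - y ^ 3 / 3 + y ^ 5 / 5 - y ^ 7 / 7)) (Ici 0) := by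
    apply monotoneOn_of_deriv_nonneg (convex_Ici 0) (by fun_prop)
      (by have := Real.differentiable_arctan; exact Differentiable.differentiableOn (by fun_prop))
    intro x hx
    have hd : HasDerivAt (fun y : ℝ => Real.arctan y - (y - y ^ 3 / 3 + y ^ 5 / 5 - y ^ 7 / 7))
        (1 / (1 + x ^ 2) - (1 - (3 * x ^ 2) / 3 + (5 * x ^ 4) / 5 - (7 * x ^ 6) / 7)) x := by
      have h3 := (hasDerivAt_pow 3 x).div_const 3
      have h5 := (hasDerivAt_pow 5 x).div_const 5
      have h7 := (hasDerivAt_pow 7 x).div_const 7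
      have := (Real.hasDerivAt_arctan x).sub ((((hasDerivAt_id x).sub h3).add h5).sub h7)
      exact this.congr_deriv (by norm_num)
    rw [hd.deriv]
    have : (1 / (1 + x ^ 2) - (1 - (3 * x ^ 2) / 3 + (5 * x ^ 4) / 5 - (7 * x ^ 6) / 7))
        = x ^ 8 / (1 + x ^ 2) := by
      field_simp; ring
    rw [this]; positivity
  have := hm (show (0:ℝ) ∈ Ici 0 by simp) hy hy
  simp at this
  linarith

/-- Reduction of the argument of the arctangent. -/
theorem arctan_shift {x y : ℝ} (hy : -1 < y) (hy1 : y < 1) (h : x * (1 - y) = 1 + y) :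
    Real.arctan x = Real.pi / 4 + Real.arctan y := by
  have h1 : 1 - y ≠ 0 := by linarith
  have := Real.arctan_add (x := 1) (y := y) (by linarith)
  rw [Real.arctan_one] at this
  rw [this]; congr 1; field_simp; linarith

theorem arctan_le_pos {x y c : ℝ} (hy : 0 ≤ y) (hy1 : y < 1) (h : x * (1 - y) = 1 + y)
    (hc : 0.78539825 + (y - y ^ 3 / 3 + y ^ 5 / 5) ≤ c) : Real.arctan x ≤ c := by
  rw [arctan_shift (by linarith) hy1 h]
  have := arctan_ub hy
  have := Real.pi_lt_d6
  linarith

theorem arctan_ge_pos {x y c : ℝ} (hy : 0 ≤ y) (hy1 : y < 1) (h : x * (1 - y) = 1 + y)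
    (hc : c ≤ 0.785398 + (y - y ^ 3 / 3 + y ^ 5 / 5 - y ^ 7 / 7)) : c ≤ Real.arctan x := by
  rw [arctan_shift (by linarith) hy1 h]
  have := arctan_lb hy
  have := Real.pi_gt_d6
  linarith

theorem arctan_le_neg {x y c : ℝ} (hy : 0 ≤ y) (hy1 : y < 1) (h : x * (1 + y) = 1 - y)
    (hc : 0.78539825 - (y - y ^ 3 / 3 + y ^ 5 / 5 - y ^ 7 / 7) ≤ c) : Real.arctan x ≤ c := by
  rw [arctan_shift (y := -y) (by linarith) (by linarith) (by linarith), Real.arctan_neg]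
  have := arctan_lb hy
  have := Real.pi_lt_d6
  linarith

theorem arctan_ge_neg {x y c : ℝ} (hy : 0 ≤ y) (hy1 : y < 1) (h : x * (1 + y) = 1 - y)
    (hc : c ≤ 0.785398 - (y - y ^ 3 / 3 + y ^ 5 / 5)) : c ≤ Real.arctan x := by
  rw [arctan_shift (y := -y) (by linarith) (by linarith) (by linarith), Real.arctan_neg]
  have := arctan_ub hy
  have := Real.pi_gt_d6
  linarith

/-- the interval for `s` and `r` -/
structure RS (r s : ℝ) : Prop where
  s0 : 0.151397 ≤ s
  s1 : s ≤ 0.151398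
  r0 : 0.410835 ≤ r
  r1 : r ≤ 0.410839
  rel : r * (1 - s) = 2 * s * (1 + s)

open Metric Set MeasureTheory

section
variable {a b c ρ y C : ℝ}

theorem ratio_le (ha : 0 < a) (hb : 0 < b) (hc : 0 < c) (hρ : 0 < ρ)
    (h : ρ ^ 2 * (a + b + c) = a * b * c) {q : ℝ} (hq : 0 ≤ q)
    (hh : b * c ≤ q ^ 2 * (a * (a + b + c))) : ρ / a ≤ q := by
  rw [div_le_iff₀ ha]
  refine le_of_sq_le_sq ?_ (by positivity)
  have hS : 0 < a + b + c := by positivity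
  refine le_of_mul_le_mul_right ?_ hS
  rw [h]; nlinarith

theorem le_ratio (ha : 0 < a) (hb : 0 < b) (hc : 0 < c) (hρ : 0 < ρ)
    (h : ρ ^ 2 * (a + b + c) = a * b * c) {q : ℝ}
    (hh : q ^ 2 * (a * (a + b + c)) ≤ b * c) : q ≤ ρ / a := by
  rw [le_div_iff₀ ha]
  refine le_of_sq_le_sq ?_ hρ.le
  have hS : 0 < a + b + c := by positivity
  refine le_of_mul_le_mul_right ?_ hS
  rw [h]; nlinarith

theorem at_le_small (ha : 0 < a) (hb : 0 < b) (hc : 0 < c) (hρ : 0 < ρ)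
    (h : ρ ^ 2 * (a + b + c) = a * b * c) {q : ℝ} (hq : 0 ≤ q)
    (hh : b * c ≤ q ^ 2 * (a * (a + b + c))) (hC : q - q ^ 3 / 3 + q ^ 5 / 5 ≤ C) :
    Real.arctan (ρ / a) ≤ C :=
  (Real.arctan_mono (ratio_le ha hb hc hρ h hq hh)).trans ((arctan_ub hq).trans hC)

theorem at_le_pos (ha : 0 < a) (hb : 0 < b) (hc : 0 < c) (hρ : 0 < ρ)
    (h : ρ ^ 2 * (a + b + c) = a * b * c) (hy : 0 ≤ y) (hy1 : y < 1)
    (hh : b * c * (1 - y) ^ 2 ≤ (1 + y) ^ 2 * (a * (a + b + c)))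
    (hC : 0.78539825 + (y - y ^ 3 / 3 + y ^ 5 / 5) ≤ C) : Real.arctan (ρ / a) ≤ C := by
  have h1 : 0 < 1 - y := by linarith
  refine (Real.arctan_mono (ratio_le (q := (1 + y) / (1 - y)) ha hb hc hρ h (by positivity) ?_)).trans
    (arctan_le_pos hy hy1 (by field_simp) hC)
  rw [div_pow, div_mul_eq_mul_div, le_div_iff₀ (by positivity)]; exact hh

theorem at_le_neg (ha : 0 < a) (hb : 0 < b) (hc : 0 < c) (hρ : 0 < ρ)
    (h : ρ ^ 2 * (a + b + c) = a * b * c) (hy : 0 ≤ y) (hy1 : y < 1)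
    (hh : b * c * (1 + y) ^ 2 ≤ (1 - y) ^ 2 * (a * (a + b + c)))
    (hC : 0.78539825 - (y - y ^ 3 / 3 + y ^ 5 / 5 - y ^ 7 / 7) ≤ C) : Real.arctan (ρ / a) ≤ C := by
  have h1 : 0 < 1 - y := by linarith
  refine (Real.arctan_mono (ratio_le (q := (1 - y) / (1 + y)) ha hb hc hρ h (by positivity) ?_)).trans
    (arctan_le_neg hy hy1 (by field_simp) hC)
  rw [div_pow, div_mul_eq_mul_div, le_div_iff₀ (by positivity)]; exact hh

theorem at_ge_pos (ha : 0 < a) (hb : 0 < b) (hc : 0 < c) (hρ : 0 < ρ)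
    (h : ρ ^ 2 * (a + b + c) = a * b * c) (hy : 0 ≤ y) (hy1 : y < 1)
    (hh : (1 + y) ^ 2 * (a * (a + b + c)) ≤ b * c * (1 - y) ^ 2)
    (hC : C ≤ 0.785398 + (y - y ^ 3 / 3 + y ^ 5 / 5 - y ^ 7 / 7)) : C ≤ Real.arctan (ρ / a) := by
  have h1 : 0 < 1 - y := by linarith
  refine (arctan_ge_pos hy hy1 (by field_simp) hC).trans (Real.arctan_mono
    (le_ratio (q := (1 + y) / (1 - y)) ha hb hc hρ h ?_))
  rw [div_pow, div_mul_eq_mul_div, div_le_iff₀ (by positivity)]; exact hh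

theorem at_ge_neg (ha : 0 < a) (hb : 0 < b) (hc : 0 < c) (hρ : 0 < ρ)
    (h : ρ ^ 2 * (a + b + c) = a * b * c) (hy : 0 ≤ y) (hy1 : y < 1)
    (hh : (1 - y) ^ 2 * (a * (a + b + c)) ≤ b * c * (1 + y) ^ 2)
    (hC : C ≤ 0.785398 - (y - y ^ 3 / 3 + y ^ 5 / 5)) : C ≤ Real.arctan (ρ / a) := by
  have h1 : 0 < 1 - y := by linarith
  refine (arctan_ge_neg hy hy1 (by field_simp) hC).trans (Real.arctan_mono
    (le_ratio (q := (1 - y) / (1 + y)) ha hb hc hρ h ?_))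
  rw [div_pow, div_mul_eq_mul_div, div_le_iff₀ (by positivity)]; exact hh

end

section
variable {r s ρ : ℝ}

theorem RS.prods (h : RS r s) : 0 < s ∧ 0 < r ∧ 0.02292105 ≤ s ^ 2 ∧ s ^ 2 ≤ 0.02292136 ∧
    0.0621991 ≤ r * s ∧ r * s ≤ 0.0622003 ∧ 0.1687853 ≤ r ^ 2 ∧ r ^ 2 ≤ 0.1687887 := by
  obtain ⟨a, b, c, d, -⟩ := h
  refine ⟨by linarith, by linarith, ?_, ?_, ?_, ?_, ?_, ?_⟩ <;> nlinarith

theorem ang_oo (h : RS r s) (hρ : 0 < ρ) (e : ρ ^ 2 * (s + 1 + 1) = s * 1 * 1) :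
    1.05209 ≤ Real.arctan (ρ / s) ∧ Real.arctan (ρ / s) ≤ 1.05229 := by
  obtain ⟨p1, p2, p3, p4, p5, p6, p7, p8⟩ := h.prods
  obtain ⟨q1, q2, q3, q4, q5⟩ := h
  constructor
  · refine at_ge_pos (y := 0.27326) (by positivity) (by positivity) (by positivity) hρ e
      (by norm_num) (by norm_num) ?_ (by norm_num)
    nlinarith
  · refine at_le_pos (y := 0.27336) (by positivity) (by positivity) (by positivity) hρ e
      (by norm_num) (by norm_num) ?_ (by norm_num)
    nlinarith

theorem ang_or (h : RS r s) (hρ : 0 < ρ) (e : ρ ^ 2 * (s + 1 + r) = s * 1 * r) :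
    0.92162 ≤ Real.arctan (ρ / s) ∧ Real.arctan (ρ / s) ≤ 0.92182 := by
  obtain ⟨p1, p2, p3, p4, p5, p6, p7, p8⟩ := h.prods
  obtain ⟨q1, q2, q3, q4, q5⟩ := h
  constructor
  · refine at_ge_pos (y := 0.13712) (by positivity) (by positivity) (by positivity) hρ e
      (by norm_num) (by norm_num) ?_ (by norm_num)
    nlinarith
  · refine at_le_pos (y := 0.13722) (by positivity) (by positivity) (by positivity) hρ e
      (by norm_num) (by norm_num) ?_ (by norm_num)
    nlinarith

theorem ang_os (h : RS r s) (hρ : 0 < ρ) (e : ρ ^ 2 * (s + 1 + s) = s * 1 * s) :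
    0.71936 ≤ Real.arctan (ρ / s) ∧ Real.arctan (ρ / s) ≤ 0.71956 := by
  obtain ⟨p1, p2, p3, p4, p5, p6, p7, p8⟩ := h.prods
  obtain ⟨q1, q2, q3, q4, q5⟩ := h
  constructor
  · refine at_ge_neg (y := 0.06608) (by positivity) (by positivity) (by positivity) hρ e
      (by norm_num) (by norm_num) ?_ (by norm_num)
    nlinarith
  · refine at_le_neg (y := 0.06598) (by positivity) (by positivity) (by positivity) hρ e
      (by norm_num) (by norm_num) ?_ (by norm_num)
    nlinarith

theorem ang_rr (h : RS r s) (hρ : 0 < ρ) (e : ρ ^ 2 * (s + r + r) = s * r * r) :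
    0.81928 ≤ Real.arctan (ρ / s) ∧ Real.arctan (ρ / s) ≤ 0.81948 := by
  obtain ⟨p1, p2, p3, p4, p5, p6, p7, p8⟩ := h.prods
  obtain ⟨q1, q2, q3, q4, q5⟩ := h
  constructor
  · refine at_ge_pos (y := 0.03394) (by positivity) (by positivity) (by positivity) hρ e
      (by norm_num) (by norm_num) ?_ (by norm_num)
    nlinarith
  · refine at_le_pos (y := 0.03404) (by positivity) (by positivity) (by positivity) hρ e
      (by norm_num) (by norm_num) ?_ (by norm_num)
    nlinarith

theorem ang_rs (h : RS r s) (hρ : 0 < ρ) (e : ρ ^ 2 * (s + r + s) = s * r * s) :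
    0.64898 ≤ Real.arctan (ρ / s) ∧ Real.arctan (ρ / s) ≤ 0.64918 := by
  obtain ⟨p1, p2, p3, p4, p5, p6, p7, p8⟩ := h.prods
  obtain ⟨q1, q2, q3, q4, q5⟩ := h
  constructor
  · refine at_ge_neg (y := 0.13722) (by positivity) (by positivity) (by positivity) hρ e
      (by norm_num) (by norm_num) ?_ (by norm_num)
    nlinarith
  · refine at_le_neg (y := 0.13712) (by positivity) (by positivity) (by positivity) hρ e
      (by norm_num) (by norm_num) ?_ (by norm_num)
    nlinarith

theorem ang_ss (h : RS r s) (hρ : 0 < ρ) (e : ρ ^ 2 * (s + s + s) = s * s * s) :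
    0.52350 ≤ Real.arctan (ρ / s) ∧ Real.arctan (ρ / s) ≤ 0.52370 := by
  obtain ⟨p1, p2, p3, p4, p5, p6, p7, p8⟩ := h.prods
  obtain ⟨q1, q2, q3, q4, q5⟩ := h
  constructor
  · refine at_ge_neg (y := 0.26800) (by positivity) (by positivity) (by positivity) hρ e
      (by norm_num) (by norm_num) ?_ (by norm_num)
    nlinarith
  · refine at_le_neg (y := 0.26790) (by positivity) (by positivity) (by positivity) hρ e
      (by norm_num) (by norm_num) ?_ (by norm_num)
    nlinarith

theorem count_nat (n0 n1 n2 n3 n4 n5 : ℕ) (h : 1 ≤ n0 + n2)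
    (h1 : 105209 * n0 + 92162 * n1 + 71936 * n2 + 81928 * n3 + 64898 * n4 + 52350 * n5 ≤ 314160)
    (h2 : 314159 ≤ 105229 * n0 + 92182 * n1 + 71956 * n2 + 81948 * n3 + 64918 * n4 + 52370 * n5) : False := by
  have : n0 ≤ 2 := by omega
  have : n2 ≤ 4 := by omega
  have : n1 ≤ 3 := by omega
  have : n3 ≤ 3 := by omega
  interval_cases n0 <;> interval_cases n2 <;> interval_cases n1 <;> interval_cases n3 <;>
    first | omega | (have : n4 ≤ 4 := by omega
                     interval_cases n4 <;> omega)

theorem dens_oor (h : RS r s) (hρ : 0 < ρ) (e : ρ ^ 2 * (1 + 1 + r) = 1 * 1 * r) :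
    1 ^ 2 * Real.arctan (ρ / 1) + 1 ^ 2 * Real.arctan (ρ / 1) + r ^ 2 * Real.arctan (ρ / r)
      ≤ 0.946 * ((1 + 1 + r) * ρ) := by
  obtain ⟨p1, p2, p3, p4, p5, p6, p7, p8⟩ := h.prods
  obtain ⟨q1, q2, q3, q4, q5⟩ := h
  have Ao : Real.arctan (ρ / 1) ≤ 0.39181 := by
    refine at_le_small (q := 0.41286) (b := 1) (c := r) (by positivity) (by positivity) (by positivity) hρ
      (by linarith) (by norm_num) ?_ (by norm_num)
    nlinarith
  have Bo : 1 ^ 2 * Real.arctan (ρ / 1) ≤ 1 * 0.39181 :=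
    mul_le_mul (by linarith) Ao (Real.arctan_nonneg.2 (by positivity)) (by norm_num)
  have Ar : Real.arctan (ρ / r) ≤ 0.78790 := by
    refine at_le_pos (y := 0.00245) (b := 1) (c := 1) (by positivity) (by positivity) (by positivity) hρ
      (by linarith) (by norm_num) (by norm_num) ?_ (by norm_num)
    nlinarith
  have Br : r ^ 2 * Real.arctan (ρ / r) ≤ 0.1687887 * 0.78790 :=
    mul_le_mul (by linarith) Ar (Real.arctan_nonneg.2 (by positivity)) (by norm_num)
  have hl : 0.412789 ≤ ρ := by
    refine le_of_sq_le_sq ?_ hρ.le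
    refine le_of_mul_le_mul_right ?_ (show 0 < 1 + 1 + r by positivity)
    rw [e]; nlinarith
  have hs : (1 + 1 + r) * 0.412789 ≤ (1 + 1 + r) * ρ := mul_le_mul_of_nonneg_left hl (by positivity)
  linarith

theorem dens_orr (h : RS r s) (hρ : 0 < ρ) (e : ρ ^ 2 * (1 + r + r) = 1 * r * r) :
    1 ^ 2 * Real.arctan (ρ / 1) + r ^ 2 * Real.arctan (ρ / r) + r ^ 2 * Real.arctan (ρ / r)
      ≤ 0.946 * ((1 + r + r) * ρ) := by
  obtain ⟨p1, p2, p3, p4, p5, p6, p7, p8⟩ := h.prods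
  obtain ⟨q1, q2, q3, q4, q5⟩ := h
  have Ao : Real.arctan (ρ / 1) ≤ 0.29557 := by
    refine at_le_small (q := 0.30444) (b := r) (c := r) (by positivity) (by positivity) (by positivity) hρ
      (by linarith) (by norm_num) ?_ (by norm_num)
    nlinarith
  have Bo : 1 ^ 2 * Real.arctan (ρ / 1) ≤ 1 * 0.29557 :=
    mul_le_mul (by linarith) Ao (Real.arctan_nonneg.2 (by positivity)) (by norm_num)
  have Ar : Real.arctan (ρ / r) ≤ 0.63776 := by
    refine at_le_neg (y := 0.14878) (b := 1) (c := r) (by positivity) (by positivity) (by positivity) hρ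
      (by linarith) (by norm_num) (by norm_num) ?_ (by norm_num)
    nlinarith
  have Br : r ^ 2 * Real.arctan (ρ / r) ≤ 0.1687887 * 0.63776 :=
    mul_le_mul (by linarith) Ar (Real.arctan_nonneg.2 (by positivity)) (by norm_num)
  have hl : 0.304376 ≤ ρ := by
    refine le_of_sq_le_sq ?_ hρ.le
    refine le_of_mul_le_mul_right ?_ (show 0 < 1 + r + r by positivity)
    rw [e]; nlinarith
  have hs : (1 + r + r) * 0.304376 ≤ (1 + r + r) * ρ := mul_le_mul_of_nonneg_left hl (by positivity)
  linarith

theorem dens_ors (h : RS r s) (hρ : 0 < ρ) (e : ρ ^ 2 * (1 + r + s) = 1 * r * s) :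
    1 ^ 2 * Real.arctan (ρ / 1) + r ^ 2 * Real.arctan (ρ / r) + s ^ 2 * Real.arctan (ρ / s)
      ≤ 0.946 * ((1 + r + s) * ρ) := by
  obtain ⟨p1, p2, p3, p4, p5, p6, p7, p8⟩ := h.prods
  obtain ⟨q1, q2, q3, q4, q5⟩ := h
  have Ao : Real.arctan (ρ / 1) ≤ 0.19701 := by
    refine at_le_small (q := 0.19959) (b := r) (c := s) (by positivity) (by positivity) (by positivity) hρ
      (by linarith) (by norm_num) ?_ (by norm_num)
    nlinarith
  have Bo : 1 ^ 2 * Real.arctan (ρ / 1) ≤ 1 * 0.19701 :=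
    mul_le_mul (by linarith) Ao (Real.arctan_nonneg.2 (by positivity)) (by norm_num)
  have Ar : Real.arctan (ρ / r) ≤ 0.45295 := by
    refine at_le_small (q := 0.48573) (b := 1) (c := s) (by positivity) (by positivity) (by positivity) hρ
      (by linarith) (by norm_num) ?_ (by norm_num)
    nlinarith
  have Br : r ^ 2 * Real.arctan (ρ / r) ≤ 0.1687887 * 0.45295 :=
    mul_le_mul (by linarith) Ar (Real.arctan_nonneg.2 (by positivity)) (by norm_num)
  have As : Real.arctan (ρ / s) ≤ 0.92182 := by
    refine at_le_pos (y := 0.13722) (b := 1) (c := r) (by positivity) (by positivity) (by positivity) hρ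
      (by linarith) (by norm_num) (by norm_num) ?_ (by norm_num)
    nlinarith
  have Bs : s ^ 2 * Real.arctan (ρ / s) ≤ 0.02292136 * 0.92182 :=
    mul_le_mul (by linarith) As (Real.arctan_nonneg.2 (by positivity)) (by norm_num)
  have hl : 0.199525 ≤ ρ := by
    refine le_of_sq_le_sq ?_ hρ.le
    refine le_of_mul_le_mul_right ?_ (show 0 < 1 + r + s by positivity)
    rw [e]; nlinarith
  have hs : (1 + r + s) * 0.199525 ≤ (1 + r + s) * ρ := mul_le_mul_of_nonneg_left hl (by positivity)
  linarith

theorem dens_rrs (h : RS r s) (hρ : 0 < ρ) (e : ρ ^ 2 * (r + r + s) = r * r * s) :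
    r ^ 2 * Real.arctan (ρ / r) + r ^ 2 * Real.arctan (ρ / r) + s ^ 2 * Real.arctan (ρ / s)
      ≤ 0.946 * ((r + r + s) * ρ) := by
  obtain ⟨p1, p2, p3, p4, p5, p6, p7, p8⟩ := h.prods
  obtain ⟨q1, q2, q3, q4, q5⟩ := h
  have Ar : Real.arctan (ρ / r) ≤ 0.37596 := by
    refine at_le_small (q := 0.39450) (b := r) (c := s) (by positivity) (by positivity) (by positivity) hρ
      (by linarith) (by norm_num) ?_ (by norm_num)
    nlinarith
  have Br : r ^ 2 * Real.arctan (ρ / r) ≤ 0.1687887 * 0.37596 :=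
    mul_le_mul (by linarith) Ar (Real.arctan_nonneg.2 (by positivity)) (by norm_num)
  have As : Real.arctan (ρ / s) ≤ 0.81948 := by
    refine at_le_pos (y := 0.03404) (b := r) (c := r) (by positivity) (by positivity) (by positivity) hρ
      (by linarith) (by norm_num) (by norm_num) ?_ (by norm_num)
    nlinarith
  have Bs : s ^ 2 * Real.arctan (ρ / s) ≤ 0.02292136 * 0.81948 :=
    mul_le_mul (by linarith) As (Real.arctan_nonneg.2 (by positivity)) (by norm_num)
  have hl : 0.162044 ≤ ρ := by
    refine le_of_sq_le_sq ?_ hρ.le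
    refine le_of_mul_le_mul_right ?_ (show 0 < r + r + s by positivity)
    rw [e]; nlinarith
  have hs : (r + r + s) * 0.162044 ≤ (r + r + s) * ρ := mul_le_mul_of_nonneg_left hl (by positivity)
  linarith

theorem dens_rss (h : RS r s) (hρ : 0 < ρ) (e : ρ ^ 2 * (r + s + s) = r * s * s) :
    r ^ 2 * Real.arctan (ρ / r) + s ^ 2 * Real.arctan (ρ / s) + s ^ 2 * Real.arctan (ρ / s)
      ≤ 0.946 * ((r + s + s) * ρ) := by
  obtain ⟨p1, p2, p3, p4, p5, p6, p7, p8⟩ := h.prods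
  obtain ⟨q1, q2, q3, q4, q5⟩ := h
  have Ar : Real.arctan (ρ / r) ≤ 0.27272 := by
    refine at_le_small (q := 0.27966) (b := s) (c := s) (by positivity) (by positivity) (by positivity) hρ
      (by linarith) (by norm_num) ?_ (by norm_num)
    nlinarith
  have Br : r ^ 2 * Real.arctan (ρ / r) ≤ 0.1687887 * 0.27272 :=
    mul_le_mul (by linarith) Ar (Real.arctan_nonneg.2 (by positivity)) (by norm_num)
  have As : Real.arctan (ρ / s) ≤ 0.64918 := by
    refine at_le_neg (y := 0.13712) (b := r) (c := s) (by positivity) (by positivity) (by positivity) hρ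
      (by linarith) (by norm_num) (by norm_num) ?_ (by norm_num)
    nlinarith
  have Bs : s ^ 2 * Real.arctan (ρ / s) ≤ 0.02292136 * 0.64918 :=
    mul_le_mul (by linarith) As (Real.arctan_nonneg.2 (by positivity)) (by norm_num)
  have hl : 0.114866 ≤ ρ := by
    refine le_of_sq_le_sq ?_ hρ.le
    refine le_of_mul_le_mul_right ?_ (show 0 < r + s + s by positivity)
    rw [e]; nlinarith
  have hs : (r + s + s) * 0.114866 ≤ (r + s + s) * ρ := mul_le_mul_of_nonneg_left hl (by positivity)
  linarith

theorem dens_eq {a : ℝ} (ha : 0 < a) (hρ : 0 < ρ) (e : ρ ^ 2 * (a + a + a) = a * a * a) :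
    a ^ 2 * Real.arctan (ρ / a) + a ^ 2 * Real.arctan (ρ / a) + a ^ 2 * Real.arctan (ρ / a)
      ≤ 0.946 * ((a + a + a) * ρ) := by
  have A : Real.arctan (ρ / a) ≤ 0.5237 := by
    refine at_le_neg (y := 0.26790) (b := a) (c := a) ha ha ha hρ e (by norm_num) (by norm_num) ?_ (by norm_num)
    nlinarith
  have B := le_ratio (q := 0.577) ha ha ha hρ e (by nlinarith)
  rw [le_div_iff₀ ha] at B
  nlinarith [mul_le_mul_of_nonneg_left A (sq_nonneg a), mul_le_mul_of_nonneg_left B ha.le]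

end

open Metric Set MeasureTheory

section
variable {r s : ℝ} {P : Set Disk}

/-- Lower and upper bounds for the half-angles at a small disk, in units of `10⁻⁵`. -/
def angLo : Fin 6 → ℕ := ![105209, 92162, 71936, 81928, 64898, 52350]
def angHi : Fin 6 → ℕ := ![105229, 92182, 71956, 81948, 64918, 52370]

theorem gp_of_radii (h : RS r s) (hP : IsCompactPacking P) (hr : RadiiIn P {1, r, s}) : GP P s where
  pack := hP.1
  pos := h.prods.1
  lo d hd := by
    obtain ⟨a, b, c, e, -⟩ := h
    have := hr d hd
    simp only [mem_insert_iff, mem_singleton_iff] at this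
    rcases this with h | h | h <;> rw [h] <;> linarith
  hi d hd := by
    obtain ⟨a, b, c, e, -⟩ := h
    have := hr d hd
    simp only [mem_insert_iff, mem_singleton_iff] at this
    rcases this with h | h | h <;> rw [h] <;> linarith

theorem GTri.inr_eq {d₁ d₂ d₃ : Disk} (h : GTri P d₁ d₂ d₃) :
    0 < inr d₁ d₂ d₃ ∧ inr d₁ d₂ d₃ ^ 2 * (d₁.radius + d₂.radius + d₃.radius)
      = d₁.radius * d₂.radius * d₃.radius := ⟨h.tri.inr_pos, h.tri.frame.1⟩

theorem angle_type (h : RS r s) (hr : RadiiIn P {1, r, s}) {d₁ d₂ d₃ : Disk} (ht : GTri P d₁ d₂ d₃)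
    (h1 : d₁.radius = s) :
    ∃ k : Fin 6, (angLo k : ℝ) ≤ 100000 * Real.arctan (inr d₁ d₂ d₃ / d₁.radius) ∧
      100000 * Real.arctan (inr d₁ d₂ d₃ / d₁.radius) ≤ angHi k ∧
      ((d₂.radius = 1 ∧ d₃.radius = 1) ∨ (d₂.radius = 1 ∧ d₃.radius = s) ∨
        (d₂.radius = s ∧ d₃.radius = 1) → k = 0 ∨ k = 2) := by
  obtain ⟨hp, he⟩ := ht.inr_eq
  have h2 := hr _ ht.m2
  have h3 := hr _ ht.m3
  simp only [mem_insert_iff, mem_singleton_iff] at h2 h3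
  have hsr : ¬ s = r ∧ ¬ r = s ∧ ¬ r = 1 ∧ ¬ s = 1 := by
    obtain ⟨a, b, c, e, -⟩ := h
    refine ⟨?_, ?_, ?_, ?_⟩ <;> intro h <;> linarith
  obtain ⟨n1, n2, n3, n4⟩ := hsr
  rw [h1] at he ⊢
  rcases h2 with h2 | h2 | h2 <;> rcases h3 with h3 | h3 | h3 <;> rw [h2, h3] at he <;>
    simp only [h2, h3]
  · have := ang_oo h hp he
    refine ⟨0, ?_, ?_, ?_⟩ <;> simp [angLo, angHi] <;> linarith
  · have := ang_or h hp he
    refine ⟨1, ?_, ?_, ?_⟩ <;> simp [angLo, angHi, *] <;> linarith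
  · have := ang_os h hp he
    refine ⟨2, ?_, ?_, ?_⟩ <;> simp [angLo, angHi] <;> linarith
  · have := ang_or h hp (by linarith)
    refine ⟨1, ?_, ?_, ?_⟩ <;> simp [angLo, angHi, *] <;> linarith
  · have := ang_rr h hp he
    refine ⟨3, ?_, ?_, ?_⟩ <;> simp [angLo, angHi, *] <;> linarith
  · have := ang_rs h hp he
    refine ⟨4, ?_, ?_, ?_⟩ <;> simp [angLo, angHi, *] <;> linarith
  · have := ang_os h hp (by linarith)
    refine ⟨2, ?_, ?_, ?_⟩ <;> simp [angLo, angHi] <;> linarith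
  · have := ang_rs h hp (by linarith)
    refine ⟨4, ?_, ?_, ?_⟩ <;> simp [angLo, angHi, *] <;> linarith
  · have := ang_ss h hp he
    refine ⟨5, ?_, ?_, ?_⟩ <;> simp [angLo, angHi, *] <;> linarith

theorem no_bad (h : RS r s) (hP : IsCompactPacking P) (hr : RadiiIn P {1, r, s})
    {d₁ d₂ d₃ : Disk} (ht : GTri P d₁ d₂ d₃) (h1 : d₁.radius = s) :
    ¬ ((d₂.radius = 1 ∧ d₃.radius = 1) ∨ (d₂.radius = 1 ∧ d₃.radius = s) ∨
        (d₂.radius = s ∧ d₃.radius = 1)) := by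
  intro hbad
  obtain ⟨J, hJ, hsum⟩ := (gp_of_radii h hP hr).angle_sum hP ht.m1
  have key : ∀ t : Disk × Disk, ∃ k : Fin 6, t ∈ J →
      (angLo k : ℝ) ≤ 100000 * Real.arctan (inr d₁ t.1 t.2 / d₁.radius) ∧
      100000 * Real.arctan (inr d₁ t.1 t.2 / d₁.radius) ≤ angHi k ∧
      ((t.1.radius = 1 ∧ t.2.radius = 1) ∨ (t.1.radius = 1 ∧ t.2.radius = s) ∨
        (t.1.radius = s ∧ t.2.radius = 1) → k = 0 ∨ k = 2) := by
    intro t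
    by_cases htJ : t ∈ J
    · obtain ⟨k, hk⟩ := angle_type h hr ((hJ t).1 htJ) h1
      exact ⟨k, fun _ => hk⟩
    · exact ⟨0, fun h => absurd h htJ⟩
  choose τ hτ using key
  have hlo : ((∑ t ∈ J, angLo (τ t) : ℕ) : ℝ) ≤ 100000 * Real.pi := by
    rw [← hsum, Finset.mul_sum]; push_cast
    exact Finset.sum_le_sum fun t ht => (hτ t ht).1
  have hhi : 100000 * Real.pi ≤ ((∑ t ∈ J, angHi (τ t) : ℕ) : ℝ) := by
    rw [← hsum, Finset.mul_sum]; push_cast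
    exact Finset.sum_le_sum fun t ht => (hτ t ht).2.1
  have hlo' : ∑ t ∈ J, angLo (τ t) ≤ 314160 := by
    have := Real.pi_lt_d6
    have : ((∑ t ∈ J, angLo (τ t) : ℕ) : ℝ) ≤ ((314160 : ℕ) : ℝ) := by push_cast at *; linarith
    exact_mod_cast this
  have hhi' : 314159 ≤ ∑ t ∈ J, angHi (τ t) := by
    have := Real.pi_gt_d6
    have : ((314159 : ℕ) : ℝ) ≤ ((∑ t ∈ J, angHi (τ t) : ℕ) : ℝ) := by push_cast at *; linarith
    exact_mod_cast this
  have hf : ∀ f : Fin 6 → ℕ, ∑ t ∈ J, f (τ t) = ∑ k, f k * (J.filter fun t => τ t = k).card := by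
    intro f
    rw [← Finset.sum_fiberwise J τ]
    refine Finset.sum_congr rfl fun k _ => ?_
    rw [Finset.sum_congr rfl (g := fun _ => f k) (by intro t ht; rw [(Finset.mem_filter.1 ht).2])]
    rw [Finset.sum_const, smul_eq_mul, mul_comm]
  rw [hf, Fin.sum_univ_six] at hlo' hhi'
  have hmem : (d₂, d₃) ∈ J := (hJ (d₂, d₃)).2 ht
  have hk := (hτ (d₂, d₃) hmem).2.2 hbad
  refine count_nat _ _ _ _ _ _ ?_ hlo' hhi'
  rcases hk with hk | hk
  · have : 0 < (J.filter fun t => τ t = 0).card :=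
      Finset.card_pos.2 ⟨_, Finset.mem_filter.2 ⟨hmem, hk⟩⟩
    omega
  · have : 0 < (J.filter fun t => τ t = 2).card :=
      Finset.card_pos.2 ⟨_, Finset.mem_filter.2 ⟨hmem, hk⟩⟩
    omega

theorem compact_density_le (h : RS r s) (hP : IsCompactPacking P) (hr : RadiiIn P {1, r, s}) :
    density P ≤ 0.947 := by
  refine (gp_of_radii h hP hr).density_le hP (K := 0.946) (by norm_num) ?_ (by norm_num)
  intro d₁ d₂ d₃ ht
  obtain ⟨hp, he⟩ := ht.inr_eq
  have b1 := no_bad h hP hr ht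
  have b2 := no_bad h hP hr ht.rot
  have b3 := no_bad h hP hr ht.rot.rot
  have h1 := hr _ ht.m1
  have h2 := hr _ ht.m2
  have h3 := hr _ ht.m3
  have hs := h.prods.1
  have hr' := h.prods.2.1
  simp only [mem_insert_iff, mem_singleton_iff] at h1 h2 h3
  rcases h1 with h1 | h1 | h1 <;> rcases h2 with h2 | h2 | h2 <;> rcases h3 with h3 | h3 | h3 <;>
    rw [h1, h2, h3] at he ⊢ <;>
    first
    | (refine absurd ?_ (b1 h1); simp [h1, h2, h3]; done)
    | (refine absurd ?_ (b2 h2); simp [h1, h2, h3]; done)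
    | (refine absurd ?_ (b3 h3); simp [h1, h2, h3]; done)
    | (refine Eq.trans_le ?_ ((dens_eq one_pos hp ?_).trans (le_of_eq ?_)) <;> first | ring1 | linarith)
    | (refine Eq.trans_le ?_ ((dens_eq hr' hp ?_).trans (le_of_eq ?_)) <;> first | ring1 | linarith)
    | (refine Eq.trans_le ?_ ((dens_eq hs hp ?_).trans (le_of_eq ?_)) <;> first | ring1 | linarith)
    | (refine Eq.trans_le ?_ ((dens_oor h hp ?_).trans (le_of_eq ?_)) <;> first | ring1 | linarith)
    | (refine Eq.trans_le ?_ ((dens_orr h hp ?_).trans (le_of_eq ?_)) <;> first | ring1 | linarith)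
    | (refine Eq.trans_le ?_ ((dens_ors h hp ?_).trans (le_of_eq ?_)) <;> first | ring1 | linarith)
    | (refine Eq.trans_le ?_ ((dens_rrs h hp ?_).trans (le_of_eq ?_)) <;> first | ring1 | linarith)
    | (refine Eq.trans_le ?_ ((dens_rss h hp ?_).trans (le_of_eq ?_)) <;> first | ring1 | linarith)

end

open Metric Set MeasureTheory

section
variable {s : ℝ}

/-- Radius of the disk in row `j` of the dense packing. -/
noncomputable def qrad (s : ℝ) (j : ℤ) : ℝ := if j % 3 = 0 then 1 else s

theorem qrad_pos (hs : 0 < s) (j : ℤ) : 0 < qrad s j := by unfold qrad; split_ifs <;> linarith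

/-- The disks of the dense packing: unit disks on a hexagonal lattice, with a small disk in
each hole. -/
noncomputable def qdisk (hs : 0 < s) (i j : ℤ) : Disk := ⟨!₂[(i : ℝ), j / √3], qrad s j, qrad_pos hs j⟩

def Qp (hs : 0 < s) : Set Disk := {d | ∃ i j : ℤ, (i + j) % 2 = 0 ∧ d = qdisk hs i j}

theorem q_dist (hs : 0 < s) (h1 : s ≤ 0.152) {i j k l : ℤ} (h : (i + j) % 2 = 0) (h' : (k + l) % 2 = 0)
    (hne : ¬ (i = k ∧ j = l)) :
    qrad s j + qrad s l ≤ dist (qdisk hs i j).center (qdisk hs k l).center := by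
  have p1 := qrad_pos hs j
  have p2 := qrad_pos hs l
  rw [le_dist_iff _ _ (by positivity)]
  have e : ((qdisk hs i j).center 0 - (qdisk hs k l).center 0) ^ 2
      + ((qdisk hs i j).center 1 - (qdisk hs k l).center 1) ^ 2
      = ((i - k : ℤ) : ℝ) ^ 2 + ((j - l : ℤ) : ℝ) ^ 2 / 3 := by
    have h3 : (√3) ^ 2 = (3 : ℝ) := Real.sq_sqrt (by norm_num)
    have : (√3 : ℝ) ≠ 0 := by positivity
    simp only [qdisk, PiLp.toLp_apply, Matrix.cons_val_zero, Matrix.cons_val_one]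
    push_cast
    rw [← sub_div, div_pow, h3]
  rw [e]
  have hcast : ∀ z : ℤ, ∀ m : ℤ, m ≤ z ^ 2 → (m : ℝ) ≤ (z : ℝ) ^ 2 := fun z m h => by exact_mod_cast h
  have hq : ∀ z m : ℤ, 0 ≤ m → (m ≤ z ∨ z ≤ -m) → m ^ 2 ≤ z ^ 2 := by
    intro z m hm h
    rcases h with h | h <;> nlinarith
  have nn : ∀ z : ℤ, (0 : ℝ) ≤ (z : ℝ) ^ 2 := fun z => sq_nonneg _
  -- general lower bound 4/3
  have h43 : (4 / 3 : ℝ) ≤ ((i - k : ℤ) : ℝ) ^ 2 + ((j - l : ℤ) : ℝ) ^ 2 / 3 := by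
    have n1 := nn (i - k)
    have n2 := nn (j - l)
    by_cases c : j - l = 0
    · have := hcast _ _ (hq (i - k) 2 (by norm_num) (by omega))
      push_cast at *; linarith
    by_cases c2 : 2 ≤ j - l ∨ j - l ≤ -2
    · have := hcast _ _ (hq (j - l) 2 (by norm_num) c2)
      push_cast at *; linarith
    · have a := hcast _ _ (hq (i - k) 1 (by norm_num) (by omega))
      have b := hcast _ _ (hq (j - l) 1 (by norm_num) (by omega))
      push_cast at *; linarith
  unfold qrad
  split_ifs with a b b
  · have n1 := nn (i - k)
    have n2 := nn (j - l)
    by_cases c : j - l = 0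
    · have := hcast _ _ (hq (i - k) 2 (by norm_num) (by omega))
      push_cast at *; linarith
    by_cases c2 : 6 ≤ j - l ∨ j - l ≤ -6
    · have := hcast _ _ (hq (j - l) 6 (by norm_num) c2)
      push_cast at *; linarith
    · have a := hcast _ _ (hq (i - k) 1 (by norm_num) (by omega))
      have b := hcast _ _ (hq (j - l) 3 (by norm_num) (by omega))
      push_cast at *; linarith
  · nlinarith
  · nlinarith
  · nlinarith

theorem q_packing (hs : 0 < s) (h1 : s ≤ 0.152) : IsPacking (Qp hs) := by
  apply isPacking_of_dist
  rintro d ⟨i, j, h, rfl⟩ d' ⟨k, l, h', rfl⟩ hne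
  refine q_dist hs h1 h h' ?_
  rintro ⟨rfl, rfl⟩
  exact hne rfl

theorem q_radii (hs : 0 < s) (r : ℝ) : RadiiIn (Qp hs) {1, r, s} := by
  rintro d ⟨i, j, h, rfl⟩
  simp only [qdisk, qrad]
  split_ifs <;> simp

theorem q_volume (hs : 0 < s) (h1 : s ≤ 0.152) (M N : ℕ) {R : ℝ} (hM : 2 * M + 1 ≤ R)
    (hN : 6 * N / √3 + 1 ≤ R) :
    4 * M * N * ((2 + 4 * s ^ 2) * Real.pi) ≤ (volume (packingUnion (Qp hs) ∩ square R)).toReal := by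
  let I : Finset ((ℤ × ℤ) × Fin 6) := (Finset.Ico (-M : ℤ) M ×ˢ Finset.Ico (-N : ℤ) N) ×ˢ Finset.univ
  let fi : ((ℤ × ℤ) × Fin 6) → ℤ := fun t => 2 * t.1.1 + (t.2.val : ℤ) % 2
  let fj : ((ℤ × ℤ) × Fin 6) → ℤ := fun t => 6 * t.1.2 + (t.2.val : ℤ)
  let B : ((ℤ × ℤ) × Fin 6) → Set Plane := fun t => ball (qdisk hs (fi t) (fj t)).center (qrad s (fj t))
  have hpar : ∀ t, (fi t + fj t) % 2 = 0 := by intro t; simp only [fi, fj]; omega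
  have hdisj : (I : Set _).PairwiseDisjoint B := by
    rintro ⟨⟨m, n⟩, c⟩ - ⟨⟨m', n'⟩, c'⟩ - hne
    refine (disjoint_ball_ball_iff (qrad_pos hs _) (qrad_pos hs _)).2
      (q_dist hs h1 (hpar _) (hpar _) ?_)
    rintro ⟨e1, e2⟩
    apply hne
    simp only [fi, fj] at e1 e2
    have := c.2
    have := c'.2
    have hc : c = c' := by apply Fin.ext; omega
    subst hc
    have : m = m' := by omega
    have : n = n' := by omega
    subst_vars; rfl
  have hvol : volume (⋃ t ∈ I, B t) = ENNReal.ofReal (4 * M * N * ((2 + 4 * s ^ 2) * Real.pi)) := by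
    rw [measure_biUnion_finset hdisj (fun _ _ => measurableSet_ball)]
    have hb : ∀ t, volume (B t) = ENNReal.ofReal (qrad s (fj t) ^ 2 * Real.pi) := by
      intro t
      simp only [B]
      rw [EuclideanSpace.volume_ball_fin_two, ENNReal.ofReal_mul (sq_nonneg _),
        ENNReal.ofReal_pow (qrad_pos hs _).le]
    simp only [hb]
    rw [← ENNReal.ofReal_sum_of_nonneg (fun t _ => by positivity)]
    congr 1
    simp only [I]
    rw [Finset.sum_product]
    have : ∀ x : ℤ × ℤ, ∑ c : Fin 6, qrad s (fj (x, c)) ^ 2 * Real.pi = (2 + 4 * s ^ 2) * Real.pi := by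
      intro x
      have q0 : qrad s (6 * x.2) = 1 := by unfold qrad; rw [if_pos (by omega)]
      have q1 : qrad s (6 * x.2 + 1) = s := by unfold qrad; rw [if_neg (by omega)]
      have q2 : qrad s (6 * x.2 + 2) = s := by unfold qrad; rw [if_neg (by omega)]
      have q3 : qrad s (6 * x.2 + 3) = 1 := by unfold qrad; rw [if_pos (by omega)]
      have q4 : qrad s (6 * x.2 + 4) = s := by unfold qrad; rw [if_neg (by omega)]
      have q5 : qrad s (6 * x.2 + 5) = s := by unfold qrad; rw [if_neg (by omega)]
      simp [Fin.sum_univ_six, fj, q0, q1, q2, q3, q4, q5]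
      ring
    simp only [this]
    rw [Finset.sum_const, Finset.card_product]
    simp
    left
    rw [show ((M : ℤ) + M).toNat = 2 * M by omega, show ((N : ℤ) + N).toNat = 2 * N by omega]
    push_cast; ring
  have h3 : 0 < √(3 : ℝ) := by positivity
  have hsub : (⋃ t ∈ I, B t) ⊆ packingUnion (Qp hs) ∩ square R := by
    refine iUnion₂_subset ?_
    rintro ⟨⟨m, n⟩, c⟩ ht x hx
    simp only [I, Finset.mem_product, Finset.mem_Ico, Finset.mem_univ, and_true] at ht
    refine ⟨mem_iUnion₂.2 ⟨qdisk hs _ _, ⟨_, _, hpar ((m, n), c), rfl⟩, ball_subset_closedBall hx⟩, ?_⟩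
    have hr1 : ∀ j, qrad s j ≤ 1 := by intro j; unfold qrad; split_ifs <;> linarith
    have hd : dist x (qdisk hs (fi ((m, n), c)) (fj ((m, n), c))).center ≤ 1 :=
      (mem_ball.1 hx).le.trans (hr1 _)
    rw [dist_le_iff _ _ zero_le_one] at hd
    simp only [qdisk, PiLp.toLp_apply, Matrix.cons_val_zero, Matrix.cons_val_one] at hd
    have a1 := abs_le_of_sq_le_sq (a := x 0 - (fi ((m, n), c) : ℝ)) (b := 1) (by nlinarith [sq_nonneg (x 1 - (fj ((m, n), c) : ℝ) / √3)]) zero_le_one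
    have a2 := abs_le_of_sq_le_sq (a := x 1 - (fj ((m, n), c) : ℝ) / √3) (b := 1) (by nlinarith [sq_nonneg (x 0 - (fi ((m, n), c) : ℝ))]) zero_le_one
    rw [abs_le] at a1 a2
    have hc := c.2
    have b1 : -(2 * M : ℤ) ≤ fi ((m, n), c) ∧ fi ((m, n), c) ≤ 2 * M := by
      simp only [fi]; omega
    have b2 : -(6 * N : ℤ) ≤ fj ((m, n), c) ∧ fj ((m, n), c) ≤ 6 * N := by
      simp only [fj]; omega
    have b1' : -(2 * M : ℝ) ≤ fi ((m, n), c) ∧ (fi ((m, n), c) : ℝ) ≤ 2 * M := by exact_mod_cast b1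
    have b2' : -(6 * N : ℝ) ≤ fj ((m, n), c) ∧ (fj ((m, n), c) : ℝ) ≤ 6 * N := by exact_mod_cast b2
    have c1 : -(6 * N / √3 : ℝ) ≤ (fj ((m, n), c) : ℝ) / √3 := by
      rw [← neg_div]; exact div_le_div_of_nonneg_right b2'.1 h3.le
    have c2 : (fj ((m, n), c) : ℝ) / √3 ≤ 6 * N / √3 := div_le_div_of_nonneg_right b2'.2 h3.le
    constructor
    · rw [abs_le]; constructor <;> linarith
    · rw [abs_le]; constructor <;> linarith
  have hfin : volume (packingUnion (Qp hs) ∩ square R) ≠ ⊤ := by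
    have hR : 0 ≤ R := by
      have : (0 : ℝ) ≤ M := by positivity
      linarith
    refine ((measure_mono inter_subset_right).trans_lt ?_).ne
    rw [square_volume hR]; exact ENNReal.ofReal_lt_top
  rw [← ENNReal.ofReal_le_iff_le_toReal hfin, ← hvol]
  exact measure_mono hsub

theorem q_density (hs : 0 < s) (h0 : 0.151397 ≤ s) (h1 : s ≤ 0.152) : 0.948 ≤ density (Qp hs) := by
  unfold density
  apply Filter.le_limsup_of_frequently_le
  · apply Filter.Eventually.frequently
    filter_upwards [Filter.eventually_ge_atTop 1000000] with R hR
    have h3 : 0 < √(3 : ℝ) := by positivity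
    have h3' : √(3 : ℝ) ≤ 1.7320509 := Real.sqrt_le_iff.2 ⟨by norm_num, by norm_num⟩
    have h3'' : √3 ^ 2 = (3 : ℝ) := Real.sq_sqrt (by norm_num)
    have hM := Nat.floor_le (show 0 ≤ (R - 1) / 2 by linarith)
    have hM' := Nat.lt_floor_add_one ((R - 1) / 2)
    have hN := Nat.floor_le (show 0 ≤ (R - 1) * √3 / 6 by apply div_nonneg (mul_nonneg (by linarith) h3.le); norm_num)
    have hN' := Nat.lt_floor_add_one ((R - 1) * √3 / 6)
    have := q_volume hs h1 ⌊(R - 1) / 2⌋₊ ⌊(R - 1) * √3 / 6⌋₊ (R := R) (by linarith) (by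
      have : 6 * (⌊(R - 1) * √3 / 6⌋₊ : ℝ) / √3 ≤ R - 1 := by
        rw [div_le_iff₀ h3]; linarith
      linarith)
    rw [le_div_iff₀ (by positivity)]
    refine le_trans ?_ this
    have e3 : 1.73205 ≤ √(3 : ℝ) := Real.le_sqrt_of_sq_le (by norm_num)
    have l1 : (R - 5) / 2 ≤ ⌊(R - 1) / 2⌋₊ := by linarith
    have l2 : (R - 5) * √3 / 6 ≤ ⌊(R - 1) * √3 / 6⌋₊ := by nlinarith
    have l3 : 0.49999 * R ≤ ⌊(R - 1) / 2⌋₊ := by linarith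
    have l4 : 0.288673 * R ≤ ⌊(R - 1) * √3 / 6⌋₊ := by nlinarith
    have l5 : (0.49999 * R) * (0.288673 * R) ≤ (⌊(R - 1) / 2⌋₊ : ℝ) * ⌊(R - 1) * √3 / 6⌋₊ :=
      mul_le_mul l3 l4 (by positivity) (by positivity)
    have l6 : 6.5711 ≤ (2 + 4 * s ^ 2) * Real.pi := by
      have := Real.pi_gt_d6
      nlinarith
    have l7 := mul_le_mul l5 l6 (by norm_num) (by positivity)
    nlinarith [sq_nonneg R]
  · refine Filter.isBoundedUnder_of_eventually_le (a := 1) ?_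
    filter_upwards [Filter.eventually_gt_atTop 0] with R hR
    rw [div_le_one (by positivity)]
    refine ENNReal.toReal_le_of_le_ofReal (by positivity) ?_
    rw [← square_volume hR.le]
    exact measure_mono inter_subset_right

end

open Metric Set MeasureTheory

/-- No disk of radius `σ` fits in the hole of a triangle with radii `a, b, c`. -/
def Tight (σ a b c : ℝ) : Prop := ∀ p q w : ℝ, 0 ≤ p → 0 ≤ q → 0 ≤ w → 0 < p + q + w →
  p * q * (a + b) ^ 2 + q * w * (b + c) ^ 2 + w * p * (c + a) ^ 2
    < (p + q + w) * (p * (a + σ) ^ 2 + q * (b + σ) ^ 2 + w * (c + σ) ^ 2)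

theorem Tight.rot {σ a b c : ℝ} (h : Tight σ a b c) : Tight σ b c a := by
  intro p q w hp hq hw hs
  have := h w p q hw hp hq (by linarith)
  linarith

theorem Tight.swap {σ a b c : ℝ} (h : Tight σ a b c) : Tight σ a c b := by
  intro p q w hp hq hw hs
  have := h p w q hp hw hq (by linarith)
  linarith

section
variable {d₁ d₂ d₃ : Disk} {σ : ℝ}

theorem Tri.tight_lt (h : Tri d₁ d₂ d₃) (hσ : 0 < σ) (ht : Tight σ d₁.radius d₂.radius d₃.radius) {x : Plane}
    (hx : x ∈ tri d₁ d₂ d₃) (h1 : d₁.radius + σ ≤ dist x d₁.center)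
    (h2 : d₂.radius + σ ≤ dist x d₂.center) (h3 : d₃.radius + σ ≤ dist x d₃.center) : False := by
  have r1 := d₁.radius_pos
  have r2 := d₂.radius_pos
  have r3 := d₃.radius_pos
  rw [le_dist_iff _ _ (by positivity)] at h1 h2 h3
  obtain ⟨hw, hp, hq⟩ := hx
  have hs := cr3_sum d₁.center d₂.center d₃.center x
  have hpos := h.pos
  rw [← hs] at hpos
  have e0 : cr3 d₂.center d₃.center x * (x 0 - d₁.center 0) + cr3 d₃.center d₁.center x * (x 0 - d₂.center 0)
    + cr3 d₁.center d₂.center x * (x 0 - d₃.center 0) = 0 := by simp only [cr3]; ring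
  have e1 : cr3 d₂.center d₃.center x * (x 1 - d₁.center 1) + cr3 d₃.center d₁.center x * (x 1 - d₂.center 1)
    + cr3 d₁.center d₂.center x * (x 1 - d₃.center 1) = 0 := by simp only [cr3]; ring
  have t12 := tangent_sq h.t12
  have t23 := tangent_sq h.t23
  have t31 := tangent_sq h.t31
  have key := ht _ _ _ hp hq hw (by linarith)
  generalize cr3 d₂.center d₃.center x = p at *
  generalize cr3 d₃.center d₁.center x = q at *
  generalize cr3 d₁.center d₂.center x = w at *
  rw [← t12, ← t23, ← t31] at key
  have l1 := mul_le_mul_of_nonneg_left h1 hp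
  have l2 := mul_le_mul_of_nonneg_left h2 hq
  have l3 := mul_le_mul_of_nonneg_left h3 hw
  have l4 := mul_le_mul_of_nonneg_left (add_le_add (add_le_add l1 l2) l3)
    (show 0 ≤ p + q + w by linarith)
  have l5 := lt_of_lt_of_le key l4
  have : (p * (x 0 - d₁.center 0) + q * (x 0 - d₂.center 0) + w * (x 0 - d₃.center 0)) ^ 2
    + (p * (x 1 - d₁.center 1) + q * (x 1 - d₂.center 1) + w * (x 1 - d₃.center 1)) ^ 2 = 0 := by
    rw [e0, e1]; ring
  linarith

/-- A point on an edge is not in a disk that does not overlap the two end disks. -/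
theorem Tri.edge_notMem (h : Tri d₁ d₂ d₃) {d : Disk} (h1 : d.radius + d₁.radius ≤ dist d.center d₁.center)
    (h2 : d.radius + d₂.radius ≤ dist d.center d₂.center) {x : Plane} (hx : x ∈ tri d₁ d₂ d₃)
    (h0 : cr3 d₁.center d₂.center x = 0) : x ∉ d.set := by
  have r1 := d₁.radius_pos
  have r2 := d₂.radius_pos
  have r3 := d.radius_pos
  rw [le_dist_iff _ _ (by positivity)] at h1 h2
  obtain ⟨-, hp, hq⟩ := hx
  have hs := cr3_sum d₁.center d₂.center d₃.center x
  have hpos := h.pos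
  rw [← hs] at hpos
  have e0 : cr3 d₂.center d₃.center x * (x 0 - d₁.center 0) + cr3 d₃.center d₁.center x * (x 0 - d₂.center 0)
    + cr3 d₁.center d₂.center x * (x 0 - d₃.center 0) = 0 := by simp only [cr3]; ring
  have e1 : cr3 d₂.center d₃.center x * (x 1 - d₁.center 1) + cr3 d₃.center d₁.center x * (x 1 - d₂.center 1)
    + cr3 d₁.center d₂.center x * (x 1 - d₃.center 1) = 0 := by simp only [cr3]; ring
  have t12 := tangent_sq h.t12
  rw [h0] at e0 e1 hpos
  generalize cr3 d₂.center d₃.center x = p at *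
  generalize cr3 d₃.center d₁.center x = q at *
  rw [notMem_disk_iff]
  have hpq : 0 < p + q := by linarith
  generalize x 0 = x0 at *
  generalize x 1 = x1 at *
  generalize d.center 0 = c0 at *
  generalize d.center 1 = c1 at *
  generalize d₁.center 0 = a0 at *
  generalize d₁.center 1 = a1 at *
  generalize d₂.center 0 = b0 at *
  generalize d₂.center 1 = b1 at *
  generalize d.radius = R at *
  generalize d₁.radius = a at *
  generalize d₂.radius = b at *
  have f0 : (p + q) * (x0 - c0) = p * (a0 - c0) + q * (b0 - c0) := by linarith
  have f1 : (p + q) * (x1 - c1) = p * (a1 - c1) + q * (b1 - c1) := by linarith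
  have l1 := mul_le_mul_of_nonneg_left h1 (mul_nonneg hpq.le hp)
  have l2 := mul_le_mul_of_nonneg_left h2 (mul_nonneg hpq.le hq)
  have e : (p + q) ^ 2 * ((x0 - c0) ^ 2 + (x1 - c1) ^ 2) =
      (p + q) * p * ((c0 - a0) ^ 2 + (c1 - a1) ^ 2) + (p + q) * q * ((c0 - b0) ^ 2 + (c1 - b1) ^ 2)
      - p * q * (a + b) ^ 2 := by
    have : (p + q) ^ 2 * ((x0 - c0) ^ 2 + (x1 - c1) ^ 2)
      = ((p + q) * (x0 - c0)) ^ 2 + ((p + q) * (x1 - c1)) ^ 2 := by ring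
    rw [this, f0, f1, ← t12]; ring
  refine lt_of_mul_lt_mul_left ?_ (sq_nonneg (p + q))
  rw [e]
  have hpab : 0 < p * a + q * b := by
    rcases hp.lt_or_eq with h | h
    · have := mul_pos h r1
      have := mul_nonneg hq r2.le
      linarith
    · have : 0 < q := by linarith
      have := mul_pos this r2
      have := mul_nonneg hp r1.le
      linarith
  have m1 := mul_pos (mul_pos r3 hpq) hpab
  nlinarith [sq_nonneg (p * a - q * b)]

/-- A point on an edge is covered. -/
theorem Tri.edge_mem (h : Tri d₁ d₂ d₃) {x : Plane} (hx : x ∈ tri d₁ d₂ d₃)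
    (h0 : cr3 d₁.center d₂.center x = 0) : x ∈ d₁.set ∨ x ∈ d₂.set := by
  have r1 := d₁.radius_pos
  have r2 := d₂.radius_pos
  obtain ⟨-, hp, hq⟩ := hx
  have hs := cr3_sum d₁.center d₂.center d₃.center x
  have hpos := h.pos
  rw [← hs] at hpos
  have e0 : cr3 d₂.center d₃.center x * (x 0 - d₁.center 0) + cr3 d₃.center d₁.center x * (x 0 - d₂.center 0)
    + cr3 d₁.center d₂.center x * (x 0 - d₃.center 0) = 0 := by simp only [cr3]; ring
  have e1 : cr3 d₂.center d₃.center x * (x 1 - d₁.center 1) + cr3 d₃.center d₁.center x * (x 1 - d₂.center 1)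
    + cr3 d₁.center d₂.center x * (x 1 - d₃.center 1) = 0 := by simp only [cr3]; ring
  have t12 := tangent_sq h.t12
  rw [h0] at e0 e1 hpos
  rw [mem_disk_iff, mem_disk_iff]
  generalize cr3 d₂.center d₃.center x = p at *
  generalize cr3 d₃.center d₁.center x = q at *
  have hpq : 0 < p + q := by linarith
  generalize x 0 = x0 at *
  generalize x 1 = x1 at *
  generalize d₁.center 0 = a0 at *
  generalize d₁.center 1 = a1 at *
  generalize d₂.center 0 = b0 at *
  generalize d₂.center 1 = b1 at *
  generalize d₁.radius = a at *
  generalize d₂.radius = b at *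
  have e : (p + q) ^ 2 * ((x0 - a0) ^ 2 + (x1 - a1) ^ 2) = (q * (a + b)) ^ 2 := by
    have f0 : (p + q) * (x0 - a0) = q * (b0 - a0) := by linarith
    have f1 : (p + q) * (x1 - a1) = q * (b1 - a1) := by linarith
    have : (p + q) ^ 2 * ((x0 - a0) ^ 2 + (x1 - a1) ^ 2)
      = ((p + q) * (x0 - a0)) ^ 2 + ((p + q) * (x1 - a1)) ^ 2 := by ring
    rw [this, f0, f1, mul_pow, mul_pow, mul_pow, ← t12]; ring
  have e' : (p + q) ^ 2 * ((x0 - b0) ^ 2 + (x1 - b1) ^ 2) = (p * (a + b)) ^ 2 := by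
    have f0 : (p + q) * (x0 - b0) = p * (a0 - b0) := by linarith
    have f1 : (p + q) * (x1 - b1) = p * (a1 - b1) := by linarith
    have : (p + q) ^ 2 * ((x0 - b0) ^ 2 + (x1 - b1) ^ 2)
      = ((p + q) * (x0 - b0)) ^ 2 + ((p + q) * (x1 - b1)) ^ 2 := by ring
    rw [this, f0, f1, mul_pow, mul_pow, mul_pow, ← t12]; ring
  rcases le_total (q * b) (p * a) with hc | hc
  · left
    refine le_of_mul_le_mul_left ?_ (show 0 < (p + q) ^ 2 by positivity)
    rw [e, ← mul_pow]
    have : 0 ≤ q * (a + b) := by positivity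
    apply pow_le_pow_left₀ this
    linarith
  · right
    refine le_of_mul_le_mul_left ?_ (show 0 < (p + q) ^ 2 by positivity)
    rw [e', ← mul_pow]
    have : 0 ≤ p * (a + b) := by positivity
    apply pow_le_pow_left₀ this
    linarith

theorem cr3_lineMap (A B x y : Plane) (t : ℝ) :
    cr3 A B (AffineMap.lineMap x y t) = (1 - t) * cr3 A B x + t * cr3 A B y := by
  simp [cr3, AffineMap.lineMap_apply]; ring

theorem Tri.disjoint (h : Tri d₁ d₂ d₃) {d : Disk} (h1 : d.radius + d₁.radius ≤ dist d.center d₁.center)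
    (h2 : d.radius + d₂.radius ≤ dist d.center d₂.center)
    (h3 : d.radius + d₃.radius ≤ dist d.center d₃.center) (hc : d.center ∉ tri d₁ d₂ d₃)
    {x : Plane} (hx : x ∈ tri d₁ d₂ d₃) : x ∉ d.set := by
  intro hxd
  let γ : ℝ → Plane := AffineMap.lineMap x d.center
  have hγ : Continuous γ := AffineMap.lineMap_continuous
  let g : ℝ → ℝ := fun t => min (cr3 d₁.center d₂.center (γ t))
    (min (cr3 d₂.center d₃.center (γ t)) (cr3 d₃.center d₁.center (γ t)))
  have hg : Continuous g := ((cr3_continuous _ _).comp hγ).min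
    (((cr3_continuous _ _).comp hγ).min ((cr3_continuous _ _).comp hγ))
  have g0 : 0 ≤ g 0 := by simp only [g, γ, AffineMap.lineMap_apply_zero]; exact le_min hx.1 (le_min hx.2.1 hx.2.2)
  have g1 : g 1 ≤ 0 := by
    simp only [g, γ, AffineMap.lineMap_apply_one]
    by_contra hh
    push Not at hh
    rw [lt_min_iff, lt_min_iff] at hh
    exact hc ⟨hh.1.le, hh.2.1.le, hh.2.2.le⟩
  obtain ⟨t, ht, h0⟩ := intermediate_value_Icc' zero_le_one hg.continuousOn ⟨g1, g0⟩
  have hmem : γ t ∈ d.set :=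
    (convex_closedBall d.center d.radius).segment_subset hxd (mem_closedBall_self d.radius_pos.le)
      (by rw [segment_eq_image_lineMap]; exact ⟨t, ht, rfl⟩)
  have hT : γ t ∈ tri d₁ d₂ d₃ := by
    have : 0 ≤ g t := h0.ge
    simp only [g, le_min_iff] at this
    exact this
  have hz : cr3 d₁.center d₂.center (γ t) = 0 ∨ cr3 d₂.center d₃.center (γ t) = 0 ∨
      cr3 d₃.center d₁.center (γ t) = 0 := by
    simp only [g] at h0
    rcases min_choice (cr3 d₁.center d₂.center (γ t))
      (min (cr3 d₂.center d₃.center (γ t)) (cr3 d₃.center d₁.center (γ t))) with e | e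
    · left; rw [← e]; exact h0
    · rw [e] at h0
      rcases min_choice (cr3 d₂.center d₃.center (γ t)) (cr3 d₃.center d₁.center (γ t)) with e | e
      · right; left; rw [← e]; exact h0
      · right; right; rw [← e]; exact h0
  rcases hz with hz | hz | hz
  · exact h.edge_notMem h1 h2 hT hz hmem
  · exact h.rot.edge_notMem h2 h3 (by rw [tri_rot]; exact hT) hz hmem
  · exact h.rot.rot.edge_notMem h3 h1 (by rw [tri_rot, tri_rot]; exact hT) hz hmem

theorem Tri.closure_meets (h : Tri d₁ d₂ d₃) : (closure (hole d₁ d₂ d₃) ∩ d₁.set).Nonempty := by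
  obtain ⟨f1, f2, f3, f4, f5, f6⟩ := h.frame
  have hρ := h.inr_pos
  have r1 := d₁.radius_pos
  have r2 := d₂.radius_pos
  have r3 := d₃.radius_pos
  have c1 : 0 < cr3 d₁.center d₂.center (inc d₁ d₂ d₃) := by
    have : 0 < (d₁.radius + d₂.radius) * inr d₁ d₂ d₃ := by positivity
    unfold cr3; linarith
  have c2 : 0 < cr3 d₃.center d₁.center (inc d₁ d₂ d₃) := by
    have : 0 < (d₁.radius + d₃.radius) * inr d₁ d₂ d₃ := by positivity
    unfold cr3; linarith
  have hne : inc d₁ d₂ d₃ ≠ d₁.center := by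
    intro e; rw [e] at c1; simp [cr3] at c1
  have hdist : 0 < dist (inc d₁ d₂ d₃) d₁.center := dist_pos.2 hne
  set c := d₁.radius / dist (inc d₁ d₂ d₃) d₁.center with hcdef
  have hc : 0 < c := by positivity
  let z : Plane := d₁.center + c • (inc d₁ d₂ d₃ - d₁.center)
  have hz : dist z d₁.center = d₁.radius := by
    simp only [z]
    rw [dist_eq_norm, add_sub_cancel_left, norm_smul, ← dist_eq_norm, Real.norm_of_nonneg hc.le, hcdef]
    field_simp
  have z1 : cr3 d₁.center d₂.center z = c * cr3 d₁.center d₂.center (inc d₁ d₂ d₃) := by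
    simp [cr3, z]; ring
  have z2 : cr3 d₃.center d₁.center z = c * cr3 d₃.center d₁.center (inc d₁ d₂ d₃) := by
    simp [cr3, z]; ring
  have hev := h.out_mem_hole hz (by rw [z1]; positivity) (by rw [z2]; positivity)
  refine ⟨z, ?_, by rw [Disk.set, mem_closedBall, hz]⟩
  have ht : Filter.Tendsto (out d₁.center z) (nhdsWithin 0 (Ioi 0)) (nhds z) := by
    have := (out_continuous d₁.center z).tendsto 0
    rw [show out d₁.center z 0 = z by simp [out]] at this
    exact this.mono_left nhdsWithin_le_nhds
  exact mem_closure_of_tendsto ht hev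

end

section
variable {P : Set Disk} {δ : ℝ}

/-- The plane is tiled by tight triangles of the packing. -/
def Covered (P : Set Disk) (δ : ℝ) : Prop := ∀ x : Plane, ∃ d₁ ∈ P, ∃ d₂ ∈ P, ∃ d₃ ∈ P,
  Tri d₁ d₂ d₃ ∧ Tight δ d₁.radius d₂.radius d₃.radius ∧ x ∈ tri d₁ d₂ d₃

theorem GP.saturated (h : GP P δ) (hcov : Covered P δ) {S : Set ℝ} (hS : ∀ a ∈ S, δ ≤ a) :
    Saturated P S := by
  rintro ⟨d, hd, hdis⟩
  obtain ⟨d₁, m1, d₂, m2, d₃, m3, ht, hti, hx⟩ := hcov d.center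
  have key : ∀ d' ∈ P, d'.radius + δ ≤ dist d.center d'.center := by
    intro d' hd'
    have := hdis d' hd'
    rw [Disk.set, interior_closedBall _ d.radius_pos.ne'] at this
    have := (disjoint_ball_ball_iff d.radius_pos d'.radius_pos).1
      (this.mono_right ball_subset_closedBall)
    have := hS _ hd
    linarith
  exact ht.tight_lt h.pos hti hx (key _ m1) (key _ m2) (key _ m3)

theorem GP.compact (h : GP P δ) (hcov : Covered P δ) : IsCompactPacking P := by
  refine ⟨h.pack, fun x hx => ?_⟩
  obtain ⟨d₁, m1, d₂, m2, d₃, m3, ht, hti, hxT⟩ := hcov x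
  set U := packingUnion P with hU
  have hdU : ∀ d ∈ P, d.set ⊆ U := fun d hd => subset_biUnion_of_mem (u := fun d : Disk => d.set) hd
  have hdis : ∀ d ∈ P, d ≠ d₁ → d ≠ d₂ → d ≠ d₃ → ∀ y ∈ tri d₁ d₂ d₃, y ∉ d.set := by
    intro d hd n1 n2 n3 y hy
    have g1 := h.pack.dist_ge hd m1 n1
    have g2 := h.pack.dist_ge hd m2 n2
    have g3 := h.pack.dist_ge hd m3 n3
    have := h.lo d hd
    refine ht.disjoint g1 g2 g3 (fun hc => ?_) hy
    exact ht.tight_lt h.pos hti hc (by linarith) (by linarith) (by linarith)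
  have hHU : hole d₁ d₂ d₃ ⊆ Uᶜ := by
    rintro y ⟨hy, y1, y2, y3⟩ hyU
    obtain ⟨d, hd, hyd⟩ := mem_iUnion₂.1 hyU
    refine hdis d hd ?_ ?_ ?_ y hy hyd <;> rintro rfl <;> contradiction
  have hxH : x ∈ hole d₁ d₂ d₃ :=
    ⟨hxT, fun h => hx (hdU _ m1 h), fun h => hx (hdU _ m2 h), fun h => hx (hdU _ m3 h)⟩
  set C := connectedComponentIn Uᶜ x with hC
  have hCU : C ⊆ Uᶜ := connectedComponentIn_subset _ _
  have hHC : hole d₁ d₂ d₃ ⊆ C := ht.hole_preconnected.subset_connectedComponentIn hxH hHU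
  have hpos : ∀ y ∈ Uᶜ, y ∈ tri d₁ d₂ d₃ → 0 < cr3 d₁.center d₂.center y ∧
      0 < cr3 d₂.center d₃.center y ∧ 0 < cr3 d₃.center d₁.center y := by
    intro y hyU hy
    refine ⟨hy.1.lt_of_ne fun e => ?_, hy.2.1.lt_of_ne fun e => ?_, hy.2.2.lt_of_ne fun e => ?_⟩
    · rcases ht.edge_mem hy e.symm with h | h
      · exact hyU (hdU _ m1 h)
      · exact hyU (hdU _ m2 h)
    · rcases ht.rot.edge_mem (by rw [tri_rot]; exact hy) e.symm with h | h
      · exact hyU (hdU _ m2 h)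
      · exact hyU (hdU _ m3 h)
    · rcases ht.rot.rot.edge_mem (by rw [tri_rot, tri_rot]; exact hy) e.symm with h | h
      · exact hyU (hdU _ m3 h)
      · exact hyU (hdU _ m1 h)
  let V₁ : Set Plane := {y | 0 < cr3 d₁.center d₂.center y} ∩ ({y | 0 < cr3 d₂.center d₃.center y} ∩
    {y | 0 < cr3 d₃.center d₁.center y})
  have hV₁ : IsOpen V₁ := (isOpen_lt continuous_const (cr3_continuous _ _)).inter
    ((isOpen_lt continuous_const (cr3_continuous _ _)).inter
      (isOpen_lt continuous_const (cr3_continuous _ _)))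
  have hV₁T : V₁ ⊆ tri d₁ d₂ d₃ := fun y hy => ⟨le_of_lt hy.1, le_of_lt hy.2.1, le_of_lt hy.2.2⟩
  have hCV : C ⊆ V₁ := by
    refine isPreconnected_connectedComponentIn.subset_left_of_subset_union hV₁
      (tri_isClosed d₁ d₂ d₃).isOpen_compl ?_ ?_ ⟨x, mem_connectedComponentIn hx, hpos x hx hxT⟩
    · exact disjoint_compl_right.mono_left hV₁T
    · intro y hy
      by_cases hyT : y ∈ tri d₁ d₂ d₃
      · exact Or.inl (hpos y (hCU hy) hyT)
      · exact Or.inr hyT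
  have hCH : C = hole d₁ d₂ d₃ := by
    refine Subset.antisymm (fun y hy => ?_) hHC
    have := hCU hy
    exact ⟨hV₁T (hCV hy), fun h => this (hdU _ m1 h), fun h => this (hdU _ m2 h),
      fun h => this (hdU _ m3 h)⟩
  have hHT : hole d₁ d₂ d₃ ⊆ tri d₁ d₂ d₃ := fun y hy => hy.1
  have hne : ∀ {d d' : Disk}, d.Tangent d' → d ≠ d' := by
    rintro d d' h rfl
    have := d.radius_pos
    rw [Disk.Tangent, dist_self] at h
    linarith
  have t13 : d₁.Tangent d₃ := by
    have := ht.t31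
    rw [Disk.Tangent] at *; rw [dist_comm, this]; ring
  rw [hCH]
  refine ⟨isBounded_closedBall.subset (hHT.trans
    (ht.tri_subset_ball (h.hi _ m1) (h.hi _ m2) (h.hi _ m3))), d₁, d₂, d₃, m1, m2, m3,
    hne ht.t12, hne t13, hne ht.t23, ht.t12, t13, ht.t23, ?_⟩
  ext d
  simp only [mem_ofPred_eq, mem_insert_iff, mem_singleton_iff]
  constructor
  · rintro ⟨hd, y, hy, hyd⟩
    by_contra hcon
    push Not at hcon
    exact hdis d hd hcon.1 hcon.2.1 hcon.2.2 y (closure_minimal hHT (tri_isClosed _ _ _) hy) hyd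
  · rintro (rfl | rfl | rfl)
    · exact ⟨m1, ht.closure_meets⟩
    · exact ⟨m2, by rw [← hole_rot]; exact ht.rot.closure_meets⟩
    · exact ⟨m3, by rw [← hole_rot, ← hole_rot]; exact ht.rot.rot.closure_meets⟩

end

open Metric Set MeasureTheory

/-- The constants of the compact packing. -/
structure PC (r s h k f : ℝ) : Prop extends RS r s where
  hpos : 0 < h
  hh : h ^ 2 = (1 + 4 * s) * (3 + 4 * s)
  hk : h - k = 1 + r
  key : 2 * h * (1 + r) = (2 + 4 * s) ^ 2
  hf : f * (2 + 4 * s) = 1 + s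

section
variable {r s h k f : ℝ}

theorem PC.h_lo (c : PC r s h k f) : 2.406 ≤ h := by
  have := c.hh; have := c.s0; have := c.hpos
  by_contra hc
  push Not at hc
  nlinarith

theorem PC.h_hi (c : PC r s h k f) : h ≤ 2.4062 := by
  have := c.hh; have := c.s1; have := c.s0; have := c.hpos
  by_contra hc
  push Not at hc
  nlinarith

theorem PC.k_lo (c : PC r s h k f) : 0.995 ≤ k := by
  linarith [c.h_lo, c.hk, c.r1]

theorem PC.k_hi (c : PC r s h k f) : k ≤ 0.9955 := by
  linarith [c.h_hi, c.hk, c.r0]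

theorem PC.f_lo (c : PC r s h k f) : 0.4418 ≤ f := by
  have := c.hf; have := c.s1; have := c.s0
  by_contra hc
  push Not at hc
  nlinarith

theorem PC.f_hi (c : PC r s h k f) : f ≤ 0.442 := by
  have := c.hf; have := c.s1; have := c.s0
  by_contra hc
  push Not at hc
  nlinarith

theorem PC.fh (c : PC r s h k f) : 1.0629 ≤ f * h ∧ f * h ≤ 1.0636 := by
  have := c.f_lo; have := c.f_hi; have := c.h_lo; have := c.h_hi
  constructor <;> nlinarith

theorem PC.id1 (c : PC r s h k f) : 1 + h ^ 2 = (2 + 4 * s) ^ 2 := by rw [c.hh]; ring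

theorem PC.id2 (c : PC r s h k f) : 1 + k ^ 2 = (1 + r) ^ 2 := by
  have e : k = h - (1 + r) := by linarith [c.hk]
  rw [e]; linear_combination c.id1 - c.key

theorem PC.id3 (c : PC r s h k f) : f ^ 2 + (f * h) ^ 2 = (1 + s) ^ 2 := by
  rw [← c.hf]; linear_combination f ^ 2 * c.id1

theorem PC.id4 (c : PC r s h k f) : (1 - f) ^ 2 + (k - f * h) ^ 2 = (r + s) ^ 2 := by
  have e : k = h - (1 + r) := by linarith [c.hk]
  have h1 := c.id1
  have h2 := c.id3
  have h3 := c.key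
  have h4 := c.rel
  have h5 := c.hf
  rw [e]
  linear_combination (1 - 2 * f) * h1 - (1 - f) * h3 + h2 - (2 + 4 * s) * h5 + 2 * h4

theorem PC.id5 (c : PC r s h k f) : f ^ 2 + (h - k - f * h) ^ 2 = (r + s) ^ 2 := by
  have h2 := c.id3
  have h3 := c.key
  have h4 := c.rel
  have h5 := c.hf
  rw [c.hk]
  linear_combination - f * h3 + h2 - (2 + 4 * s) * h5 + 2 * h4

theorem PC.id6 (c : PC r s h k f) : (1 - 2 * f) ^ 2 + (h - 2 * (f * h)) ^ 2 = (s + s) ^ 2 := by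
  have e : (1 - 2 * f) ^ 2 + (h - 2 * (f * h)) ^ 2 = ((2 + 4 * s) - 2 * (f * (2 + 4 * s))) ^ 2 := by
    linear_combination (1 - 2 * f) ^ 2 * c.id1
  rw [e, c.hf]; ring

end

theorem vfar {h : ℝ} (hh : 0 < h) (b : ℤ) (B : ℕ) (hb : (B : ℤ) ≤ b ∨ b ≤ -(B : ℤ)) {g G : ℝ}
    (h1 : g ≤ G) (h2 : -G ≤ g) : B * h - G ≤ b * h + g ∨ b * h + g ≤ -(B * h - G) := by
  rcases hb with hb | hb
  · left
    have : (B : ℝ) ≤ b := by exact_mod_cast hb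
    nlinarith
  · right
    have : (b : ℝ) ≤ -(B : ℝ) := by exact_mod_cast hb
    nlinarith

theorem ufar (b : ℤ) (B : ℕ) (hb : (B : ℤ) ≤ b ∨ b ≤ -(B : ℤ)) {g G : ℝ}
    (h1 : g ≤ G) (h2 : -G ≤ g) : B - G ≤ b + g ∨ b + g ≤ -(B - G) := by
  have := vfar (h := 1) one_pos b B hb h1 h2
  simpa using this

theorem sq_far {m X : ℝ} (hm : 0 ≤ m) (h : m ≤ X ∨ X ≤ -m) : m ^ 2 ≤ X ^ 2 := by
  rcases h with h | h <;> nlinarith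

/-- The compact packing. -/
def InP (r s h k f u v ρ : ℝ) : Prop := ∃ i n : ℤ,
  (ρ = 1 ∧ (i + n) % 2 = 0 ∧ u = i ∧ v = n * h) ∨
  (ρ = r ∧ (i + n) % 2 = 1 ∧ u = i ∧ ∃ e : ℝ, (e = 1 ∨ e = -1) ∧ v = n * h + e * k) ∨
  (ρ = s ∧ (i + n) % 2 = 0 ∧ ∃ e e' : ℝ, (e = 1 ∨ e = -1) ∧ (e' = 1 ∨ e' = -1) ∧
    u = i + e * f ∧ v = n * h + e' * (f * h))

section
variable {r s h k f : ℝ}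

theorem dAA (c : PC r s h k f) (a b : ℤ) (hp : (a + b) % 2 = 0) :
    (a = 0 ∧ b = 0) ∨ (1 + 1 : ℝ) ^ 2 ≤ (a : ℝ) ^ 2 + (b * h) ^ 2 := by
  by_cases hb : b = 0
  · by_cases ha : a = 0
    · exact Or.inl ⟨ha, hb⟩
    right
    have := sq_far (by norm_num) (ufar a 2 (by omega) (g := 0) (G := 0) (by simp) (by simp))
    push_cast at this
    nlinarith [sq_nonneg ((b : ℝ) * h)]
  · right
    have := sq_far (by push_cast; linarith [c.h_lo]) (vfar c.hpos b 1 (by omega) (g := 0) (G := 0) (by simp) (by simp))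
    push_cast at this
    nlinarith [sq_nonneg (a : ℝ), c.h_lo]

theorem dAB (c : PC r s h k f) (a b : ℤ) (hp : (a + b) % 2 = 1) {e : ℝ} (he : e = 1 ∨ e = -1) :
    (1 + r : ℝ) ^ 2 ≤ (a : ℝ) ^ 2 + (b * h + e * k) ^ 2 := by
  have hk := c.k_lo
  by_cases hb : b = 0
  · have := sq_far (by norm_num) (ufar a 1 (by omega) (g := 0) (G := 0) (by simp) (by simp))
    push_cast at this
    subst hb
    have i2 := c.id2
    rcases he with rfl | rfl <;> (push_cast; nlinarith)
  · have := sq_far (by push_cast; linarith [c.hk, c.r0]) (vfar c.hpos b 1 (by omega) (g := e * k) (G := k)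
      (by rcases he with rfl | rfl <;> linarith) (by rcases he with rfl | rfl <;> linarith))
    push_cast at this
    rw [one_mul, c.hk] at this
    nlinarith [sq_nonneg (a : ℝ)]

theorem dBB (c : PC r s h k f) (a b : ℤ) (hp : (a + b) % 2 = 0) {e e' : ℝ} (he : e = 1 ∨ e = -1)
    (he' : e' = 1 ∨ e' = -1) :
    (a = 0 ∧ b = 0 ∧ e = e') ∨ (r + r : ℝ) ^ 2 ≤ (a : ℝ) ^ 2 + (b * h + (e * k - e' * k)) ^ 2 := by
  have hk := c.k_lo
  have hk' := c.k_hi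
  have hh := c.h_lo
  have r0 := c.r0
  have r1 := c.r1
  by_cases ha : a = 0
  · by_cases hb : b = 0
    · by_cases hee : e = e'
      · exact Or.inl ⟨ha, hb, hee⟩
      right
      subst hb; subst ha
      rcases he with rfl | rfl <;> rcases he' with rfl | rfl <;>
        first | exact absurd rfl hee | (push_cast; nlinarith)
    · right
      have := sq_far (by push_cast; linarith) (vfar c.hpos b 2 (by omega) (g := e * k - e' * k) (G := 2 * k)
        (by rcases he with rfl | rfl <;> rcases he' with rfl | rfl <;> linarith)
        (by rcases he with rfl | rfl <;> rcases he' with rfl | rfl <;> linarith))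
      push_cast at this
      nlinarith [sq_nonneg (a : ℝ)]
  · right
    have := sq_far (by norm_num) (ufar a 1 (by omega) (g := 0) (G := 0) (by simp) (by simp))
    push_cast at this
    nlinarith [sq_nonneg (b * h + (e * k - e' * k))]

theorem dAS (c : PC r s h k f) (a b : ℤ) (hp : (a + b) % 2 = 0) {e e' : ℝ} (he : e = 1 ∨ e = -1)
    (he' : e' = 1 ∨ e' = -1) :
    (1 + s : ℝ) ^ 2 ≤ (a + e * f : ℝ) ^ 2 + (b * h + e' * (f * h)) ^ 2 := by
  have hf := c.f_lo
  have hf' := c.f_hi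
  have hh := c.h_lo
  obtain ⟨hfh, hfh'⟩ := c.fh
  have s0 := c.s0
  have s1 := c.s1
  by_cases hb : b = 0
  · by_cases ha : a = 0
    · have := c.id3
      subst hb; subst ha
      rcases he with rfl | rfl <;> rcases he' with rfl | rfl <;> (push_cast; linarith)
    · have := sq_far (by push_cast; linarith) (ufar a 2 (by omega) (g := e * f) (G := f)
        (by rcases he with rfl | rfl <;> linarith) (by rcases he with rfl | rfl <;> linarith))
      push_cast at this
      nlinarith [sq_nonneg (b * h + e' * (f * h))]
  · have := sq_far (by push_cast; linarith) (vfar c.hpos b 1 (by omega) (g := e' * (f * h)) (G := f * h)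
        (by rcases he' with rfl | rfl <;> linarith) (by rcases he' with rfl | rfl <;> linarith))
    push_cast at this
    nlinarith [sq_nonneg (a + e * f)]

theorem dBS (c : PC r s h k f) (a b : ℤ) (hp : (a + b) % 2 = 1) {ε e e' : ℝ} (hε : ε = 1 ∨ ε = -1)
    (he : e = 1 ∨ e = -1) (he' : e' = 1 ∨ e' = -1) :
    (r + s : ℝ) ^ 2 ≤ (a + e * f : ℝ) ^ 2 + (b * h + (ε * k + e' * (f * h))) ^ 2 := by
  have hf := c.f_lo
  have hf' := c.f_hi
  have hh := c.h_lo
  have hk := c.k_lo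
  have hk' := c.k_hi
  obtain ⟨hfh, hfh'⟩ := c.fh
  have s0 := c.s0
  have s1 := c.s1
  have r0 := c.r0
  have r1 := c.r1
  by_cases hb : b = 0
  · have h1 := sq_far (by push_cast; linarith) (ufar a 1 (by omega) (g := e * f) (G := f)
        (by rcases he with rfl | rfl <;> linarith) (by rcases he with rfl | rfl <;> linarith))
    have h2 : (f * h - k) ^ 2 ≤ (b * h + (ε * k + e' * (f * h))) ^ 2 := by
      apply sq_far (by linarith)
      subst hb
      rcases hε with rfl | rfl <;> rcases he' with rfl | rfl <;> push_cast <;>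
        first | (left; linarith) | (right; linarith)
    push_cast at h1
    have := c.id4
    nlinarith
  · have hg : ε * k + e' * (f * h) ≤ k + f * h := by
      rcases hε with rfl | rfl <;> rcases he' with rfl | rfl <;> linarith
    have hg' : -(k + f * h) ≤ ε * k + e' * (f * h) := by
      rcases hε with rfl | rfl <;> rcases he' with rfl | rfl <;> linarith
    by_cases hb2 : (2 : ℤ) ≤ b ∨ b ≤ -2
    · have := sq_far (by push_cast; linarith) (vfar c.hpos b 2 (by exact_mod_cast hb2) hg hg')
      push_cast at this
      nlinarith [sq_nonneg (a + e * f)]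
    · have h2 := sq_far (by push_cast; linarith) (vfar c.hpos b 1 (by omega) hg hg')
      have h1 : f ^ 2 ≤ (a + e * f) ^ 2 := by
        by_cases ha : a = 0
        · subst ha
          rcases he with rfl | rfl <;> (push_cast; linarith)
        · have := sq_far (by push_cast; linarith) (ufar a 2 (by omega) (g := e * f) (G := f)
            (by rcases he with rfl | rfl <;> linarith) (by rcases he with rfl | rfl <;> linarith))
          push_cast at this
          nlinarith
      push_cast at h2
      have := c.id5
      nlinarith

theorem dSS (c : PC r s h k f) (a b : ℤ) (hp : (a + b) % 2 = 0) {e1 e2 e1' e2' : ℝ}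
    (he1 : e1 = 1 ∨ e1 = -1) (he1' : e1' = 1 ∨ e1' = -1)
    (he2 : e2 = 1 ∨ e2 = -1) (he2' : e2' = 1 ∨ e2' = -1) :
    (a = 0 ∧ b = 0 ∧ e1 = e2 ∧ e1' = e2') ∨ (s + s : ℝ) ^ 2 ≤
      (a + (e1 * f - e2 * f) : ℝ) ^ 2 + (b * h + (e1' * (f * h) - e2' * (f * h))) ^ 2 := by
  have hf := c.f_lo
  have hf' := c.f_hi
  have hh := c.h_lo
  obtain ⟨hfh, hfh'⟩ := c.fh
  have s0 := c.s0
  have s1 := c.s1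
  have hu : e1 * f - e2 * f ≤ 2 * f := by
    rcases he1 with rfl | rfl <;> rcases he2 with rfl | rfl <;> linarith
  have hu' : -(2 * f) ≤ e1 * f - e2 * f := by
    rcases he1 with rfl | rfl <;> rcases he2 with rfl | rfl <;> linarith
  have hv : e1' * (f * h) - e2' * (f * h) ≤ 2 * (f * h) := by
    rcases he1' with rfl | rfl <;> rcases he2' with rfl | rfl <;> linarith
  have hv' : -(2 * (f * h)) ≤ e1' * (f * h) - e2' * (f * h) := by
    rcases he1' with rfl | rfl <;> rcases he2' with rfl | rfl <;> linarith
  by_cases hb : b = 0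
  · by_cases ha : a = 0
    · by_cases h1 : e1 = e2
      · by_cases h2 : e1' = e2'
        · exact Or.inl ⟨ha, hb, h1, h2⟩
        right
        have h3 : (2 * (f * h)) ^ 2 ≤ (b * h + (e1' * (f * h) - e2' * (f * h))) ^ 2 := by
          subst hb
          apply sq_far (by linarith)
          rcases he1' with rfl | rfl <;> rcases he2' with rfl | rfl <;>
            first | exact absurd rfl h2 | (push_cast; left; linarith) | (push_cast; right; linarith)
        nlinarith [sq_nonneg (a + (e1 * f - e2 * f) : ℝ)]
      · right
        have h3 : (2 * f) ^ 2 ≤ (a + (e1 * f - e2 * f) : ℝ) ^ 2 := by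
          subst ha
          apply sq_far (by linarith)
          rcases he1 with rfl | rfl <;> rcases he2 with rfl | rfl <;>
            first | exact absurd rfl h1 | (push_cast; left; linarith) | (push_cast; right; linarith)
        nlinarith [sq_nonneg (b * h + (e1' * (f * h) - e2' * (f * h)))]
    · right
      have := sq_far (by push_cast; linarith) (ufar a 2 (by omega) hu hu')
      push_cast at this
      nlinarith [sq_nonneg (b * h + (e1' * (f * h) - e2' * (f * h)))]
  · right
    by_cases hb2 : (2 : ℤ) ≤ b ∨ b ≤ -2
    · have := sq_far (by push_cast; linarith) (vfar c.hpos b 2 (by exact_mod_cast hb2) hv hv')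
      push_cast at this
      nlinarith [sq_nonneg (a + (e1 * f - e2 * f) : ℝ)]
    · have h2 := sq_far (by push_cast; linarith) (vfar c.hpos b 1 (by omega) hv hv')
      have h1 := sq_far (by push_cast; linarith) (ufar a 1 (by omega) hu hu')
      push_cast at h1 h2
      have := c.id6
      nlinarith

theorem neg_sign {e : ℝ} (he : e = 1 ∨ e = -1) : -e = 1 ∨ -e = -1 := by
  rcases he with rfl | rfl <;> simp

theorem inP_dist (c : PC r s h k f) {u v ρ u' v' ρ' : ℝ} (h1 : InP r s h k f u v ρ)
    (h2 : InP r s h k f u' v' ρ') :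
    (u = u' ∧ v = v' ∧ ρ = ρ') ∨ (ρ + ρ') ^ 2 ≤ (u - u') ^ 2 + (v - v') ^ 2 := by
  obtain ⟨i, n, h1⟩ := h1
  obtain ⟨j, m, h2⟩ := h2
  rcases h1 with ⟨rfl, hp, rfl, rfl⟩ | ⟨rfl, hp, rfl, e, he, rfl⟩ | ⟨rfl, hp, e, e', he, he', rfl, rfl⟩ <;>
  rcases h2 with ⟨rfl, hq, rfl, rfl⟩ | ⟨rfl, hq, rfl, d, hd, rfl⟩ | ⟨rfl, hq, d, d', hd, hd', rfl, rfl⟩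
  · rcases dAA c (i - j) (n - m) (by omega) with ⟨ha, hb⟩ | hx
    · obtain rfl : i = j := by omega
      obtain rfl : n = m := by omega
      simp
    · right; push_cast at hx; convert hx using 3; ring
  · right
    have hx := dAB c (i - j) (n - m) (by omega) (neg_sign hd)
    push_cast at hx; convert hx using 3; ring
  · right
    have hx := dAS c (i - j) (n - m) (by omega) (neg_sign hd) (neg_sign hd')
    push_cast at hx; convert hx using 3 <;> ring
  · right
    have hx := dAB c (i - j) (n - m) (by omega) he
    push_cast at hx; convert hx using 2 <;> ring
  · rcases dBB c (i - j) (n - m) (by omega) he hd with ⟨ha, hb, rfl⟩ | hx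
    · obtain rfl : i = j := by omega
      obtain rfl : n = m := by omega
      simp
    · right; push_cast at hx; convert hx using 3; ring
  · right
    have hx := dBS c (i - j) (n - m) (by omega) he (neg_sign hd) (neg_sign hd')
    push_cast at hx; convert hx using 3 <;> ring
  · right
    have hx := dAS c (i - j) (n - m) (by omega) he he'
    push_cast at hx; convert hx using 2 <;> ring
  · right
    have hx := dBS c (i - j) (n - m) (by omega) (neg_sign hd) he he'
    push_cast at hx; convert hx using 2 <;> ring
  · rcases dSS c (i - j) (n - m) (by omega) he he' hd hd' with ⟨ha, hb, rfl, rfl⟩ | hx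
    · obtain rfl : i = j := by omega
      obtain rfl : n = m := by omega
      simp
    · right; push_cast at hx; convert hx using 3 <;> ring

end

open Metric Set MeasureTheory

theorem tight_of {σ a b c A B C D E F : ℝ} (hA : A ≤ (a + σ) ^ 2) (hB : B ≤ (b + σ) ^ 2)
    (hC : C ≤ (c + σ) ^ 2) (hD : D ≤ (a + σ) ^ 2 + (b + σ) ^ 2 - (a + b) ^ 2)
    (hE : E ≤ (b + σ) ^ 2 + (c + σ) ^ 2 - (b + c) ^ 2)
    (hF : F ≤ (c + σ) ^ 2 + (a + σ) ^ 2 - (c + a) ^ 2)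
    (h : ∀ p q w : ℝ, 0 ≤ p → 0 ≤ q → 0 ≤ w → 0 < p + q + w →
      0 < A * p ^ 2 + B * q ^ 2 + C * w ^ 2 + D * (p * q) + E * (q * w) + F * (w * p)) :
    Tight σ a b c := by
  intro p q w hp hq hw hs
  have := h p q w hp hq hw hs
  have h1 := mul_le_mul_of_nonneg_right hA (sq_nonneg p)
  have h2 := mul_le_mul_of_nonneg_right hB (sq_nonneg q)
  have h3 := mul_le_mul_of_nonneg_right hC (sq_nonneg w)
  have h4 := mul_le_mul_of_nonneg_right hD (mul_nonneg hp hq)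
  have h5 := mul_le_mul_of_nonneg_right hE (mul_nonneg hq hw)
  have h6 := mul_le_mul_of_nonneg_right hF (mul_nonneg hw hp)
  linarith

theorem sq3_pos {p q w : ℝ} (hs : 0 < p + q + w) : 0 < p ^ 2 + q ^ 2 + w ^ 2 := by
  nlinarith [sq_nonneg (p - q), sq_nonneg (q - w), sq_nonneg (w - p), mul_pos hs hs]

theorem RS.tight1 {r s : ℝ} (c : RS r s) : Tight s 1 1 r := by
  obtain ⟨_, _, _, _, _, _, _, _⟩ := c.prods
  have := c.s0; have := c.s1; have := c.r0; have := c.r1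
  refine tight_of (A := 1.32) (B := 1.32) (C := 0.31) (D := -1.36) (E := -0.36) (F := -0.36)
    (by linarith) (by linarith) (by linarith) (by linarith) (by linarith) (by linarith) ?_
  intro p q w hp hq hw hs
  have := sq3_pos hs
  nlinarith [sq_nonneg (p - q), sq_nonneg (p - 0.3 * w), sq_nonneg (q - 0.3 * w), sq_nonneg p, sq_nonneg q,
    sq_nonneg w]

theorem RS.tight2 {r s : ℝ} (c : RS r s) : Tight s 1 r s := by
  obtain ⟨_, _, _, _, _, _, _, _⟩ := c.prods
  have := c.s0; have := c.s1; have := c.r0; have := c.r1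
  refine tight_of (A := 1.32) (B := 0.31) (C := 0.09) (D := -0.36) (E := 0) (F := 0)
    (by linarith) (by linarith) (by linarith) (by linarith) (by linarith) (by linarith) ?_
  intro p q w hp hq hw hs
  have := sq3_pos hs
  nlinarith [sq_nonneg (p - q), sq_nonneg p, sq_nonneg q, sq_nonneg w]

theorem RS.tight3 {r s : ℝ} (c : RS r s) : Tight s s r s := by
  obtain ⟨_, _, _, _, _, _, _, _⟩ := c.prods
  have := c.s0; have := c.s1; have := c.r0; have := c.r1
  refine tight_of (A := 0.09) (B := 0.31) (C := 0.09) (D := 0) (E := 0) (F := 0)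
    (by linarith) (by linarith) (by linarith) (by linarith) (by linarith) (by linarith) ?_
  intro p q w hp hq hw hs
  have := sq3_pos hs
  nlinarith [sq_nonneg p, sq_nonneg q, sq_nonneg w]

/-- The point `(x, y)` is covered by a tight triangle of the packing. -/
def CovP (r s h k f x y : ℝ) : Prop := ∃ u1 v1 a u2 v2 b u3 v3 c p q w : ℝ,
  InP r s h k f u1 v1 a ∧ InP r s h k f u2 v2 b ∧ InP r s h k f u3 v3 c ∧
  (u1 - u2) ^ 2 + (v1 - v2) ^ 2 = (a + b) ^ 2 ∧ (u1 - u3) ^ 2 + (v1 - v3) ^ 2 = (a + c) ^ 2 ∧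
  (u2 - u3) ^ 2 + (v2 - v3) ^ 2 = (b + c) ^ 2 ∧ Tight s a b c ∧
  0 ≤ p ∧ 0 ≤ q ∧ 0 ≤ w ∧ p + q + w = 1 ∧
  x = p * u1 + q * u2 + w * u3 ∧ y = p * v1 + q * v2 + w * v3

section
variable {r s h k f : ℝ}

theorem mul_sign {α : ℤ} {e : ℝ} (hα : α = 1 ∨ α = -1) (he : e = 1 ∨ e = -1) :
    α * e = 1 ∨ α * e = -1 := by
  rcases hα with rfl | rfl <;> rcases he with rfl | rfl <;> simp

theorem InP.symm {u v ρ : ℝ} (hi : InP r s h k f u v ρ) {α β m n : ℤ} (hα : α = 1 ∨ α = -1)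
    (hβ : β = 1 ∨ β = -1) (hmn : (m + n) % 2 = 0) :
    InP r s h k f (α * u + m) (β * v + n * h) ρ := by
  obtain ⟨i, j, hi⟩ := hi
  refine ⟨α * i + m, β * j + n, ?_⟩
  rcases hi with ⟨rfl, hp, rfl, rfl⟩ | ⟨rfl, hp, rfl, e, he, rfl⟩ | ⟨rfl, hp, e, e', he, he', rfl, rfl⟩
  · left
    refine ⟨rfl, ?_, by push_cast; ring, by push_cast; ring⟩
    rcases hα with rfl | rfl <;> rcases hβ with rfl | rfl <;> omega
  · right; left
    refine ⟨rfl, ?_, by push_cast; ring, β * e, mul_sign hβ he, by push_cast; ring⟩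
    rcases hα with rfl | rfl <;> rcases hβ with rfl | rfl <;> omega
  · right; right
    refine ⟨rfl, ?_, α * e, β * e', mul_sign hα he, mul_sign hβ he', by push_cast; ring, by push_cast; ring⟩
    rcases hα with rfl | rfl <;> rcases hβ with rfl | rfl <;> omega

theorem CovP.symm {x y : ℝ} (hc : CovP r s h k f x y) {α β m n : ℤ} (hα : α = 1 ∨ α = -1)
    (hβ : β = 1 ∨ β = -1) (hmn : (m + n) % 2 = 0) :
    CovP r s h k f (α * x + m) (β * y + n * h) := by
  obtain ⟨u1, v1, a, u2, v2, b, u3, v3, c, p, q, w, h1, h2, h3, t1, t2, t3, ht, hp, hq, hw, hs, rfl, rfl⟩ := hc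
  have hα2 : (α : ℝ) ^ 2 = 1 := by rcases hα with rfl | rfl <;> norm_num
  have hβ2 : (β : ℝ) ^ 2 = 1 := by rcases hβ with rfl | rfl <;> norm_num
  refine ⟨_, _, a, _, _, b, _, _, c, p, q, w, h1.symm hα hβ hmn, h2.symm hα hβ hmn, h3.symm hα hβ hmn,
    ?_, ?_, ?_, ht, hp, hq, hw, hs, ?_, ?_⟩
  · rw [← t1]; linear_combination (u1 - u2) ^ 2 * hα2 + (v1 - v2) ^ 2 * hβ2
  · rw [← t2]; linear_combination (u1 - u3) ^ 2 * hα2 + (v1 - v3) ^ 2 * hβ2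
  · rw [← t3]; linear_combination (u2 - u3) ^ 2 * hα2 + (v2 - v3) ^ 2 * hβ2
  · linear_combination -(m : ℝ) * hs
  · linear_combination -((n : ℝ) * h) * hs

theorem inA (r s h k f : ℝ) : InP r s h k f 0 0 1 := ⟨0, 0, Or.inl ⟨rfl, by norm_num, by simp, by simp⟩⟩
theorem inA' (r s h k f : ℝ) : InP r s h k f 2 0 1 := ⟨2, 0, Or.inl ⟨rfl, by norm_num, by simp, by simp⟩⟩
theorem inA'' (r s h k f : ℝ) : InP r s h k f 1 h 1 := ⟨1, 1, Or.inl ⟨rfl, by norm_num, by simp, by simp⟩⟩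
theorem inB (r s h k f : ℝ) : InP r s h k f 1 k r :=
  ⟨1, 0, Or.inr (Or.inl ⟨rfl, by norm_num, by simp, 1, by simp, by simp⟩)⟩
theorem inS (r s h k f : ℝ) : InP r s h k f f (f * h) s :=
  ⟨0, 0, Or.inr (Or.inr ⟨rfl, by norm_num, 1, 1, by simp, by simp, by simp, by simp⟩)⟩
theorem inS' (r s h k f : ℝ) : InP r s h k f (1 - f) (h - f * h) s :=
  ⟨1, 1, Or.inr (Or.inr ⟨rfl, by norm_num, -1, -1, by simp, by simp, by push_cast; ring, by push_cast; ring⟩)⟩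

theorem cov_base (c : PC r s h k f) {x y : ℝ} (hx0 : 0 ≤ x) (hx1 : x ≤ 1) (hy0 : 0 ≤ y) (hy : y ≤ h * x) :
    CovP r s h k f x y := by
  have kl := c.k_lo
  have k0 : 0 < k := by linarith
  have hkp : 0 < h - k := by rw [c.hk]; linarith [c.r0]
  have f0 : 0 < f := by linarith [c.f_lo]
  have f1 : 0 < 1 - 2 * f := by linarith [c.f_hi]
  have i1 := c.id1
  have i2 := c.id2
  have i3 := c.id3
  have i4 := c.id4
  have i5 := c.id5
  have i6 := c.id6
  have hkk := c.hk
  by_cases hyk : y ≤ k * x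
  · have e : y / k * k = y := div_mul_cancel₀ _ k0.ne'
    have hw0 : 0 ≤ y / k := div_nonneg hy0 k0.le
    have hw1 : y / k ≤ x := by rw [div_le_iff₀ k0]; linarith
    refine ⟨0, 0, 1, 2, 0, 1, 1, k, r, 1 - x / 2 - y / k / 2, (x - y / k) / 2, y / k,
      inA _ _ _ _ _, inA' _ _ _ _ _, inB _ _ _ _ _, by norm_num, by linarith, by linarith, c.tight1,
      by linarith, by linarith, hw0, by ring, by ring, by linarith⟩
  push Not at hyk
  obtain ⟨w, hw⟩ : ∃ w, w = (h * x - y) / (h - k) := ⟨_, rfl⟩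
  have ew : w * (h - k) = h * x - y := by rw [hw]; exact div_mul_cancel₀ _ hkp.ne'
  have hw0 : 0 ≤ w := by rw [hw]; exact div_nonneg (by linarith) hkp.le
  have hwx : w ≤ x := by rw [hw, div_le_iff₀ hkp]; linarith
  obtain ⟨t, ht⟩ : ∃ t, t = x - w := ⟨_, rfl⟩
  have ey : y = w * k + t * h := by rw [ht]; linarith
  have ex : x = w + t := by linarith
  have t0 : 0 ≤ t := by linarith
  have t1 : t ≤ 1 - w := by linarith
  by_cases c1 : t ≤ f * (1 - w)
  · obtain ⟨q, hq⟩ : ∃ q, q = t / f := ⟨_, rfl⟩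
    have eq : q * f = t := by rw [hq]; exact div_mul_cancel₀ _ f0.ne'
    have q0 : 0 ≤ q := by rw [hq]; exact div_nonneg t0 f0.le
    have q1 : q ≤ 1 - w := by rw [hq, div_le_iff₀ f0]; linarith
    refine ⟨0, 0, 1, 1, k, r, f, f * h, s, 1 - w - q, w, q, inA _ _ _ _ _, inB _ _ _ _ _, inS _ _ _ _ _,
      by linarith, by linarith, by linarith, c.tight2, by linarith, hw0, q0, by ring, by linarith, ?_⟩
    rw [ey, ← eq]; ring
  push Not at c1
  by_cases c2 : t ≤ (1 - f) * (1 - w)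
  · obtain ⟨q, hq⟩ : ∃ q, q = (t - f * (1 - w)) / (1 - 2 * f) := ⟨_, rfl⟩
    have eq : q * (1 - 2 * f) = t - f * (1 - w) := by rw [hq]; exact div_mul_cancel₀ _ f1.ne'
    have q0 : 0 ≤ q := by rw [hq]; exact div_nonneg (by linarith) f1.le
    have q1 : q ≤ 1 - w := by rw [hq, div_le_iff₀ f1]; linarith
    refine ⟨f, f * h, s, 1, k, r, 1 - f, h - f * h, s, 1 - w - q, w, q, inS _ _ _ _ _, inB _ _ _ _ _,
      inS' _ _ _ _ _,
      by linarith, by linarith, by linarith, c.tight3, by linarith, hw0, q0, by ring, by linarith, ?_⟩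
    rw [ey]; linear_combination -h * eq
  · push Not at c2
    obtain ⟨q, hq⟩ : ∃ q, q = (1 - w - t) / f := ⟨_, rfl⟩
    have eq : q * f = 1 - w - t := by rw [hq]; exact div_mul_cancel₀ _ f0.ne'
    have q0 : 0 ≤ q := by rw [hq]; exact div_nonneg (by linarith) f0.le
    have q1 : q ≤ 1 - w := by rw [hq, div_le_iff₀ f0]; linarith
    refine ⟨1, h, 1, 1, k, r, 1 - f, h - f * h, s, 1 - w - q, w, q, inA'' _ _ _ _ _, inB _ _ _ _ _,
      inS' _ _ _ _ _,
      by rw [hkk]; ring, by linarith, by linarith, c.tight2, by linarith, hw0, q0, by ring, by linarith, ?_⟩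
    rw [ey]; linear_combination h * eq

theorem cov1 (c : PC r s h k f) {x y : ℝ} (hx0 : 0 ≤ x) (hx1 : x ≤ 1) (hy0 : 0 ≤ y) (hy : y ≤ h) :
    CovP r s h k f x y := by
  by_cases hc : y ≤ h * x
  · exact cov_base c hx0 hx1 hy0 hc
  · push Not at hc
    have := (cov_base c (x := 1 - x) (y := h - y) (by linarith) (by linarith) (by linarith)
      (by linarith)).symm (α := -1) (β := -1) (m := 1) (n := 1) (by simp) (by simp) (by norm_num)
    convert this using 1 <;> (push_cast; ring)

theorem cov2 (c : PC r s h k f) {x y : ℝ} (hx0 : -1 ≤ x) (hx1 : x ≤ 1) (hy0 : 0 ≤ y) (hy : y ≤ h) :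
    CovP r s h k f x y := by
  rcases le_total 0 x with hc | hc
  · exact cov1 c hc hx1 hy0 hy
  · have := (cov1 c (x := -x) (y := y) (by linarith) (by linarith) hy0
      hy).symm (α := -1) (β := 1) (m := 0) (n := 0) (by simp) (by simp) (by norm_num)
    convert this using 1 <;> (push_cast; ring)

theorem covP (c : PC r s h k f) (x y : ℝ) : CovP r s h k f x y := by
  have hp := c.hpos
  obtain ⟨n, hn⟩ : ∃ n : ℤ, n = ⌊y / h⌋ := ⟨_, rfl⟩
  obtain ⟨t, ht⟩ : ∃ t : ℤ, t = round ((x - n) / 2) := ⟨_, rfl⟩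
  have h1 : (n : ℝ) * h ≤ y := by
    rw [← le_div_iff₀ hp, hn]; exact Int.floor_le _
  have h2 : y ≤ (n + 1 : ℝ) * h := by
    rw [← div_le_iff₀ hp, hn]; exact (Int.lt_floor_add_one _).le
  have h3 := abs_le.1 (abs_sub_round ((x - n) / 2))
  rw [← ht] at h3
  obtain ⟨h3, h4⟩ := h3
  have := (cov2 c (x := x - (n + 2 * t)) (y := y - n * h) (by linarith) (by linarith) (by linarith)
    (by linarith)).symm (α := 1) (β := 1) (m := n + 2 * t) (n := n) (by simp) (by simp) (by omega)
  convert this using 1 <;> (push_cast; ring)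

end

/-- The compact packing. -/
def Pp (r s h k f : ℝ) : Set Disk := {d | InP r s h k f (d.center 0) (d.center 1) d.radius}

section
variable {r s h k f : ℝ}

theorem pp_radii : RadiiIn (Pp r s h k f) {1, r, s} := by
  intro d hd
  obtain ⟨i, n, ⟨e, _⟩ | ⟨e, _⟩ | ⟨e, _⟩⟩ := hd <;> simp [e]

theorem pp_uses {u v ρ : ℝ} (hi : InP r s h k f u v ρ) (hρ : 0 < ρ) : UsesRadius (Pp r s h k f) ρ :=
  ⟨⟨!₂[u, v], ρ, hρ⟩, by simpa [Pp] using hi, rfl⟩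

theorem pp_packing (c : PC r s h k f) : IsPacking (Pp r s h k f) := by
  apply isPacking_of_dist
  intro d hd d' hd' hne
  rw [le_dist_iff _ _ (add_nonneg d.radius_pos.le d'.radius_pos.le)]
  rcases inP_dist c hd hd' with ⟨h0, h1, h2⟩ | hx
  · exfalso
    apply hne
    cases d; cases d'
    simp only at h0 h1 h2
    subst h2
    congr 1
    ext i
    fin_cases i
    · exact h0
    · exact h1
  · exact hx

theorem pp_GP (c : PC r s h k f) : GP (Pp r s h k f) s := by
  have := c.s0; have := c.s1; have := c.r0; have := c.r1
  refine ⟨pp_packing c, by linarith, ?_, ?_⟩ <;>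
  · intro d hd
    have := pp_radii d hd
    simp only [mem_insert_iff, mem_singleton_iff] at this
    rcases this with e | e | e <;> rw [e] <;> linarith

theorem mem_tri_of {d₁ d₂ d₃ : Disk} (ht : Tri d₁ d₂ d₃) {x : Plane} {p q w : ℝ} (hp : 0 ≤ p) (hq : 0 ≤ q)
    (hw : 0 ≤ w) (hs : p + q + w = 1)
    (h0 : x 0 = p * d₁.center 0 + q * d₂.center 0 + w * d₃.center 0)
    (h1 : x 1 = p * d₁.center 1 + q * d₂.center 1 + w * d₃.center 1) : x ∈ tri d₁ d₂ d₃ := by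
  have hpos := ht.pos
  obtain rfl : p = 1 - q - w := by linarith
  have e1 : cr3 d₁.center d₂.center x = w * cr3 d₁.center d₂.center d₃.center := by
    simp only [cr3, h0, h1]; ring
  have e2 : cr3 d₂.center d₃.center x = (1 - q - w) * cr3 d₁.center d₂.center d₃.center := by
    simp only [cr3, h0, h1]; ring
  have e3 : cr3 d₃.center d₁.center x = q * cr3 d₁.center d₂.center d₃.center := by
    simp only [cr3, h0, h1]; ring
  refine ⟨?_, ?_, ?_⟩
  · rw [e1]; positivity
  · rw [e2]; positivity
  · rw [e3]; positivity

theorem tangent_of_sq {d d' : Disk} (h : (d.center 0 - d'.center 0) ^ 2 + (d.center 1 - d'.center 1) ^ 2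
    = (d.radius + d'.radius) ^ 2) : d.Tangent d' := by
  rw [← dist_sq_eq] at h
  exact (pow_left_inj₀ dist_nonneg (add_nonneg d.radius_pos.le d'.radius_pos.le) two_ne_zero).1 h

theorem inP_pos (c : PC r s h k f) {u v ρ : ℝ} (hi : InP r s h k f u v ρ) : 0 < ρ := by
  have := c.s0; have := c.r0
  obtain ⟨i, n, ⟨e, _⟩ | ⟨e, _⟩ | ⟨e, _⟩⟩ := hi <;> rw [e] <;> linarith

theorem pp_covered (c : PC r s h k f) : Covered (Pp r s h k f) s := by
  intro x
  obtain ⟨u1, v1, a, u2, v2, b, u3, v3, c', p, q, w, h1, h2, h3, t1, t2, t3, ht, hp, hq, hw, hs, h0, hx1⟩ :=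
    covP c (x 0) (x 1)
  obtain ⟨d₁, e1⟩ : ∃ d : Disk, d = ⟨!₂[u1, v1], a, inP_pos c h1⟩ := ⟨_, rfl⟩
  obtain ⟨d₂, e2⟩ : ∃ d : Disk, d = ⟨!₂[u2, v2], b, inP_pos c h2⟩ := ⟨_, rfl⟩
  obtain ⟨d₃, e3⟩ : ∃ d : Disk, d = ⟨!₂[u3, v3], c', inP_pos c h3⟩ := ⟨_, rfl⟩
  obtain rfl : d₁.center 0 = u1 := by rw [e1]; simp
  obtain rfl : d₁.center 1 = v1 := by rw [e1]; simp
  obtain rfl : d₁.radius = a := by rw [e1]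
  obtain rfl : d₂.center 0 = u2 := by rw [e2]; simp
  obtain rfl : d₂.center 1 = v2 := by rw [e2]; simp
  obtain rfl : d₂.radius = b := by rw [e2]
  obtain rfl : d₃.center 0 = u3 := by rw [e3]; simp
  obtain rfl : d₃.center 1 = v3 := by rw [e3]; simp
  obtain rfl : d₃.radius = c' := by rw [e3]
  clear e1 e2 e3
  have T1 := tangent_of_sq t1
  have T2 := tangent_of_sq t2
  have T3 := tangent_of_sq t3
  rcases tri_or T1 T2 T3 with h | h
  · exact ⟨d₁, h1, d₂, h2, d₃, h3, h, ht, mem_tri_of h hp hq hw hs h0 hx1⟩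
  · exact ⟨d₁, h1, d₃, h3, d₂, h2, h, ht.swap, mem_tri_of h hp hw hq (by linarith) (by linarith) (by linarith)⟩

end

theorem exists_PC : ∃ r s h k f : ℝ, PC r s h k f := by
  obtain ⟨s, s0, s1, hs⟩ := exists_s
  have hs1 : 0 < 1 - s := by linarith
  have rel : 2 * s * (1 + s) / (1 - s) * (1 - s) = 2 * s * (1 + s) := div_mul_cancel₀ _ hs1.ne'
  have hL : 0 < 2 + 4 * s := by linarith
  obtain ⟨r, hr⟩ : ∃ r, r = 2 * s * (1 + s) / (1 - s) := ⟨_, rfl⟩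
  rw [← hr] at rel
  have hq : 0 ≤ (1 + 4 * s) * (3 + 4 * s) := by nlinarith
  obtain ⟨h, hh⟩ : ∃ h, h = √((1 + 4 * s) * (3 + 4 * s)) := ⟨_, rfl⟩
  have h2 : h ^ 2 = (1 + 4 * s) * (3 + 4 * s) := by rw [hh, Real.sq_sqrt hq]
  have hp : 0 < h := by rw [hh]; apply Real.sqrt_pos.2; nlinarith
  have r0 : 0.410835 ≤ r := by rw [hr, le_div_iff₀ hs1]; nlinarith
  have r1 : r ≤ 0.410839 := by rw [hr, div_le_iff₀ hs1]; nlinarith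
  refine ⟨r, s, h, h - (1 + r), (1 + s) / (2 + 4 * s), ⟨s0, s1, r0, r1, rel⟩, hp, h2, by ring, ?_,
    div_mul_cancel₀ _ hL.ne'⟩
  have k1 : (1 + s + 2 * s ^ 2) * h = 2 * (1 + 2 * s) ^ 2 * (1 - s) := by
    apply (pow_left_inj₀ (by positivity) (by positivity) two_ne_zero).1
    rw [mul_pow, h2]
    linear_combination hs
  apply mul_right_cancel₀ hs1.ne'
  linear_combination 2 * h * rel + 2 * k1

/-- there are radii `1, r, s` admitting a saturated compact packing using
all three radii, for which some (non-compact) packing is strictly denser than every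
compact packing with these radii. -/
theorem compact_not_always_densest :
    ∃ r s : ℝ, 0 < s ∧ s < r ∧ r < 1 ∧
      (∃ P : Set Disk, IsCompactPacking P ∧ RadiiIn P {1, r, s} ∧
        UsesRadius P 1 ∧ UsesRadius P r ∧ UsesRadius P s ∧ Saturated P {1, r, s}) ∧
      ∃ Q : Set Disk, IsPacking Q ∧ RadiiIn Q {1, r, s} ∧
        ∀ P' : Set Disk, IsCompactPacking P' → RadiiIn P' {1, r, s} →
          density P' < density Q := by
  obtain ⟨r, s, h, k, f, c⟩ := exists_PC
  have s0 := c.s0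
  have s1 := c.s1
  have r0 := c.r0
  have r1 := c.r1
  have hs : 0 < s := by linarith
  refine ⟨r, s, hs, by linarith, by linarith, ⟨Pp r s h k f, (pp_GP c).compact (pp_covered c), pp_radii,
    pp_uses (inA _ _ _ _ _) one_pos, pp_uses (inB _ _ _ _ _) (by linarith), pp_uses (inS _ _ _ _ _) hs,
    (pp_GP c).saturated (pp_covered c) ?_⟩, Qp hs, q_packing hs (by linarith), q_radii hs r, ?_⟩
  · intro a ha
    simp only [mem_insert_iff, mem_singleton_iff] at ha
    rcases ha with e | e | e <;> rw [e] <;> linarith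
  · intro P' hc hr
    have h1 := compact_density_le c.toRS hc hr
    have h2 := q_density hs s0 (by linarith)
    linarith
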